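/- arXiv:2402.17795 — 2 statements merged into one kernel-verified Lean document; each statement's English description precedes it below -/
import Mathlib

section
/- Let a : ℝ → [0,1] satisfy (A1') and have √a κ-Lipschitz, and H ∈ 𝓗_sqc(α0,α1,γ,η) with γ > 2; let λ0 := inf{μ : a u'' + H(x,u') = μ admits a continuous viscosity supersolution on ℝ}, let λ > λ0 and let u_{λ0} be a Lipschitz viscosity solution of a u'' + H(x,u') = λ0 on ℝ. Then: (a) there exists a unique viscosity solution u⁺_λ of a(x)u'' + H(x,u') = λ on ℝ satisfying (u⁺_λ)' > u'_{λ0} a.e. on ℝ and u⁺_λ(0) = 0; u⁺_λ is of class C¹ on ℝ, of class C² on A := {a > 0}, satisfies (u⁺_λ)' = p⁺_λ(·) on {a = 0}, is a classical pointwise solution of the equation, and does not depend on the choice of u_{λ0}; (b) there exists a unique viscosity solution u⁻_λ with (u⁻_λ)' < u'_{λ0} a.e. on ℝ and u⁻_λ(0) = 0, which is C¹ on ℝ, C² on A, satisfies (u⁻_λ)' = p⁻_λ(·) on {a = 0}, is a classical solution, and does not depend on the choice of u_{λ0}. -/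
open Real Set Filter Topology MeasureTheory

noncomputable section

/-- The Hamiltonian class `𝓗(α₀, α₁, γ)`: growth condition (H1) and the local
Lipschitz conditions (H2), (H3). -/
def HamClass (a0 a1 g : ℝ) (H : ℝ → ℝ → ℝ) : Prop :=
  (∀ x p : ℝ, a0 * |p| ^ g - 1 / a0 ≤ H x p) ∧
  (∀ x p : ℝ, H x p ≤ a1 * (|p| ^ g + 1)) ∧
  (∀ x p q : ℝ, |H x p - H x q| ≤ a1 * (|p| + |q| + 1) ^ (g - 1) * |p - q|) ∧
  (∀ x y p : ℝ, |H x p - H y p| ≤ a1 * (|p| ^ g + 1) * |x - y|)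

/-- The strictly quasiconvex class `𝓗_sqc(α₀, α₁, γ, η)` with (unique) minimizer map
`phat`. -/
def HamSqc (a0 a1 g eta : ℝ) (H : ℝ → ℝ → ℝ) (phat : ℝ → ℝ) : Prop :=
  HamClass a0 a1 g H ∧
  (∀ x p : ℝ, H x (phat x) ≤ H x p) ∧
  (∀ x p : ℝ, (∀ q : ℝ, H x p ≤ H x q) → p = phat x) ∧
  (∀ x p1 p2 : ℝ, p1 < p2 → p2 ≤ phat x → eta * |p1 - p2| ≤ H x p1 - H x p2) ∧
  (∀ x p1 p2 : ℝ, phat x ≤ p1 → p1 < p2 → eta * |p1 - p2| ≤ H x p2 - H x p1)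

/-- A continuous `u` is a viscosity supersolution of `a(x) u'' + H(x, u') = lam` on `U`:
at every local minimum point `x0 ∈ U` of `u - φ`, with `φ` of class `C²`, one has
`a(x0) φ''(x0) + H(x0, φ'(x0)) ≤ lam`. -/
def ViscSuperOn (a : ℝ → ℝ) (H : ℝ → ℝ → ℝ) (lam : ℝ) (U : Set ℝ) (u : ℝ → ℝ) : Prop :=
  ∀ φ : ℝ → ℝ, ContDiff ℝ 2 φ → ∀ x0 ∈ U, IsLocalMin (fun x => u x - φ x) x0 →
    a x0 * deriv (deriv φ) x0 + H x0 (deriv φ x0) ≤ lam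

/-- Viscosity subsolution of `a(x) u'' + H(x, u') = lam` on `U`. -/
def ViscSubOn (a : ℝ → ℝ) (H : ℝ → ℝ → ℝ) (lam : ℝ) (U : Set ℝ) (u : ℝ → ℝ) : Prop :=
  ∀ φ : ℝ → ℝ, ContDiff ℝ 2 φ → ∀ x0 ∈ U, IsLocalMax (fun x => u x - φ x) x0 →
    lam ≤ a x0 * deriv (deriv φ) x0 + H x0 (deriv φ x0)

/-- Viscosity solution of `a(x) u'' + H(x, u') = lam` on `U`. -/
def ViscSolOn (a : ℝ → ℝ) (H : ℝ → ℝ → ℝ) (lam : ℝ) (U : Set ℝ) (u : ℝ → ℝ) : Prop :=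
  ViscSubOn a H lam U u ∧ ViscSuperOn a H lam U u

/-- The critical value `λ₀`: the infimum of the levels `lam` at which the stationary
equation `a u'' + H(x, u') = lam` admits a continuous viscosity supersolution on `ℝ`. -/
def CriticalValue (a : ℝ → ℝ) (H : ℝ → ℝ → ℝ) : ℝ :=
  sInf {lam : ℝ | ∃ u : ℝ → ℝ, Continuous u ∧ ViscSuperOn a H lam Set.univ u}

/-- Condition (A1'): `a ≢ 0` and every connected component of `A := {a > 0}` is bounded
(components of an open subset of `ℝ` are automatically open intervals). -/
def CondA1' (a : ℝ → ℝ) : Prop :=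
  (∃ x, a x ≠ 0) ∧
  ∀ x, 0 < a x → Bornology.IsBounded (connectedComponentIn {y : ℝ | 0 < a y} x)


/-! ### Abstract data -/

structure Dat (a : ℝ → ℝ) (H : ℝ → ℝ → ℝ) (phat : ℝ → ℝ) (κ : ℝ) : Prop where
  a0 : ∀ x, 0 ≤ a x
  ac : Continuous a
  kpos : 0 < κ
  aq : ∀ x y, a y = 0 → a x ≤ κ ^ 2 * (x - y) ^ 2
  comp : ∀ x, 0 < a x → ∃ l r, l < x ∧ x < r ∧ a l = 0 ∧ a r = 0 ∧ ∀ y, l < y → y < r → 0 < a y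
  Hc : Continuous (fun z : ℝ × ℝ => H z.1 z.2)
  Hl : ∀ M, ∃ K, 0 ≤ K ∧ ∀ x p q, |p| ≤ M → |q| ≤ M → |H x p - H x q| ≤ K * |p - q|
  Hlb : ∃ C, 0 ≤ C ∧ ∀ x p, -C ≤ H x p
  Hub : ∀ M, ∃ C, 0 ≤ C ∧ ∀ x p, |p| ≤ M → H x p ≤ C
  Hco : ∀ lam, ∃ R, 1 ≤ R ∧ ∃ c, 0 < c ∧ ∀ x p, R ≤ |p| → c * p ^ 2 ≤ H x p - lam
  Hdec : ∀ x p1 p2, p1 < p2 → p2 ≤ phat x → H x p2 < H x p1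
  Hinc : ∀ x p1 p2, phat x ≤ p1 → p1 < p2 → H x p1 < H x p2

structure Comp (a : ℝ → ℝ) (l r : ℝ) : Prop where
  lr : l < r
  al : a l = 0
  ar : a r = 0
  pos : ∀ y, l < y → y < r → 0 < a y

def Sol (a : ℝ → ℝ) (H : ℝ → ℝ → ℝ) (lam : ℝ) (f : ℝ → ℝ) (l r : ℝ) : Prop :=
  ∀ x, l < x → x < r → HasDerivAt f ((lam - H x (f x)) / a x) x

theorem Dat.refl {a : ℝ → ℝ} {H : ℝ → ℝ → ℝ} {phat : ℝ → ℝ} {κ : ℝ} (D : Dat a H phat κ) :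
    Dat (fun x => a (-x)) (fun x p => H (-x) (-p)) (fun x => -phat (-x)) κ where
  a0 x := D.a0 _
  ac := D.ac.comp continuous_neg
  kpos := D.kpos
  aq x y h := by
    have := D.aq (-x) (-y) h
    calc _ ≤ _ := this
      _ = _ := by ring
  comp x hx := by
    obtain ⟨l, r, h1, h2, h3, h4, h5⟩ := D.comp (-x) hx
    refine ⟨-r, -l, by linarith, by linarith, by simpa using h4, by simpa using h3, ?_⟩
    intro y hy1 hy2
    exact h5 _ (by linarith) (by linarith)
  Hc := D.Hc.comp (continuous_neg : Continuous fun z : ℝ × ℝ => -z)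
  Hl M := by
    obtain ⟨K, h0, h⟩ := D.Hl M
    refine ⟨K, h0, fun x p q hp hq => ?_⟩
    have := h (-x) (-p) (-q) (by simpa using hp) (by simpa using hq)
    rwa [show -p - -q = -(p - q) by ring, abs_neg] at this
  Hlb := by
    obtain ⟨C, h0, h⟩ := D.Hlb
    exact ⟨C, h0, fun x p => h _ _⟩
  Hub M := by
    obtain ⟨C, h0, h⟩ := D.Hub M
    exact ⟨C, h0, fun x p hp => h _ _ (by simpa using hp)⟩
  Hco lam := by
    obtain ⟨R, h0, c, hc, h⟩ := D.Hco lam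
    refine ⟨R, h0, c, hc, fun x p hp => ?_⟩
    simpa using h (-x) (-p) (by simpa using hp)
  Hdec x p1 p2 h1 h2 := D.Hinc _ _ _ (by linarith) (by linarith)
  Hinc x p1 p2 h1 h2 := D.Hdec _ _ _ (by linarith) (by linarith)

theorem Comp.refl {a : ℝ → ℝ} {l r : ℝ} (h : Comp a l r) : Comp (fun x => a (-x)) (-r) (-l) where
  lr := by linarith [h.lr]
  al := by simpa using h.ar
  ar := by simpa using h.al
  pos y h1 h2 := h.pos _ (by linarith) (by linarith)

theorem Sol.refl {a : ℝ → ℝ} {H : ℝ → ℝ → ℝ} {lam l r : ℝ} {f : ℝ → ℝ} (h : Sol a H lam f l r) :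
    Sol (fun x => a (-x)) (fun x p => H (-x) (-p)) lam (fun x => -f (-x)) (-r) (-l) := by
  intro x h1 h2
  have := ((h (-x) (by linarith) (by linarith)).comp x (hasDerivAt_neg x)).neg
  exact this.congr_deriv (by simp)

theorem cmp_zero {h h' : ℝ → ℝ} {x0 y K : ℝ} (hK : 0 ≤ K) (hc : ContinuousOn h (Icc x0 y))
    (hd : ∀ x ∈ Ico x0 y, HasDerivWithinAt h (h' x) (Ici x) x) (h0 : h x0 ≤ 0)
    (hb : ∀ x ∈ Ico x0 y, 0 < h x → h' x ≤ K * h x) : ∀ x ∈ Icc x0 y, h x ≤ 0 := by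
  intro x hx
  by_contra hcon
  push Not at hcon
  set E := Real.exp ((K + 1) * (x - x0)) with hE
  have hEp : 0 < E := Real.exp_pos _
  have key := image_le_of_deriv_right_lt_deriv_boundary hc hd
    (B := fun t => (h x / (2 * E)) * Real.exp ((K + 1) * (t - x0)))
    (B' := fun t => (h x / (2 * E)) * (Real.exp ((K + 1) * (t - x0)) * (K + 1))) ?_ ?_ ?_ hx
  · simp only [← hE] at key
    have : h x / (2 * E) * E = h x / 2 := by field_simp
    rw [this] at key
    linarith
  · refine h0.trans ?_
    positivity
  · intro t
    refine HasDerivAt.const_mul _ (HasDerivAt.exp ?_)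
    simpa using ((hasDerivAt_id t).sub_const x0).const_mul (K + 1)
  · intro t ht heq
    have hp : 0 < (h x / (2 * E)) * Real.exp ((K + 1) * (t - x0)) := by positivity
    have := hb t ht (by rw [heq]; exact hp)
    rw [heq] at this
    nlinarith

section ode
variable {a : ℝ → ℝ} {H : ℝ → ℝ → ℝ} {phat : ℝ → ℝ} {κ lam l r : ℝ} {f : ℝ → ℝ}

theorem Sol.contOn (hs : Sol a H lam f l r) {x0 y : ℝ} (h1 : l < x0) (h2 : y < r) :
    ContinuousOn f (Icc x0 y) := fun x hx =>
  (hs x (by linarith [hx.1]) (by linarith [hx.2])).continuousAt.continuousWithinAt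

theorem Sol.le_of (hs : Sol a H lam f l r) (ha : ∀ y, l < y → y < r → 0 < a y)
    {x0 y q : ℝ} (h1 : l < x0) (h12 : x0 ≤ y) (h2 : y < r)
    (hq : ∀ x ∈ Icc x0 y, lam < H x q) (h0 : f x0 ≤ q) : f y ≤ q := by
  refine image_le_of_deriv_right_lt_deriv_boundary (hs.contOn h1 h2)
    (fun x hx => (hs x (by linarith [hx.1]) (by linarith [hx.2])).hasDerivWithinAt)
    (B := fun _ => q) (B' := fun _ => 0) h0 (fun x => hasDerivAt_const x q) ?_ ⟨h12, le_rfl⟩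
  intro x hx he
  have := hq x ⟨hx.1, hx.2.le⟩
  rw [he]
  exact div_neg_of_neg_of_pos (by linarith) (ha x (by linarith [hx.1]) (by linarith [hx.2]))

theorem Sol.ge_of (hs : Sol a H lam f l r) (ha : ∀ y, l < y → y < r → 0 < a y)
    {x0 y q : ℝ} (h1 : l < x0) (h12 : x0 ≤ y) (h2 : y < r)
    (hq : ∀ x ∈ Icc x0 y, H x q < lam) (h0 : q ≤ f x0) : q ≤ f y := by
  have := image_le_of_deriv_right_lt_deriv_boundary (hs.contOn h1 h2).neg
    (fun x hx => (hs x (by linarith [hx.1]) (by linarith [hx.2])).neg.hasDerivWithinAt)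
    (B := fun _ => -q) (B' := fun _ => 0) (by simpa using h0) (fun x => hasDerivAt_const x (-q))
      ?_ ⟨h12, le_rfl⟩
  · simpa using this
  intro x hx he
  have := hq x ⟨hx.1, hx.2.le⟩
  have he' : f x = q := by simpa using he
  rw [he']
  have := div_pos (show 0 < lam - H x q by linarith)
    (ha x (by linarith [hx.1]) (by linarith [hx.2]))
  linarith

theorem blow {G : ℝ → ℝ} {c : ℝ} (hκ : 0 < κ) (hlr : l < r) (ha : ∀ y, l < y → y < r → 0 < a y)
    (haq : ∀ x, a x ≤ κ ^ 2 * (x - l) ^ 2) (hc : 0 < c)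
    (hf : ∀ x, l < x → x < r → HasDerivAt f (G x / a x) x)
    (hG : ∀ x, l < x → x < r → c ≤ G x) (M : ℝ) : ∃ x, l < x ∧ x < r ∧ f x < -M := by
  have hd : ∀ x, l < x → x < r → HasDerivAt (fun x => f x + c / κ ^ 2 * (x - l)⁻¹)
      (G x / a x + c / κ ^ 2 * (-1 / (x - l) ^ 2)) x := by
    intro x h1 h2
    refine (hf x h1 h2).add (HasDerivAt.const_mul _ ?_)
    exact ((hasDerivAt_id x).sub_const l).fun_inv (by simp; linarith)
  have hm : MonotoneOn (fun x => f x + c / κ ^ 2 * (x - l)⁻¹) (Ioo l r) := by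
    refine monotoneOn_of_deriv_nonneg (convex_Ioo l r)
      (fun x hx => (hd x hx.1 hx.2).continuousAt.continuousWithinAt) ?_ ?_
    · intro x hx
      rw [interior_Ioo] at hx
      exact (hd x hx.1 hx.2).differentiableAt.differentiableWithinAt
    · intro x hx
      rw [interior_Ioo] at hx
      rw [(hd x hx.1 hx.2).deriv]
      have hx1 : 0 < x - l := by linarith [hx.1]
      have hap := ha x hx.1 hx.2
      have h1 : c / (κ ^ 2 * (x - l) ^ 2) ≤ G x / a x :=
        div_le_div₀ (hc.le.trans (hG x hx.1 hx.2)) (hG x hx.1 hx.2) hap (haq x)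
      have h2 : c / κ ^ 2 * (-1 / (x - l) ^ 2) = - (c / (κ ^ 2 * (x - l) ^ 2)) := by
        field_simp
      rw [h2]; linarith
  set x1 := (l + r) / 2 with hx1
  set m := f x1 + c / κ ^ 2 * (x1 - l)⁻¹ with hmdef
  set N := |m| + |M| + 1 with hN
  have hNp : 0 < N := by positivity
  set t := min (x1 - l) (c / κ ^ 2 / N) with ht
  have htp : 0 < t := lt_min (by rw [hx1]; linarith) (by positivity)
  have ht1 : t ≤ x1 - l := min_le_left _ _
  have ht2 : t ≤ c / κ ^ 2 / N := min_le_right _ _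
  refine ⟨l + t, by linarith, by linarith, ?_⟩
  have := hm (show l + t ∈ Ioo l r from ⟨by linarith, by linarith⟩)
    (show x1 ∈ Ioo l r from ⟨by linarith, by linarith⟩) (by linarith)
  simp only [add_sub_cancel_left] at this
  have h3 : N ≤ c / κ ^ 2 * t⁻¹ := by
    rw [← div_eq_mul_inv, le_div_iff₀ htp]
    rw [le_div_iff₀ hNp] at ht2
    linarith
  have := le_abs_self m
  have := le_abs_self M
  have := neg_abs_le M
  linarith

theorem Sol.bound_above (D : Dat a H phat κ) (hC : Comp a l r) (hs : Sol a H lam f l r) {R c : ℝ}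
    (hR : 1 ≤ R) (hc : 0 < c) (hco : ∀ x p, R ≤ |p| → c * p ^ 2 ≤ H x p - lam) {x : ℝ}
    (h1 : l < x) (h2 : x < r) : f x ≤ R := by
  by_contra hcon
  push Not at hcon
  have hlam : ∀ x, lam < H x R := by
    intro x
    have := hco x R (le_abs_self R)
    have : 0 < c * R ^ 2 := by positivity
    linarith
  have hgt : ∀ y, l < y → y ≤ x → R < f y := by
    intro y hy1 hy2
    by_contra hn
    push Not at hn
    have := hs.le_of hC.pos hy1 hy2 h2 (fun z _ => hlam z) hn
    linarith
  have hA : ∀ y, l < y → y < x →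
      HasDerivAt (fun y => (f y)⁻¹) ((H y (f y) - lam) / (f y) ^ 2 / a y) y := by
    intro y h3 h4
    have := hgt y h3 h4.le
    have h6 : f y ≠ 0 := by linarith
    have h5 := (hs y h3 (by linarith)).fun_inv h6
    have h7 := (hC.pos y h3 (by linarith)).ne'
    refine h5.congr_deriv ?_
    field_simp
    ring
  have hB : ∀ y, l < y → y < x → c ≤ (H y (f y) - lam) / (f y) ^ 2 := by
    intro y h3 h4
    have := hgt y h3 h4.le
    rw [le_div_iff₀ (pow_pos (by linarith) 2)]
    exact hco y _ (this.le.trans (le_abs_self _))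
  obtain ⟨y, hy1, hy2, hy3⟩ := blow D.kpos h1 (fun y h3 h4 => hC.pos y h3 (by linarith))
    (fun y => D.aq y l hC.al) hc hA hB 0
  have := hgt y hy1 hy2.le
  have : 0 < (f y)⁻¹ := inv_pos.2 (by linarith)
  linarith

theorem Sol.bound (D : Dat a H phat κ) (hC : Comp a l r) (hs : Sol a H lam f l r) {R c : ℝ}
    (hR : 1 ≤ R) (hc : 0 < c) (hco : ∀ x p, R ≤ |p| → c * p ^ 2 ≤ H x p - lam) {x : ℝ}
    (h1 : l < x) (h2 : x < r) : |f x| ≤ R := by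
  rw [abs_le]
  refine ⟨?_, hs.bound_above D hC hR hc hco h1 h2⟩
  have := hs.refl.bound_above D.refl hC.refl hR hc
    (fun x p hp => by simpa using hco (-x) (-p) (by simpa using hp)) (x := -x)
    (by linarith) (by linarith)
  simp at this
  linarith

theorem Sol.lim_left (D : Dat a H phat κ) (hC : Comp a l r) (hs : Sol a H lam f l r) {R : ℝ}
    (hR : ∀ x, l < x → x < r → |f x| ≤ R) :
    ∃ m, Tendsto f (𝓝[>] l) (𝓝 m) ∧ H l m = lam := by
  have hlr := hC.lr
  have hmem : Ioo l r ∈ 𝓝[>] l := Ioo_mem_nhdsGT hlr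
  have hHx : ∀ q, Continuous (fun x => H x q) := fun q => D.Hc.comp (by fun_prop : Continuous fun x : ℝ => (x, q))
  have h1 : ∃ m, Tendsto f (𝓝[>] l) (𝓝 m) := by
    refine tendsto_of_no_upcrossings (s := {q | H l q ≠ lam}) ?_ ?_ ?_ ?_
    · rw [dense_iff_exists_between]
      intro p q hpq
      by_contra hcon
      push Not at hcon
      have hh : ∀ c, p < c → c < q → H l c = lam := by
        intro c h1 h2
        by_contra h
        have := hcon c h h1
        linarith
      by_cases hph : phat l ≤ (p + q) / 2
      · have := D.Hinc l ((p + q) / 2) ((p + 3 * q) / 4) hph (by linarith)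
        rw [hh _ (by linarith) (by linarith), hh _ (by linarith) (by linarith)] at this
        exact lt_irrefl _ this
      · have := D.Hdec l ((3 * p + q) / 4) ((p + q) / 2) (by linarith) (by linarith)
        rw [hh _ (by linarith) (by linarith), hh _ (by linarith) (by linarith)] at this
        exact lt_irrefl _ this
    · rintro q hq b - hqb ⟨hf1, hf2⟩
      have hf2' : ∃ᶠ x in 𝓝[>] l, q < f x := hf2.mono (fun x hx => hqb.trans hx)
      rcases lt_or_gt_of_ne hq with hlt | hgt
      · have hev : ∀ᶠ x in 𝓝 l, H x q < lam := (hHx q).continuousAt.eventually_lt continuousAt_const hlt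
        obtain ⟨δ, hδ, hball⟩ := Metric.eventually_nhds_iff.1 hev
        have m1 : Ioo l (min r (l + δ)) ∈ 𝓝[>] l := Ioo_mem_nhdsGT (lt_min hlr (by linarith))
        obtain ⟨x2, hx2, hx2'⟩ := (hf1.and_eventually m1).exists
        have m2 : Ioo l x2 ∈ 𝓝[>] l := Ioo_mem_nhdsGT hx2'.1
        obtain ⟨x1, hx1, hx1'⟩ := (hf2'.and_eventually m2).exists
        have h3 := lt_min_iff.1 hx2'.2
        have := hs.ge_of hC.pos hx1'.1 hx1'.2.le h3.1 (q := q) (fun z hz => hball (by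
          rw [Real.dist_eq, abs_lt]; constructor <;> linarith [hz.1, hz.2, hx1'.1])) hx1.le
        linarith
      · have hev : ∀ᶠ x in 𝓝 l, lam < H x q := continuousAt_const.eventually_lt (hHx q).continuousAt hgt
        obtain ⟨δ, hδ, hball⟩ := Metric.eventually_nhds_iff.1 hev
        have m1 : Ioo l (min r (l + δ)) ∈ 𝓝[>] l := Ioo_mem_nhdsGT (lt_min hlr (by linarith))
        obtain ⟨x2, hx2, hx2'⟩ := (hf2'.and_eventually m1).exists
        have m2 : Ioo l x2 ∈ 𝓝[>] l := Ioo_mem_nhdsGT hx2'.1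
        obtain ⟨x1, hx1, hx1'⟩ := (hf1.and_eventually m2).exists
        have h3 := lt_min_iff.1 hx2'.2
        have := hs.le_of hC.pos hx1'.1 hx1'.2.le h3.1 (q := q) (fun z hz => hball (by
          rw [Real.dist_eq, abs_lt]; constructor <;> linarith [hz.1, hz.2, hx1'.1])) hx1.le
        linarith
    · exact ⟨R, by
        rw [eventually_map]
        filter_upwards [hmem] with x hx using (abs_le.1 (hR x hx.1 hx.2)).2⟩
    · exact ⟨-R, by
        rw [eventually_map]
        filter_upwards [hmem] with x hx using (abs_le.1 (hR x hx.1 hx.2)).1⟩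
  obtain ⟨m, hm⟩ := h1
  refine ⟨m, hm, ?_⟩
  have hHt : Tendsto (fun x => H x (f x)) (𝓝[>] l) (𝓝 (H l m)) := by
    have : Tendsto (fun x => (x, f x)) (𝓝[>] l) (𝓝 (l, m)) :=
      (tendsto_nhdsWithin_of_tendsto_nhds tendsto_id).prodMk_nhds hm
    exact (D.Hc.tendsto (l, m)).comp this
  by_contra hne
  rcases lt_or_gt_of_ne hne with hlt | hgt
  · have hev := hHt.eventually (gt_mem_nhds (show H l m < (H l m + lam) / 2 by linarith))
    obtain ⟨δ, hδ, hsub⟩ := mem_nhdsGT_iff_exists_Ioo_subset.1 (inter_mem hev hmem)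
    have hδ' : l < δ := hδ
    obtain ⟨x, h3, h4, h5⟩ := blow (f := f) (G := fun x => lam - H x (f x)) (c := (lam - H l m) / 2)
      D.kpos hδ' (fun y h3 h4 => hC.pos y h3 ((hsub ⟨h3, h4⟩).2.2)) (fun y => D.aq y l hC.al)
      (by linarith) (fun y h3 h4 => hs y h3 ((hsub ⟨h3, h4⟩).2.2))
      (fun y h3 h4 => by have : H y (f y) < _ := (hsub ⟨h3, h4⟩).1; linarith) R
    have := (abs_le.1 (hR x h3 (hsub ⟨h3, h4⟩).2.2)).1
    linarith
  · have hev := hHt.eventually (lt_mem_nhds (show (H l m + lam) / 2 < H l m by linarith))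
    obtain ⟨δ, hδ, hsub⟩ := mem_nhdsGT_iff_exists_Ioo_subset.1 (inter_mem hev hmem)
    have hδ' : l < δ := hδ
    obtain ⟨x, h3, h4, h5⟩ := blow (f := fun x => - f x) (G := fun x => H x (f x) - lam)
      (c := (H l m - lam) / 2)
      D.kpos hδ' (fun y h3 h4 => hC.pos y h3 ((hsub ⟨h3, h4⟩).2.2)) (fun y => D.aq y l hC.al)
      (by linarith) (fun y h3 h4 => by
        have := (hs y h3 ((hsub ⟨h3, h4⟩).2.2)).fun_neg
        exact this.congr_deriv (by ring))
      (fun y h3 h4 => by have : _ < H y (f y) := (hsub ⟨h3, h4⟩).1; linarith) R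
    have := (abs_le.1 (hR x h3 (hsub ⟨h3, h4⟩).2.2)).2
    linarith

theorem Sol.lim_right (D : Dat a H phat κ) (hC : Comp a l r) (hs : Sol a H lam f l r) {R : ℝ}
    (hR : ∀ x, l < x → x < r → |f x| ≤ R) :
    ∃ m, Tendsto f (𝓝[<] r) (𝓝 m) ∧ H r m = lam := by
  obtain ⟨m, h1, h2⟩ := hs.refl.lim_left D.refl hC.refl (R := R) (fun x h1 h2 => by
    rw [abs_neg]; exact hR _ (by linarith) (by linarith))
  refine ⟨-m, ?_, by simpa using h2⟩
  have h3 : Tendsto (fun x : ℝ => -x) (𝓝[<] r) (𝓝[>] (-r)) := tendsto_neg_nhdsLT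
  have := (h1.comp h3).neg
  simpa [Function.comp_def] using this

theorem plus_of_gt (D : Dat a H phat κ) {x m m0 lam0 : ℝ} (hlam : lam0 < lam) (h : m0 ≤ m)
    (h0 : H x m0 = lam0) (h1 : H x m = lam) : phat x < m := by
  by_contra hcon
  push Not at hcon
  rcases h.eq_or_lt with he | hlt
  · rw [he] at h0; linarith
  · have := D.Hdec x m0 m hlt hcon
    linarith

theorem plus_unique (D : Dat a H phat κ) {x p q : ℝ} (hp : phat x ≤ p) (hq : phat x ≤ q)
    (he : H x p = H x q) : p = q := by
  rcases lt_trichotomy p q with h | h | h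
  · have := D.Hinc x p q hp h; linarith
  · exact h
  · have := D.Hinc x q p hq h; linarith

/-- limits at both ends for solutions above a lower-level solution -/
theorem Sol.lim_plus (D : Dat a H phat κ) (hC : Comp a l r) (hs : Sol a H lam f l r) {R R' lam0 : ℝ}
    {w : ℝ → ℝ} (hlam : lam0 < lam) (hw : Sol a H lam0 w l r)
    (hR : ∀ x, l < x → x < r → |f x| ≤ R) (hR' : ∀ x, l < x → x < r → |w x| ≤ R')
    (hwf : ∀ x, l < x → x < r → w x ≤ f x) :
    (∃ m, Tendsto f (𝓝[>] l) (𝓝 m) ∧ H l m = lam ∧ phat l < m) ∧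
    (∃ m, Tendsto f (𝓝[<] r) (𝓝 m) ∧ H r m = lam ∧ phat r < m) := by
  constructor
  · obtain ⟨m, h1, h2⟩ := hs.lim_left D hC hR
    obtain ⟨m0, h3, h4⟩ := hw.lim_left D hC hR'
    have : m0 ≤ m := le_of_tendsto_of_tendsto h3 h1 (by
      filter_upwards [Ioo_mem_nhdsGT hC.lr] with x hx using hwf x hx.1 hx.2)
    exact ⟨m, h1, h2, plus_of_gt D hlam this h4 h2⟩
  · obtain ⟨m, h1, h2⟩ := hs.lim_right D hC hR
    obtain ⟨m0, h3, h4⟩ := hw.lim_right D hC hR'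
    have : m0 ≤ m := le_of_tendsto_of_tendsto h3 h1 (by
      filter_upwards [Ioo_mem_nhdsLT hC.lr] with x hx using hwf x hx.1 hx.2)
    exact ⟨m, h1, h2, plus_of_gt D hlam this h4 h2⟩

end ode

section ode2
variable {a : ℝ → ℝ} {H : ℝ → ℝ → ℝ} {phat : ℝ → ℝ} {κ lam l r : ℝ} {f : ℝ → ℝ}

theorem Comp.amin (D : Dat a H phat κ) (hC : Comp a l r) {x0 y : ℝ} (h1 : l < x0) (h2 : y < r) :
    ∃ m, 0 < m ∧ ∀ x ∈ Icc x0 y, m ≤ a x := by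
  rcases le_or_gt x0 y with h | h
  · obtain ⟨z, hz, hz'⟩ := isCompact_Icc.exists_isMinOn (nonempty_Icc.2 h) D.ac.continuousOn
    exact ⟨a z, hC.pos z (by linarith [hz.1]) (by linarith [hz.2]), fun x hx => hz' hx⟩
  · exact ⟨1, one_pos, fun x hx => by linarith [hx.1, hx.2]⟩

theorem cmp2 {f1 f2 G1 G2 : ℝ → ℝ} {x0 y K m : ℝ} (hK : 0 ≤ K) (hm : 0 < m)
    (ha : ∀ x ∈ Icc x0 y, m ≤ a x)
    (hc1 : ContinuousOn f1 (Icc x0 y)) (hc2 : ContinuousOn f2 (Icc x0 y))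
    (hd1 : ∀ x ∈ Ico x0 y, HasDerivWithinAt f1 (G1 x / a x) (Ici x) x)
    (hd2 : ∀ x ∈ Ico x0 y, HasDerivWithinAt f2 (G2 x / a x) (Ici x) x)
    (hG : ∀ x ∈ Ico x0 y, f2 x < f1 x → G1 x - G2 x ≤ K * (f1 x - f2 x))
    (h0 : f1 x0 ≤ f2 x0) : ∀ x ∈ Icc x0 y, f1 x ≤ f2 x := by
  intro x hx
  have := cmp_zero (h := fun t => f1 t - f2 t) (h' := fun t => G1 t / a t - G2 t / a t)
    (K := K / m) (by positivity)
    (hc1.sub hc2) (fun t ht => (hd1 t ht).sub (hd2 t ht)) (by simpa using h0) (by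
      intro t ht hpos
      have h1 := hG t ht (by linarith)
      have h2 := ha t ⟨ht.1, ht.2.le⟩
      have h3 : 0 < a t := by linarith
      rw [← sub_div, div_le_iff₀ h3]
      have : K * (f1 t - f2 t) = K / m * (f1 t - f2 t) * m := by field_simp
      have h4 : 0 ≤ K / m * (f1 t - f2 t) := by positivity
      nlinarith) x hx
  linarith

theorem Sol.mono (D : Dat a H phat κ) (hC : Comp a l r) {f1 f2 : ℝ → ℝ} {M x0 y : ℝ}
    (hs1 : Sol a H lam f1 l r) (hs2 : Sol a H lam f2 l r)
    (hM1 : ∀ x, l < x → x < r → |f1 x| ≤ M) (hM2 : ∀ x, l < x → x < r → |f2 x| ≤ M)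
    (h1 : l < x0) (h12 : x0 ≤ y) (h2 : y < r) (h0 : f1 x0 ≤ f2 x0) : f1 y ≤ f2 y := by
  obtain ⟨m, hm, ham⟩ := hC.amin D h1 h2
  obtain ⟨K, hK, hKl⟩ := D.Hl M
  refine cmp2 hK hm ham (hs1.contOn h1 h2) (hs2.contOn h1 h2)
    (fun x hx => (hs1 x (by linarith [hx.1]) (by linarith [hx.2])).hasDerivWithinAt)
    (fun x hx => (hs2 x (by linarith [hx.1]) (by linarith [hx.2])).hasDerivWithinAt) ?_ h0 y
    ⟨h12, le_rfl⟩
  intro x hx hlt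
  have := hKl x (f1 x) (f2 x) (hM1 x (by linarith [hx.1]) (by linarith [hx.2]))
    (hM2 x (by linarith [hx.1]) (by linarith [hx.2]))
  rw [abs_of_pos (show 0 < f1 x - f2 x by linarith)] at this
  have := (abs_le.1 this).1
  linarith

theorem Sol.le_near (D : Dat a H phat κ) (hC : Comp a l r) {f1 f2 : ℝ → ℝ} {M p0 : ℝ}
    (hs1 : Sol a H lam f1 l r) (hs2 : Sol a H lam f2 l r)
    (hM1 : ∀ x, l < x → x < r → |f1 x| ≤ M) (hM2 : ∀ x, l < x → x < r → |f2 x| ≤ M)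
    (hp0 : phat l < p0) (ht1 : Tendsto f1 (𝓝[>] l) (𝓝 p0)) (ht2 : Tendsto f2 (𝓝[>] l) (𝓝 p0))
    {y : ℝ} (hy1 : l < y) (hy2 : y < r) : f1 y ≤ f2 y := by
  set q1 := (2 * phat l + p0) / 3 with hq1
  set q2 := (phat l + 2 * p0) / 3 with hq2
  have hHx : ∀ q, Continuous (fun x => H x q) := fun q => D.Hc.comp (by fun_prop : Continuous fun x : ℝ => (x, q))
  have hev : ∀ᶠ x in 𝓝 l, H x q1 < H x q2 := (hHx q1).continuousAt.eventually_lt (hHx q2).continuousAt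
    (D.Hinc l q1 q2 (by linarith) (by linarith))
  have hev2 : ∀ᶠ x in 𝓝[>] l, phat x < q2 ∧ q2 < f1 x ∧ q2 < f2 x ∧ x < y := by
    filter_upwards [nhdsWithin_le_nhds hev, ht1.eventually (lt_mem_nhds (show q2 < p0 by linarith)),
      ht2.eventually (lt_mem_nhds (show q2 < p0 by linarith)), Ioo_mem_nhdsGT hy1] with x h1 h2 h3 h4
    refine ⟨?_, h2, h3, h4.2⟩
    by_contra hcon
    push Not at hcon
    have := D.Hdec x q1 q2 (by linarith) hcon
    linarith
  obtain ⟨δ, hδ, hsub⟩ := mem_nhdsGT_iff_exists_Ioo_subset.1 hev2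
  have hδ' : l < δ := hδ
  set x1 := (l + δ) / 2 with hx1
  have hx1m : x1 ∈ Ioo l δ := ⟨by linarith, by linarith⟩
  have hx1y := (hsub hx1m).2.2.2
  refine hs1.mono D hC hs2 hM1 hM2 hx1m.1 hx1y.le hy2 ?_
  by_contra hcon
  push Not at hcon
  set ρ := f1 x1 - f2 x1 with hρ
  have hdiff : Tendsto (fun x => f1 x - f2 x) (𝓝[>] l) (𝓝 0) := by simpa using ht1.sub ht2
  obtain ⟨x2, hx2, hx2'⟩ := ((hdiff.eventually (gt_mem_nhds (show (0:ℝ) < ρ / 2 by linarith))).and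
    (Ioo_mem_nhdsGT hx1m.1)).exists
  have key := image_le_of_deriv_right_lt_deriv_boundary (f := fun x => f1 x - f2 x) (a := x2) (b := x1)
    ((hs1.contOn hx2'.1 (by linarith)).sub (hs2.contOn hx2'.1 (by linarith)))
    (fun x hx => ((hs1 x (by linarith [hx.1, hx2'.1]) (by linarith [hx.2])).sub
      (hs2 x (by linarith [hx.1, hx2'.1]) (by linarith [hx.2]))).hasDerivWithinAt)
    (B := fun _ => ρ / 2) (B' := fun _ => 0) hx2.le (fun x => hasDerivAt_const x _) (by
      intro x hx he
      have h3 := hsub (show x ∈ Ioo l δ from ⟨by linarith [hx.1, hx2'.1], by linarith [hx.2, hx1m.2]⟩)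
      have he' : f1 x - f2 x = ρ / 2 := he
      have h4 := D.Hinc x (f2 x) (f1 x) (by linarith [h3.1, h3.2.2.1]) (by linarith)
      rw [← sub_div]
      exact div_neg_of_neg_of_pos (by linarith) (hC.pos x (by linarith [hx.1, hx2'.1]) (by linarith [hx.2])))
    (⟨hx2'.2.le, le_rfl⟩ : x1 ∈ Icc x2 x1)
  have : ρ ≤ ρ / 2 := key
  linarith

theorem Sol.unique (D : Dat a H phat κ) (hC : Comp a l r) {f1 f2 : ℝ → ℝ} {M1 M2 p1 p2 : ℝ}
    (hs1 : Sol a H lam f1 l r) (hs2 : Sol a H lam f2 l r)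
    (hM1 : ∀ x, l < x → x < r → |f1 x| ≤ M1) (hM2 : ∀ x, l < x → x < r → |f2 x| ≤ M2)
    (hp1 : phat l < p1) (ht1 : Tendsto f1 (𝓝[>] l) (𝓝 p1)) (h1 : H l p1 = lam)
    (hp2 : phat l < p2) (ht2 : Tendsto f2 (𝓝[>] l) (𝓝 p2)) (h2 : H l p2 = lam)
    {y : ℝ} (hy1 : l < y) (hy2 : y < r) : f1 y = f2 y := by
  have : p1 = p2 := plus_unique D hp1.le hp2.le (h1.trans h2.symm)
  subst this
  have hM1' : ∀ x, l < x → x < r → |f1 x| ≤ max M1 M2 := fun x h3 h4 =>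
    (hM1 x h3 h4).trans (le_max_left _ _)
  have hM2' : ∀ x, l < x → x < r → |f2 x| ≤ max M1 M2 := fun x h3 h4 =>
    (hM2 x h3 h4).trans (le_max_right _ _)
  exact le_antisymm (hs1.le_near D hC hs2 hM1' hM2' hp1 ht1 ht2 hy1 hy2)
    (hs2.le_near D hC hs1 hM2' hM1' hp1 ht2 ht1 hy1 hy2)

theorem picard_ex (D : Dat a H phat κ) (hC : Comp a l r) {B : ℝ} (hB : 0 ≤ B) (lam : ℝ) {x0 y : ℝ}
    (h1 : l < x0) (h12 : x0 ≤ y) (h2 : y < r) :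
    ∃ f : ℝ → ℝ, f x0 = B ∧ ∀ x ∈ Icc x0 y,
      HasDerivWithinAt f ((lam - H x (max (-B) (min B (f x)))) / a x) (Icc x0 y) x := by
  obtain ⟨m, hm, ham⟩ := hC.amin D h1 h2
  obtain ⟨K, hK, hKl⟩ := D.Hl B
  obtain ⟨C1, hC1, hlb⟩ := D.Hlb
  obtain ⟨C2, hC2, hub⟩ := D.Hub B
  have hcl : ∀ p : ℝ, |max (-B) (min B p)| ≤ B := by
    intro p
    rw [abs_le]
    exact ⟨le_max_left _ _, max_le (by linarith) (min_le_left _ _)⟩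
  have hcl2 : ∀ p q : ℝ, |max (-B) (min B p) - max (-B) (min B q)| ≤ |p - q| := by
    intro p q
    refine (abs_max_sub_max_le_max _ _ _ _).trans ?_
    refine max_le (by simp) ((abs_min_sub_min_le_max _ _ _ _).trans ?_)
    exact max_le (by simp) le_rfl
  have hb : ∀ x ∈ Icc x0 y, ∀ p, |(lam - H x (max (-B) (min B p))) / a x| ≤ (|lam| + C1 + C2) / m := by
    intro x hx p
    have h3 := ham x hx
    rw [abs_div, abs_of_pos (show 0 < a x by linarith)]
    refine div_le_div₀ (by positivity) ?_ hm h3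
    have h4 := hlb x (max (-B) (min B p))
    have h5 := hub x _ (hcl p)
    have := le_abs_self lam
    have := neg_abs_le lam
    rw [abs_le]
    constructor <;> linarith
  have hb0 : 0 ≤ (|lam| + C1 + C2) / m := by positivity
  have hP : IsPicardLindelof (fun x p => (lam - H x (max (-B) (min B p))) / a x)
      (⟨x0, ⟨le_rfl, h12⟩⟩ : Icc x0 y) B
      (⟨(|lam| + C1 + C2) / m * (y - x0), mul_nonneg hb0 (by linarith)⟩ : NNReal) 0
      (⟨(|lam| + C1 + C2) / m, hb0⟩ : NNReal) (⟨K / m, by positivity⟩ : NNReal) := by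
    constructor
    · intro x hx
      refine LipschitzOnWith.of_dist_le_mul ?_
      intro p _ q _
      rw [Real.dist_eq, Real.dist_eq, ← sub_div, abs_div]
      have h3 := ham x hx
      rw [abs_of_pos (show 0 < a x by linarith)]
      show _ ≤ K / m * |p - q|
      rw [show K / m * |p - q| = K * |p - q| / m by ring]
      refine div_le_div₀ (by positivity) ?_ hm h3
      have := hKl x _ _ (hcl q) (hcl p)
      rw [show lam - H x (max (-B) (min B p)) - (lam - H x (max (-B) (min B q))) =
        H x (max (-B) (min B q)) - H x (max (-B) (min B p)) by ring]
      refine this.trans ?_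
      rw [abs_sub_comm p q]
      exact mul_le_mul_of_nonneg_left (hcl2 q p) hK
    · intro p _
      refine ContinuousOn.div ?_ D.ac.continuousOn ?_
      · exact (continuous_const.sub (D.Hc.comp (by fun_prop : Continuous fun x : ℝ => (x, max (-B) (min B p))))).continuousOn
      · intro x hx
        have := ham x hx
        linarith
    · intro x hx p _
      exact hb x hx p
    · show (|lam| + C1 + C2) / m * max (y - x0) (x0 - x0) ≤ (|lam| + C1 + C2) / m * (y - x0) - 0
      rw [max_eq_left (by linarith)]
      simp
  obtain ⟨f, hf0, hf⟩ := hP.exists_eq_forall_mem_Icc_hasDerivWithinAt₀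
  exact ⟨f, hf0, hf⟩

theorem ici_of_icc {f : ℝ → ℝ} {f' x0 y x : ℝ} (hx : x ∈ Ico x0 y)
    (h : HasDerivWithinAt f f' (Icc x0 y) x) : HasDerivWithinAt f f' (Ici x) x :=
  h.mono_of_mem_nhdsWithin (mem_of_superset (Icc_mem_nhdsGE hx.2)
    (Icc_subset_Icc_left hx.1))

theorem Sol.exists_above (D : Dat a H phat κ) (hC : Comp a l r) {w : ℝ → ℝ} {lam0 R : ℝ}
    (hlam : lam0 < lam) (hw : Sol a H lam0 w l r) (hR : ∀ x, l < x → x < r → |w x| ≤ R) :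
    ∃ f, Sol a H lam f l r ∧ (∃ M, ∀ x, l < x → x < r → |f x| ≤ M) ∧
      ∀ x, l < x → x < r → w x ≤ f x := by
  obtain ⟨R1, hR1, c, hc, hco⟩ := D.Hco lam
  set B := max R R1 with hBdef
  have hB1 : R1 ≤ B := le_max_right _ _
  have hB0 : 0 ≤ B := by linarith
  have hBlam : ∀ x, lam < H x B := by
    intro x
    have h3 := hco x B (by rw [abs_of_nonneg hB0]; exact hB1)
    have : 0 < c * B ^ 2 := mul_pos hc (pow_pos (by linarith) 2)
    linarith
  have hwB : ∀ x, l < x → x < r → |w x| ≤ B := fun x h1 h2 => (hR x h1 h2).trans (le_max_left _ _)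
  obtain ⟨K, hK, hKl⟩ := D.Hl B
  have hlr := hC.lr
  -- solutions on compact subintervals
  have step : ∀ x0 y, l < x0 → x0 ≤ y → y < r → ∃ f : ℝ → ℝ, f x0 = B ∧
      (∀ x ∈ Icc x0 y, HasDerivWithinAt f ((lam - H x (f x)) / a x) (Icc x0 y) x) ∧
      (∀ x ∈ Icc x0 y, f x ≤ B) ∧ (∀ x ∈ Icc x0 y, w x ≤ f x) := by
    intro x0 y h1 h12 h2
    obtain ⟨m, hm, ham⟩ := hC.amin D h1 h2
    obtain ⟨f, hf0, hf⟩ := picard_ex D hC hB0 lam h1 h12 h2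
    have hcont : ContinuousOn f (Icc x0 y) := fun x hx => (hf x hx).continuousWithinAt
    have hle : ∀ x ∈ Icc x0 y, f x ≤ B := by
      intro x hx
      refine image_le_of_deriv_right_lt_deriv_boundary hcont
        (fun t ht => ici_of_icc ht (hf t ⟨ht.1, ht.2.le⟩))
        (B := fun _ => B) (B' := fun _ => 0) hf0.le (fun t => hasDerivAt_const t B) ?_ hx
      intro t ht he
      rw [he, min_self, max_eq_right (by linarith)]
      exact div_neg_of_neg_of_pos (by linarith [hBlam t]) (hC.pos t (by linarith [ht.1]) (by linarith [ht.2]))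
    have hge : ∀ x ∈ Icc x0 y, w x ≤ f x := by
      refine cmp2 hK hm ham (hw.contOn h1 h2) hcont
        (fun x hx => (hw x (by linarith [hx.1]) (by linarith [hx.2])).hasDerivWithinAt)
        (fun t ht => ici_of_icc ht (hf t ⟨ht.1, ht.2.le⟩)) ?_ ?_
      · intro x hx hlt
        have hwb := abs_le.1 (hwB x (by linarith [hx.1]) (by linarith [hx.2]))
        have h3 : min B (f x) = f x := min_eq_right (by linarith)
        rw [h3]
        have h4 := hKl x (w x) (max (-B) (f x)) (hwB x (by linarith [hx.1]) (by linarith [hx.2]))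
          (abs_le.2 ⟨le_max_left _ _, max_le (by linarith) (by linarith)⟩)
        have h5 : max (-B) (f x) ≤ w x := max_le hwb.1 hlt.le
        have h6 : f x ≤ max (-B) (f x) := le_max_right _ _
        rw [abs_of_nonneg (show 0 ≤ w x - max (-B) (f x) by linarith)] at h4
        have h7 := (abs_le.1 h4).1
        have h8 : K * (w x - max (-B) (f x)) ≤ K * (w x - f x) :=
          mul_le_mul_of_nonneg_left (by linarith) hK
        linarith
      · rw [hf0]
        exact (abs_le.1 (hwB x0 h1 (by linarith))).2
    refine ⟨f, hf0, ?_, hle, hge⟩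
    intro x hx
    have hwb := abs_le.1 (hwB x (by linarith [hx.1]) (by linarith [hx.2]))
    have := hf x hx
    rwa [min_eq_right (hle x hx), max_eq_right (by linarith [hge x hx])] at this
  -- exhausting sequence
  set d : ℕ → ℝ := fun n => (r - l) / (n + 2) with hd
  have hdpos : ∀ n, 0 < d n := fun n => div_pos (by linarith) (by positivity)
  have hdhalf : ∀ n, d n ≤ (r - l) / 2 := by
    intro n
    refine div_le_div_of_nonneg_left (by linarith) (by norm_num) ?_
    have : (0:ℝ) ≤ n := Nat.cast_nonneg n
    linarith
  have hdanti : Antitone d := by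
    intro n k hnk
    refine div_le_div_of_nonneg_left (by linarith) (by positivity) ?_
    have : (n:ℝ) ≤ k := Nat.cast_le.2 hnk
    linarith
  have hdlim : Tendsto d atTop (𝓝 0) := by
    refine Tendsto.div_atTop tendsto_const_nhds ?_
    exact tendsto_atTop_add_const_right _ _ tendsto_natCast_atTop_atTop
  choose F hF0 hFd hFle hFge using fun n => step (l + d n) (r - d n) (by linarith [hdpos n])
    (by linarith [hdhalf n]) (by linarith [hdpos n])
  have hFcont : ∀ n, ContinuousOn (F n) (Icc (l + d n) (r - d n)) :=
    fun n x hx => (hFd n x hx).continuousWithinAt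
  have hFanti : ∀ n k, n ≤ k → ∀ x ∈ Icc (l + d n) (r - d n), F k x ≤ F n x := by
    intro n k hnk
    have hdk := hdanti hnk
    have hsub : Icc (l + d n) (r - d n) ⊆ Icc (l + d k) (r - d k) :=
      Icc_subset_Icc (by linarith) (by linarith)
    obtain ⟨m, hm, ham⟩ := hC.amin D (x0 := l + d n) (y := r - d n) (by linarith [hdpos n]) (by linarith [hdpos n])
    refine cmp2 hK hm ham ((hFcont k).mono hsub) (hFcont n)
      (fun t ht => ici_of_icc ht ((hFd k t (hsub ⟨ht.1, ht.2.le⟩)).mono hsub))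
      (fun t ht => ici_of_icc ht (hFd n t ⟨ht.1, ht.2.le⟩)) ?_ ?_
    · intro x hx hlt
      have hxi : x ∈ Icc (l + d n) (r - d n) := ⟨hx.1, hx.2.le⟩
      have hwb := abs_le.1 (hwB x (by linarith [hx.1, hdpos n]) (by linarith [hx.2, hdpos n]))
      have h4 := hKl x (F k x) (F n x)
        (abs_le.2 ⟨by linarith [hFge k x (hsub hxi)], hFle k x (hsub hxi)⟩)
        (abs_le.2 ⟨by linarith [hFge n x hxi], hFle n x hxi⟩)
      rw [abs_of_pos (show 0 < F k x - F n x by linarith)] at h4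
      have := (abs_le.1 h4).1
      linarith
    · rw [hF0]
      exact hFle k _ (hsub ⟨le_rfl, by linarith [hdhalf n]⟩)
  -- points are eventually inside
  have hin : ∀ c e, l < c → e < r → ∃ N, ∀ n, N ≤ n → Icc c e ⊆ Icc (l + d n) (r - d n) := by
    intro c e h1 h2
    have h3 : ∀ᶠ n in atTop, d n < min (c - l) (r - e) :=
      hdlim.eventually (gt_mem_nhds (lt_min (by linarith) (by linarith)))
    obtain ⟨N, hN⟩ := eventually_atTop.1 h3
    refine ⟨N, fun n hn => ?_⟩
    have := lt_min_iff.1 (hN n hn)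
    exact Icc_subset_Icc (by linarith) (by linarith)
  have hlim : ∀ x, ∃ y, l < x → x < r → Tendsto (fun n => F n x) atTop (𝓝 y) := by
    intro x
    by_cases hx : l < x ∧ x < r
    · obtain ⟨N, hN⟩ := hin x x hx.1 hx.2
      have hmem : ∀ n, N ≤ n → x ∈ Icc (l + d n) (r - d n) := fun n hn => hN n hn ⟨le_rfl, le_rfl⟩
      have hanti : Antitone (fun n => F (n + N) x) := by
        intro n k hnk
        exact hFanti (n + N) (k + N) (by omega) x (hmem _ (by omega))
      have hbdd : BddBelow (range (fun n => F (n + N) x)) := by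
        refine ⟨w x, ?_⟩
        rintro _ ⟨n, rfl⟩
        exact hFge _ x (hmem _ (by omega))
      refine ⟨_, fun _ _ => (tendsto_add_atTop_iff_nat N).1 (tendsto_atTop_ciInf hanti hbdd)⟩
    · exact ⟨0, fun h1 h2 => absurd ⟨h1, h2⟩ hx⟩
  choose f hf using hlim
  have hfle : ∀ x, l < x → x < r → f x ≤ B := by
    intro x h1 h2
    obtain ⟨N, hN⟩ := hin x x h1 h2
    refine le_of_tendsto (hf x h1 h2) (eventually_atTop.2 ⟨N, fun n hn => ?_⟩)
    exact hFle n x (hN n hn ⟨le_rfl, le_rfl⟩)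
  have hfge : ∀ x, l < x → x < r → w x ≤ f x := by
    intro x h1 h2
    obtain ⟨N, hN⟩ := hin x x h1 h2
    refine ge_of_tendsto (hf x h1 h2) (eventually_atTop.2 ⟨N, fun n hn => ?_⟩)
    exact hFge n x (hN n hn ⟨le_rfl, le_rfl⟩)
  refine ⟨f, ?_, ⟨B, fun x h1 h2 => abs_le.2 ⟨?_, hfle x h1 h2⟩⟩, hfge⟩
  swap
  · have := abs_le.1 (hwB x h1 h2)
    linarith [hfge x h1 h2]
  intro x h1 h2
  set c := (l + x) / 2 with hcdef
  set e := (x + r) / 2 with hedef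
  have hlc : l < c := by linarith
  have her : e < r := by linarith
  have hcx : c < x := by linarith
  have hxe : x < e := by linarith
  obtain ⟨N, hN⟩ := hin c e hlc her
  obtain ⟨m, hm, ham⟩ := hC.amin D hlc her
  obtain ⟨C1, hC1, hlb⟩ := D.Hlb
  obtain ⟨C2, hC2, hub⟩ := D.Hub B
  set C := (|lam| + C1 + C2) / m with hCdef
  have hC0 : 0 ≤ C := by positivity
  have hb : ∀ t ∈ Icc c e, ∀ p, |p| ≤ B → |(lam - H t p) / a t| ≤ C := by
    intro t ht p hp
    have h3 := ham t ht
    rw [abs_div, abs_of_pos (show 0 < a t by linarith)]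
    refine div_le_div₀ (by positivity) ?_ hm h3
    have h4 := hlb t p
    have h5 := hub t _ hp
    have := le_abs_self lam
    have := neg_abs_le lam
    rw [abs_le]
    constructor <;> linarith
  have hFB : ∀ n, N ≤ n → ∀ t ∈ Icc c e, |F n t| ≤ B := by
    intro n hn t ht
    have hwb := abs_le.1 (hwB t (by linarith [ht.1]) (by linarith [ht.2]))
    exact abs_le.2 ⟨by linarith [hFge n t (hN n hn ht)], hFle n t (hN n hn ht)⟩
  have hFd' : ∀ n, N ≤ n → ∀ t ∈ Icc c e, HasDerivWithinAt (F n) ((lam - H t (F n t)) / a t) (Icc c e) t :=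
    fun n hn t ht => (hFd n t (hN n hn ht)).mono (hN n hn)
  have hlip : ∀ s ∈ Icc c e, ∀ t ∈ Icc c e, |f t - f s| ≤ C * |t - s| := by
    intro s hs t ht
    have h3 : Tendsto (fun n => |F n t - F n s|) atTop (𝓝 |f t - f s|) :=
      ((hf t (by linarith [ht.1]) (by linarith [ht.2])).sub
        (hf s (by linarith [hs.1]) (by linarith [hs.2]))).abs
    refine le_of_tendsto h3 (eventually_atTop.2 ⟨N, fun n hn => ?_⟩)
    exact (convex_Icc c e).norm_image_sub_le_of_norm_hasDerivWithin_le (hFd' n hn)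
      (fun u hu => hb u hu _ (hFB n hn u hu)) hs ht
  have hfc : ContinuousOn f (Icc c e) := by
    refine LipschitzOnWith.continuousOn (K := ⟨C, hC0⟩) (LipschitzOnWith.of_dist_le_mul ?_)
    intro s hs t ht
    exact hlip t ht s hs
  have hPhi : ∀ g : ℝ → ℝ, ContinuousOn g (Icc c e) →
      ContinuousOn (fun t => (lam - H t (g t)) / a t) (Icc c e) := by
    intro g hg
    refine ContinuousOn.div (continuousOn_const.sub ?_) D.ac.continuousOn ?_
    · exact D.Hc.comp_continuousOn (continuousOn_id.prodMk hg)
    · intro t ht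
      have := ham t ht
      linarith
  have hint : ∀ y ∈ Icc c e, f y - f c = ∫ t in c..y, (lam - H t (f t)) / a t := by
    intro y hy
    have hsubI : Icc c y ⊆ Icc c e := Icc_subset_Icc_right hy.2
    have h3 : Tendsto (fun n => F n y - F n c) atTop (𝓝 (f y - f c)) :=
      (hf y (by linarith [hy.1]) (by linarith [hy.2])).sub (hf c hlc (by linarith))
    have h4 : Tendsto (fun n => ∫ t in c..y, (lam - H t (F n t)) / a t) atTop
        (𝓝 (∫ t in c..y, (lam - H t (f t)) / a t)) := by
      refine intervalIntegral.tendsto_integral_filter_of_dominated_convergence (fun _ => C) ?_ ?_ ?_ ?_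
      · refine eventually_atTop.2 ⟨N, fun n hn => ?_⟩
        rw [uIoc_of_le hy.1]
        exact ((hPhi _ (fun t ht => (hFd' n hn t ht).continuousWithinAt)).mono
          (Ioc_subset_Icc_self.trans hsubI)).aestronglyMeasurable measurableSet_Ioc
      · refine eventually_atTop.2 ⟨N, fun n hn => Eventually.of_forall fun t ht => ?_⟩
        rw [uIoc_of_le hy.1] at ht
        have ht' := hsubI (Ioc_subset_Icc_self ht)
        exact hb t ht' _ (hFB n hn t ht')
      · exact intervalIntegrable_const
      · refine Eventually.of_forall fun t ht => ?_
        rw [uIoc_of_le hy.1] at ht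
        have ht' := hsubI (Ioc_subset_Icc_self ht)
        have h5 : Tendsto (fun n => (t, F n t)) atTop (𝓝 (t, f t)) :=
          tendsto_const_nhds.prodMk_nhds (hf t (by linarith [ht'.1]) (by linarith [ht'.2]))
        exact (tendsto_const_nhds.sub ((D.Hc.tendsto _).comp h5)).div_const _
    refine tendsto_nhds_unique (h3.congr' ?_) h4
    refine eventually_atTop.2 ⟨N, fun n hn => ?_⟩
    symm
    show (∫ t in c..y, (lam - H t (F n t)) / a t) = F n y - F n c
    refine intervalIntegral.integral_eq_sub_of_hasDeriv_right_of_le hy.1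
      (fun t ht => ((hFd' n hn t (hsubI ht)).continuousWithinAt).mono hsubI)
      (fun t ht => ?_) ?_
    · exact ((hFd' n hn t (hsubI (Ioo_subset_Icc_self ht))).hasDerivAt
        (Icc_mem_nhds ht.1 (by linarith [ht.2, hy.2]))).hasDerivWithinAt
    · refine ContinuousOn.intervalIntegrable ?_
      rw [uIcc_of_le hy.1]
      exact (hPhi _ (fun t ht => (hFd' n hn t ht).continuousWithinAt)).mono hsubI
  have hcontf := hPhi f hfc
  have hx : x ∈ Icc c e := ⟨hcx.le, hxe.le⟩
  have hder : HasDerivAt (fun y => ∫ t in c..y, (lam - H t (f t)) / a t) ((lam - H x (f x)) / a x) x := by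
    refine intervalIntegral.integral_hasDerivAt_right ?_ ?_ ?_
    · refine ContinuousOn.intervalIntegrable ?_
      rw [uIcc_of_le hcx.le]
      exact hcontf.mono (Icc_subset_Icc_right hxe.le)
    · exact ContinuousOn.stronglyMeasurableAtFilter isOpen_Ioo (hcontf.mono Ioo_subset_Icc_self) x ⟨hcx, hxe⟩
    · exact hcontf.continuousAt (Icc_mem_nhds hcx hxe)
  have := hder.const_add (f c)
  refine this.congr_of_eventuallyEq ?_
  filter_upwards [Icc_mem_nhds hcx hxe] with y hy
  rw [← hint y hy]
  ring

end ode2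
section visc

theorem conc_lem {v : ℝ → ℝ} {c d C : ℝ} (hv : ContinuousOn v (Icc c d))
    (h : ∀ p K x0, x0 ∈ Ioo c d → IsLocalMin (fun x => v x - (p * x + K / 2 * x ^ 2)) x0 → K ≤ C) :
    ConcaveOn ℝ (Icc c d) (fun x => v x - C / 2 * x ^ 2) := by
  refine LinearOrder.concaveOn_of_lt (convex_Icc c d) ?_
  intro x hx y hy hxy s t hs ht hst
  simp only [smul_eq_mul]
  by_contra hcon
  push Not at hcon
  obtain rfl : s = 1 - t := by linarith
  set z := (1 - t) * x + t * y with hz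
  have hxz : x < z := by nlinarith
  have hzy : z < y := by nlinarith
  set ψ : ℝ → ℝ := fun x => v x - C / 2 * x ^ 2 with hψ
  set β := (ψ y - ψ x) / (y - x) with hβ
  have hβ' : β * (y - x) = ψ y - ψ x := div_mul_cancel₀ _ (by linarith)
  have hzx : z - x = t * (y - x) := by rw [hz]; ring
  set gap := (1 - t) * ψ x + t * ψ y - ψ z with hgap
  have hgap0 : 0 < gap := by
    rw [hgap]; simp only [hψ]; linarith
  set e := gap / (y - x) ^ 2 with he
  have hyx : 0 < y - x := by linarith
  have he0 : 0 < e := by rw [he]; positivity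
  have he1 : e * (y - x) ^ 2 = gap := div_mul_cancel₀ _ (by positivity)
  set g : ℝ → ℝ := fun q => ψ q - (ψ x + β * (q - x)) - e / 2 * (q - x) * (q - y) with hg
  have hsub : Icc x y ⊆ Icc c d := Icc_subset_Icc hx.1 hy.2
  have hgc : ContinuousOn g (Icc x y) := by
    have h1 : ContinuousOn v (Icc x y) := hv.mono hsub
    simp only [hg, hψ]
    fun_prop
  have hgx : g x = 0 := by simp only [hg]; ring
  have hgy : g y = 0 := by simp only [hg]; linear_combination -hβ'
  have hgz : g z < 0 := by
    have h1 : ψ x + β * (z - x) = ψ z + gap := by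
      rw [hzx, hgap]; linear_combination t * hβ'
    have h2 : e / 2 * (z - x) * (z - y) ≥ - (gap / 2) := by
      have h3 : (z - x) * (y - z) ≤ (y - x) ^ 2 := by nlinarith
      have := mul_le_mul_of_nonneg_left h3 he0.le
      nlinarith
    have h4 : g z = ψ z - (ψ x + β * (z - x)) - e / 2 * (z - x) * (z - y) := rfl
    rw [h4, h1]
    linarith
  obtain ⟨q, hq, hqm⟩ := isCompact_Icc.exists_isMinOn (nonempty_Icc.2 hxy.le) hgc
  have hgq : g q ≤ g z := hqm ⟨hxz.le, hzy.le⟩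
  have hqx : x < q := lt_of_le_of_ne hq.1 (by rintro rfl; linarith)
  have hqy : q < y := lt_of_le_of_ne hq.2 (by rintro rfl; linarith)
  have hloc : IsLocalMin g q := hqm.isLocalMin (Icc_mem_nhds hqx hqy)
  have := h (β - e / 2 * (x + y)) (C + e) q ⟨lt_of_le_of_lt hx.1 hqx, lt_of_lt_of_le hqy hy.2⟩ (by
    have h5 : (fun q => v q - ((β - e / 2 * (x + y)) * q + (C + e) / 2 * q ^ 2)) =
        fun q => g q + (ψ x - β * x + e / 2 * x * y) := by
      funext q
      simp only [hg, hψ]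
      ring
    rw [h5]
    filter_upwards [hloc] with t ht
    linarith)
  linarith

theorem conv_lem {v : ℝ → ℝ} {c d C : ℝ} (hv : ContinuousOn v (Icc c d))
    (h : ∀ p K x0, x0 ∈ Ioo c d → IsLocalMax (fun x => v x - (p * x + K / 2 * x ^ 2)) x0 → -K ≤ C) :
    ConvexOn ℝ (Icc c d) (fun x => v x + C / 2 * x ^ 2) := by
  have := conc_lem (v := fun x => - v x) (C := C) hv.neg (fun p K x0 hx0 hm => by
    have h1 := h (-p) (-K) x0 hx0 (by
      filter_upwards [hm] with t ht
      linarith)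
    linarith)
  have h2 := this.neg
  refine h2.congr ?_
  intro x hx
  simp only [Pi.neg_apply]
  ring

theorem diff_of_semi {v : ℝ → ℝ} {S : Set ℝ} {C C' x : ℝ}
    (h1 : ConvexOn ℝ S (fun x => v x + C' / 2 * x ^ 2))
    (h2 : ConcaveOn ℝ S (fun x => v x - C / 2 * x ^ 2)) (hx : x ∈ interior S) :
    DifferentiableAt ℝ v x := by
  have hR := h1.hasDerivWithinAt_rightDeriv_of_mem_interior hx
  have hL := h1.hasDerivWithinAt_leftDeriv_of_mem_interior hx
  have hLR := h1.leftDeriv_le_rightDeriv_of_mem_interior hx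
  set L := derivWithin (fun x => v x + C' / 2 * x ^ 2) (Iio x) x
  set R := derivWithin (fun x => v x + C' / 2 * x ^ 2) (Ioi x) x
  have h3 := h2.neg
  have hLR' := h3.leftDeriv_le_rightDeriv_of_mem_interior hx
  have hq : HasDerivAt (fun x : ℝ => (C + C') / 2 * x ^ 2) ((C + C') * x) x :=
    ((hasDerivAt_pow 2 x).const_mul ((C + C') / 2)).congr_deriv (by push_cast; ring)
  have hR' : HasDerivWithinAt (-fun x => v x - C / 2 * x ^ 2) ((C + C') * x - R) (Ioi x) x := by
    refine (hq.hasDerivWithinAt.sub hR).congr_of_eventuallyEq ?_ ?_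
    · exact Eventually.of_forall fun y => by simp; ring
    · simp; ring
  have hL' : HasDerivWithinAt (-fun x => v x - C / 2 * x ^ 2) ((C + C') * x - L) (Iio x) x := by
    refine (hq.hasDerivWithinAt.sub hL).congr_of_eventuallyEq ?_ ?_
    · exact Eventually.of_forall fun y => by simp; ring
    · simp; ring
  rw [hR'.derivWithin (uniqueDiffWithinAt_Ioi x), hL'.derivWithin (uniqueDiffWithinAt_Iio x)] at hLR'
  have hE : L = R := by linarith
  rw [hE] at hL
  have hU : HasDerivAt (fun x => v x + C' / 2 * x ^ 2) R x := by
    have := (hasDerivWithinAt_Iio_iff_Iic.1 hL).union (hasDerivWithinAt_Ioi_iff_Ici.1 hR)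
    rwa [Iic_union_Ici, hasDerivWithinAt_univ] at this
  have := hU.differentiableAt.sub (((differentiableAt_id (x := x) (𝕜 := ℝ)).pow 2).const_mul (C' / 2))
  refine this.congr_of_eventuallyEq (Eventually.of_forall fun y => ?_)
  simp

theorem dbl_int {h : ℝ → ℝ} (hh : Continuous h) :
    ∃ W : ℝ → ℝ, ContDiff ℝ 2 W ∧ (∀ x, HasDerivAt W (deriv W x) x) ∧ ∀ x, HasDerivAt (deriv W) (h x) x := by
  have key : ∀ f : ℝ → ℝ, Continuous f → ∀ x, HasDerivAt (fun y => ∫ t in (0:ℝ)..y, f t) (f x) x :=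
    fun f hf x => (hf.integral_hasStrictDerivAt 0 x).hasDerivAt
  set G : ℝ → ℝ := fun y => ∫ t in (0:ℝ)..y, h t with hG
  have hGd := key h hh
  have hGc : Continuous G := continuous_iff_continuousAt.2 fun x => (hGd x).continuousAt
  have hWd := key G hGc
  have hd : deriv (fun y => ∫ t in (0:ℝ)..y, G t) = G := funext fun x => (hWd x).deriv
  refine ⟨fun y => ∫ t in (0:ℝ)..y, G t, ?_, ?_, ?_⟩
  · rw [show (2 : WithTop ℕ∞) = 1 + 1 from by norm_num, contDiff_succ_iff_deriv]
    refine ⟨fun x => (hWd x).differentiableAt, by simp, ?_⟩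
    rw [hd, contDiff_one_iff_deriv]
    refine ⟨fun x => (hGd x).differentiableAt, ?_⟩
    rw [show deriv G = h from funext fun x => (hGd x).deriv]
    exact hh
  · intro x; rw [hd]; exact hWd x
  · intro x; rw [hd]; exact hGd x

theorem quad_test (W : ℝ → ℝ) (hW : ContDiff ℝ 2 W) {h : ℝ → ℝ} (hW1 : ∀ x, HasDerivAt W (deriv W x) x)
    (hW2 : ∀ x, HasDerivAt (deriv W) (h x) x) (p K : ℝ) :
    ContDiff ℝ 2 (fun x => W x + (p * x + K / 2 * x ^ 2)) ∧
    (∀ x, deriv (fun x => W x + (p * x + K / 2 * x ^ 2)) x = deriv W x + (p + K * x)) ∧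
    (∀ x, deriv (deriv (fun x => W x + (p * x + K / 2 * x ^ 2))) x = h x + K) := by
  have h1 : ∀ x, deriv (fun x => W x + (p * x + K / 2 * x ^ 2)) x = deriv W x + (p + K * x) := by
    intro x
    refine ((hW1 x).add ((((hasDerivAt_id x).const_mul p)).add ((hasDerivAt_pow 2 x).const_mul (K/2)))).deriv.trans ?_
    push_cast; ring
  refine ⟨?_, h1, ?_⟩
  · fun_prop
  · intro x
    rw [show deriv (fun x => W x + (p * x + K / 2 * x ^ 2)) = fun x => deriv W x + (p + K * x) from funext h1]
    refine ((hW2 x).add (((hasDerivAt_id x).const_mul K).const_add p)).deriv.trans ?_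
    ring

theorem quad_test0 (p K : ℝ) :
    ContDiff ℝ 2 (fun x : ℝ => (p * x + K / 2 * x ^ 2)) ∧
    (∀ x, deriv (fun x : ℝ => (p * x + K / 2 * x ^ 2)) x = (p + K * x)) ∧
    (∀ x, deriv (deriv (fun x : ℝ => (p * x + K / 2 * x ^ 2))) x = K) := by
  have := quad_test (fun _ => (0:ℝ)) contDiff_const (h := fun _ => 0) (fun x => by simpa using hasDerivAt_const x (0:ℝ))
    (fun x => by simpa using hasDerivAt_const x (0:ℝ)) p K
  simpa using this

end visc
section reg

theorem test_slope {v φ : ℝ → ℝ} {x0 p M : ℝ} (hφ : HasDerivAt φ p x0)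
    (hL : ∀ᶠ y in 𝓝 x0, |v y - v x0| ≤ M * |y - x0|) (hm : IsLocalMax (fun x => v x - φ x) x0) :
    |p| ≤ M := by
  have hR : Tendsto (slope φ x0) (𝓝[>] x0) (𝓝 p) :=
    (hasDerivWithinAt_iff_tendsto_slope' (by simp)).1 hφ.hasDerivWithinAt
  have hLt : Tendsto (slope φ x0) (𝓝[<] x0) (𝓝 p) :=
    (hasDerivWithinAt_iff_tendsto_slope' (by simp)).1 hφ.hasDerivWithinAt
  rw [abs_le]
  constructor
  · refine ge_of_tendsto hR ?_
    filter_upwards [self_mem_nhdsWithin, mem_nhdsWithin_of_mem_nhds hL, mem_nhdsWithin_of_mem_nhds hm]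
      with y hy h1 h2
    have hy' : 0 < y - x0 := sub_pos.2 hy
    rw [slope_def_field, le_div_iff₀ hy']

    rw [abs_of_pos hy'] at h1
    have := (abs_le.1 h1).1
    linarith
  · refine le_of_tendsto hLt ?_
    filter_upwards [self_mem_nhdsWithin, mem_nhdsWithin_of_mem_nhds hL, mem_nhdsWithin_of_mem_nhds hm]
      with y hy h1 h2
    have hy' : y - x0 < 0 := sub_neg.2 hy
    rw [slope_def_field, div_le_iff_of_neg hy']

    rw [abs_of_neg hy'] at h1
    have := (abs_le.1 h1).1
    linarith

theorem test_slope' {v φ : ℝ → ℝ} {x0 p M : ℝ} (hφ : HasDerivAt φ p x0)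
    (hL : ∀ᶠ y in 𝓝 x0, |v y - v x0| ≤ M * |y - x0|) (hm : IsLocalMin (fun x => v x - φ x) x0) :
    |p| ≤ M := by
  have := test_slope (v := fun y => - v y) (φ := fun y => - φ y) (M := M) hφ.fun_neg (by
    filter_upwards [hL] with y hy
    rw [show - v y - -v x0 = -(v y - v x0) by ring, abs_neg]; exact hy)
    (by filter_upwards [hm] with y hy; linarith)
  simpa using this

variable {a : ℝ → ℝ} {H : ℝ → ℝ → ℝ} {phat : ℝ → ℝ} {κ lam l r : ℝ}

theorem reg (D : Dat a H phat κ) {v : ℝ → ℝ} (hv : Continuous v) (hs : ViscSolOn a H lam univ v)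
    {x : ℝ} (hx : 0 < a x) :
    DifferentiableAt ℝ v x ∧ HasDerivAt (deriv v) ((lam - H x (deriv v x)) / a x) x := by
  obtain ⟨hsub, hsup⟩ := hs
  set m := a x / 2 with hm
  have hm0 : 0 < m := by rw [hm]; linarith
  obtain ⟨δ, hδ, hδa⟩ : ∃ δ > 0, ∀ y, |y - x| < δ → m ≤ a y := by
    have := (D.ac.tendsto x).eventually (lt_mem_nhds (show m < a x by rw [hm]; linarith))
    obtain ⟨δ, hδ, h⟩ := Metric.eventually_nhds_iff.1 this
    exact ⟨δ, hδ, fun y hy => (h (by rwa [Real.dist_eq])).le⟩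
  obtain ⟨C1, hC1, hlb⟩ := D.Hlb
  set C := (|lam| + C1) / m with hC
  have hC0 : 0 ≤ C := by rw [hC]; positivity
  set c := x - δ / 2
  set d := x + δ / 2
  have hcd : ∀ y ∈ Ioo c d, m ≤ a y := fun y hy => hδa y (by
    have h1 : x - δ / 2 < y := hy.1
    have h2 : y < x + δ / 2 := hy.2
    rw [abs_lt]; constructor <;> linarith)
  have hconc : ConcaveOn ℝ (Icc c d) (fun x => v x - C / 2 * x ^ 2) := by
    refine conc_lem hv.continuousOn ?_
    intro p K x0 hx0 hmin
    obtain ⟨q1, q2, q3⟩ := quad_test0 p K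
    have h1 := hsup _ q1 x0 (mem_univ _) hmin
    rw [q3, q2] at h1
    have h2 := hlb x0 (p + K * x0)
    have h3 := hcd x0 hx0
    by_contra hK
    push Not at hK
    have h4 : C * m = |lam| + C1 := div_mul_cancel₀ _ hm0.ne'
    have h5 : C * m < a x0 * K := by nlinarith
    linarith [le_abs_self lam]
  -- local Lipschitz
  have hx_in : x ∈ Ioo c d := ⟨by simp only [c]; linarith, by simp only [d]; linarith⟩
  have hLL := (hconc.subset Ioo_subset_Icc_self (convex_Ioo c d)).locallyLipschitzOn isOpen_Ioo
  obtain ⟨M0, t, ht, hLip⟩ := hLL hx_in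
  rw [isOpen_Ioo.nhdsWithin_eq hx_in] at ht
  obtain ⟨ε, hε, hεt⟩ := Metric.mem_nhds_iff.1 ht
  set e := min ε (δ / 2) with he
  have he0 : 0 < e := lt_min hε (by linarith)
  set M := (M0 : ℝ) + C / 2 * (2 * (|x| + e)) with hM
  have hvLip : ∀ y ∈ Ioo (x - e) (x + e), ∀ z ∈ Ioo (x - e) (x + e), |v z - v y| ≤ M * |z - y| := by
    intro y hy z hz
    have hin : ∀ y ∈ Ioo (x - e) (x + e), y ∈ t := fun y hy => hεt (by
      rw [Metric.mem_ball, Real.dist_eq, abs_lt]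
      have := min_le_left ε (δ / 2)
      constructor <;> linarith [hy.1, hy.2])
    have h1 := hLip.dist_le_mul z (hin z hz) y (hin y hy)
    rw [Real.dist_eq, Real.dist_eq] at h1
    have h2 : v z - v y = (v z - C / 2 * z ^ 2 - (v y - C / 2 * y ^ 2)) + C / 2 * (z + y) * (z - y) := by ring
    rw [h2]
    refine (abs_add_le _ _).trans ?_
    rw [abs_mul, abs_mul, abs_of_nonneg (by linarith : 0 ≤ C / 2), hM, add_mul]
    have h3 : |z + y| ≤ 2 * (|x| + e) := by
      rw [abs_le]
      have := neg_abs_le x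
      have := le_abs_self x
      constructor <;> linarith [hy.1, hy.2, hz.1, hz.2]
    gcongr
  obtain ⟨C2, hC2, hub⟩ := D.Hub M
  set C' := (|lam| + C2) / m with hC'
  have hC'0 : 0 ≤ C' := by rw [hC']; positivity
  have hed : e ≤ δ / 2 := min_le_right _ _
  set c' := x - e / 2
  set d' := x + e / 2
  have hsubI : Icc c' d' ⊆ Ioo c d := by
    intro y hy
    constructor
    · have := hy.1; simp only [c, c'] at *; linarith
    · have := hy.2; simp only [d, d'] at *; linarith
  have hsubE : Icc c' d' ⊆ Ioo (x - e) (x + e) := by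
    intro y hy
    constructor
    · have := hy.1; simp only [c'] at *; linarith
    · have := hy.2; simp only [d'] at *; linarith
  have hconv : ConvexOn ℝ (Icc c' d') (fun x => v x + C' / 2 * x ^ 2) := by
    refine conv_lem hv.continuousOn ?_
    intro p K x0 hx0 hmax
    obtain ⟨q1, q2, q3⟩ := quad_test0 p K
    have h1 := hsub _ q1 x0 (mem_univ _) hmax
    have hx0' := hsubE (Ioo_subset_Icc_self hx0)
    have h6 := test_slope (M := M) (q1.differentiable (by norm_num) x0).hasDerivAt (by
      filter_upwards [Ioo_mem_nhds hx0'.1 hx0'.2] with y hy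
      exact hvLip x0 hx0' y hy) hmax
    have h2 := hub x0 _ h6
    rw [q3] at h1
    have h3 := hcd x0 (hsubI (Ioo_subset_Icc_self hx0))
    by_contra hK
    push Not at hK
    have h4 : C' * m = |lam| + C2 := div_mul_cancel₀ _ hm0.ne'
    have h5 : C' * m < a x0 * (-K) := by nlinarith
    linarith [neg_abs_le lam]
  have hconc' := hconc.subset (hsubI.trans Ioo_subset_Icc_self) (convex_Icc c' d')
  have hdiff : ∀ y ∈ Ioo c' d', DifferentiableAt ℝ v y := fun y hy =>
    diff_of_semi hconv hconc' (by rwa [interior_Icc])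
  have hq : ∀ (B y : ℝ), HasDerivAt (fun x : ℝ => B / 2 * x ^ 2) (B * y) y := fun B y =>
    ((hasDerivAt_pow 2 y).const_mul (B / 2)).congr_deriv (by push_cast; ring)
  have hd1 : ∀ y ∈ Ioo c' d', HasDerivAt (fun x => v x - C / 2 * x ^ 2) (deriv v y - C * y) y :=
    fun y hy => (hdiff y hy).hasDerivAt.fun_sub (hq C y)
  have hd2 : ∀ y ∈ Ioo c' d', HasDerivAt (fun x => v x + C' / 2 * x ^ 2) (deriv v y + C' * y) y :=
    fun y hy => (hdiff y hy).hasDerivAt.fun_add (hq C' y)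
  have hmono := (hconv.subset Ioo_subset_Icc_self (convex_Ioo c' d')).monotoneOn_deriv
    (fun y hy => (hd2 y hy).differentiableAt)
  have hanti := (hconc'.subset Ioo_subset_Icc_self (convex_Ioo c' d')).antitoneOn_deriv
    (fun y hy => (hd1 y hy).differentiableAt)
  have hcont : ContinuousOn (deriv v) (Ioo c' d') := by
    refine LipschitzOnWith.continuousOn (K := ⟨C + C', by positivity⟩) (LipschitzOnWith.of_dist_le_mul ?_)
    have key : ∀ y ∈ Ioo c' d', ∀ z ∈ Ioo c' d', y ≤ z → |deriv v z - deriv v y| ≤ (C + C') * |z - y| := by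
      intro y hy z hz hyz
      have h1 := hmono hy hz hyz
      have h2 := hanti hy hz hyz
      rw [(hd1 y hy).deriv, (hd1 z hz).deriv] at h2
      rw [(hd2 y hy).deriv, (hd2 z hz).deriv] at h1
      rw [abs_of_nonneg (sub_nonneg.2 hyz), abs_le]
      have := mul_nonneg hC0 (sub_nonneg.2 hyz)
      have := mul_nonneg hC'0 (sub_nonneg.2 hyz)
      constructor <;> nlinarith
    intro y hy z hz
    rw [Real.dist_eq, Real.dist_eq]
    rcases le_total y z with h | h
    · rw [abs_sub_comm, abs_sub_comm y]; exact key y hy z hz h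
    · exact key z hz y hy h
  -- smaller closed interval
  set c2 := x - e / 4
  set d2 := x + e / 4
  have hcd2 : c2 ≤ d2 := by simp only [c2, d2]; linarith
  have hsub2 : Icc c2 d2 ⊆ Ioo c' d' := by
    intro y hy
    constructor
    · have := hy.1; simp only [c2, c'] at *; linarith
    · have := hy.2; simp only [d2, d'] at *; linarith
  set h0 : ℝ → ℝ := fun y => (lam - H y (deriv v y)) / a y with hh0
  have hh0c : ContinuousOn h0 (Icc c2 d2) := by
    refine ContinuousOn.div (continuousOn_const.sub ?_) D.ac.continuousOn ?_
    · exact D.Hc.comp_continuousOn (continuousOn_id.prodMk (hcont.mono hsub2))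
    · intro t ht
      have := hcd t (hsubI (Ioo_subset_Icc_self (hsub2 ht)))
      linarith
  have hhc : Continuous (IccExtend hcd2 ((Icc c2 d2).domRestrict h0)) :=
    hh0c.domRestrict.Icc_extend'
  obtain ⟨W, hW, hW1, hW2⟩ := dbl_int hhc
  have hWh : ∀ y ∈ Icc c2 d2, HasDerivAt (deriv W) (h0 y) y := by
    intro y hy
    have := hW2 y
    rwa [IccExtend_of_mem _ _ hy] at this
  have hWc : ContinuousOn (fun y => v y - W y) (Icc c2 d2) :=
    (hv.sub hW.continuous).continuousOn
  have hvd : ∀ y ∈ Icc c2 d2, DifferentiableAt ℝ v y := fun y hy => hdiff y (hsub2 hy)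
  have hapos : ∀ y ∈ Icc c2 d2, 0 < a y := fun y hy => by
    have := hcd y (hsubI (Ioo_subset_Icc_self (hsub2 hy)))
    linarith
  have hA : ∀ p K y, y ∈ Ioo c2 d2 → (∀ f : ℝ → ℝ, f = (fun x => v x - (W x + (p * x + K / 2 * x ^ 2))) →
      deriv f y = 0) → deriv (fun x => W x + (p * x + K / 2 * x ^ 2)) y = deriv v y := by
    intro p K y hy hf
    have h1 := hf _ rfl
    have hfd : DifferentiableAt ℝ (fun x => W x + (p * x + K / 2 * x ^ 2)) y :=
      (quad_test W hW hW1 hW2 p K).1.differentiable (by norm_num) y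
    have h2 := ((hvd y (Ioo_subset_Icc_self hy)).hasDerivAt.fun_sub hfd.hasDerivAt).deriv
    rw [h1] at h2
    linarith
  have e1 : ConcaveOn ℝ (Icc c2 d2) (fun y => v y - W y - 0 / 2 * y ^ 2) := by
    refine conc_lem hWc ?_
    intro p K y hy hmin
    obtain ⟨q1, q2, q3⟩ := quad_test W hW hW1 hW2 p K
    have hmin' : IsLocalMin (fun x => v x - (W x + (p * x + K / 2 * x ^ 2))) y := by
      filter_upwards [hmin] with t ht; linarith
    have h1 := hsup _ q1 y (mem_univ _) hmin'
    rw [hA p K y hy (fun f hf => by rw [hf]; exact hmin'.deriv_eq_zero), q3,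
      IccExtend_of_mem _ _ (Ioo_subset_Icc_self hy)] at h1
    have hap := hapos y (Ioo_subset_Icc_self hy)
    have h2 : a y * h0 y = lam - H y (deriv v y) := mul_div_cancel₀ _ hap.ne'
    simp only [domRestrict_apply] at h1
    by_contra hK
    push Not at hK
    have := mul_pos hap hK
    linarith
  have e2 : ConvexOn ℝ (Icc c2 d2) (fun y => v y - W y + 0 / 2 * y ^ 2) := by
    refine conv_lem hWc ?_
    intro p K y hy hmin
    obtain ⟨q1, q2, q3⟩ := quad_test W hW hW1 hW2 p K
    have hmin' : IsLocalMax (fun x => v x - (W x + (p * x + K / 2 * x ^ 2))) y := by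
      filter_upwards [hmin] with t ht; linarith
    have h1 := hsub _ q1 y (mem_univ _) hmin'
    rw [hA p K y hy (fun f hf => by rw [hf]; exact hmin'.deriv_eq_zero), q3,
      IccExtend_of_mem _ _ (Ioo_subset_Icc_self hy)] at h1
    have hap := hapos y (Ioo_subset_Icc_self hy)
    have h2 : a y * h0 y = lam - H y (deriv v y) := mul_div_cancel₀ _ hap.ne'
    simp only [domRestrict_apply] at h1
    by_contra hK
    push Not at hK
    have := mul_pos hap hK
    linarith
  simp only [zero_div, zero_mul, sub_zero, add_zero] at e1 e2
  have hvW : ∀ y ∈ Icc c2 d2, HasDerivAt (fun y => v y - W y) (deriv v y - deriv W y) y := fun y hy =>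
    (hvd y hy).hasDerivAt.fun_sub (hW1 y)
  have hmo := e2.monotoneOn_deriv (fun y hy => (hvW y hy).differentiableAt)
  have han := e1.antitoneOn_deriv (fun y hy => (hvW y hy).differentiableAt)
  have hx2 : x ∈ Ioo c2 d2 := ⟨by simp only [c2]; linarith, by simp only [d2]; linarith⟩
  have hconst : ∀ y ∈ Icc c2 d2, deriv v y - deriv W y = deriv v x - deriv W x := by
    intro y hy
    have hx2' := Ioo_subset_Icc_self hx2
    rw [← (hvW y hy).deriv, ← (hvW x hx2').deriv]
    rcases le_total x y with h | h
    · exact le_antisymm (han hx2' hy h) (hmo hx2' hy h)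
    · exact le_antisymm (hmo hy hx2' h) (han hy hx2' h)
  refine ⟨hvd x (Ioo_subset_Icc_self hx2), ?_⟩
  have := (hWh x (Ioo_subset_Icc_self hx2)).add_const (deriv v x - deriv W x)
  refine this.congr_of_eventuallyEq ?_
  filter_upwards [Icc_mem_nhds hx2.1 hx2.2] with y hy
  rw [← hconst y hy]; ring

end reg
section reg2
variable {a : ℝ → ℝ} {H : ℝ → ℝ → ℝ} {phat : ℝ → ℝ} {κ lam l r : ℝ}

theorem Dat.toComp (D : Dat a H phat κ) {x : ℝ} (hx : 0 < a x) : ∃ l r, l < x ∧ x < r ∧ Comp a l r := by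
  obtain ⟨l, r, h1, h2, h3, h4, h5⟩ := D.comp x hx
  exact ⟨l, r, h1, h2, ⟨h1.trans h2, h3, h4, h5⟩⟩

theorem sol_of_visc (D : Dat a H phat κ) {v : ℝ → ℝ} (hv : Continuous v) (hs : ViscSolOn a H lam univ v)
    (hC : Comp a l r) : Sol a H lam (deriv v) l r :=
  fun x h1 h2 => (reg D hv hs (hC.pos x h1 h2)).2

theorem isLocalMin_refl {f : ℝ → ℝ} {x : ℝ} (h : IsLocalMin (fun y => f (-y)) x) : IsLocalMin f (-x) := by
  have h1 : Tendsto (fun y : ℝ => -y) (𝓝 (-x)) (𝓝 x) := by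
    simpa using (continuous_neg.tendsto (-x))
  have h2 := h1.eventually h
  filter_upwards [h2] with y hy
  simpa using hy

theorem isLocalMax_refl {f : ℝ → ℝ} {x : ℝ} (h : IsLocalMax (fun y => f (-y)) x) : IsLocalMax f (-x) := by
  have h1 : Tendsto (fun y : ℝ => -y) (𝓝 (-x)) (𝓝 x) := by
    simpa using (continuous_neg.tendsto (-x))
  have h2 := h1.eventually h
  filter_upwards [h2] with y hy
  simpa using hy

theorem deriv_refl (φ : ℝ → ℝ) (x : ℝ) : deriv (fun y => φ (-y)) x = - deriv φ (-x) :=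
  deriv_comp_neg (f := φ) (x := x)

theorem deriv2_refl (φ : ℝ → ℝ) (x : ℝ) : deriv (deriv (fun y => φ (-y))) x = deriv (deriv φ) (-x) := by
  rw [show deriv (fun y => φ (-y)) = fun y => - deriv φ (-y) from funext (deriv_refl φ)]
  rw [deriv.fun_neg, deriv_refl]; simp

theorem ViscSolOn.refl {v : ℝ → ℝ} (hs : ViscSolOn a H lam univ v) :
    ViscSolOn (fun x => a (-x)) (fun x p => H (-x) (-p)) lam univ (fun x => v (-x)) := by
  constructor
  · intro φ hφ x0 _ hm
    have h1 := hs.1 (fun y => φ (-y)) (hφ.comp contDiff_neg) (-x0) (mem_univ _) (by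
      refine isLocalMax_refl (f := fun y => v y - φ (-y)) ?_
      simpa using hm)
    rw [deriv2_refl, deriv_refl] at h1
    simpa using h1
  · intro φ hφ x0 _ hm
    have h1 := hs.2 (fun y => φ (-y)) (hφ.comp contDiff_neg) (-x0) (mem_univ _) (by
      refine isLocalMin_refl (f := fun y => v y - φ (-y)) ?_
      simpa using hm)
    rw [deriv2_refl, deriv_refl] at h1
    simpa using h1

theorem lower_slope (D : Dat a H phat κ) {v : ℝ → ℝ} (hv : Continuous v) (hs : ViscSolOn a H lam univ v)
    {R c : ℝ} (hR : 1 ≤ R) (hc : 0 < c) (hco : ∀ x p, R ≤ |p| → c * p ^ 2 ≤ H x p - lam)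
    {φ : ℝ → ℝ} (hφ : ContDiff ℝ 2 φ) {x0 : ℝ} (hm : IsLocalMin (fun x => v x - φ x) x0) :
    |deriv φ x0| ≤ R := by
  rcases (D.a0 x0).eq_or_lt with h0 | h0
  · have h1 := hs.2 φ hφ x0 (mem_univ _) hm
    rw [← h0, zero_mul, zero_add] at h1
    by_contra hcon
    push Not at hcon
    have h2 := hco x0 _ hcon.le
    have h3 : 0 < (deriv φ x0) ^ 2 := by
      rw [← sq_abs]; exact pow_pos (by linarith) 2
    have := mul_pos hc h3
    linarith
  · obtain ⟨l, r, h1, h2, hC⟩ := D.toComp h0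
    have h3 := (sol_of_visc D hv hs hC).bound D hC hR hc hco h1 h2
    have h4 := hm.deriv_eq_zero
    rw [((reg D hv hs h0).1.hasDerivAt.fun_sub (hφ.differentiable (by norm_num) x0).hasDerivAt).deriv] at h4
    rwa [show deriv φ x0 = deriv v x0 by linarith]

theorem lip_half {v : ℝ → ℝ} (hv : Continuous v) {R : ℝ}
    (h : ∀ φ : ℝ → ℝ, ContDiff ℝ 2 φ → ∀ x0, IsLocalMin (fun x => v x - φ x) x0 → |deriv φ x0| ≤ R)
    {x y : ℝ} (hxy : x < y) : v y - v x ≤ R * (y - x) := by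
  by_contra hcon
  push Not at hcon
  obtain ⟨R', hR, hR'⟩ : ∃ R', R < R' ∧ R' * (y - x) < v y - v x := by
    have h1 : R < (v y - v x) / (y - x) := by rwa [lt_div_iff₀ (by linarith)]
    obtain ⟨R', h2, h3⟩ := exists_between h1
    exact ⟨R', h2, by rwa [lt_div_iff₀ (by linarith)] at h3⟩
  set k : ℝ → ℝ := fun t => v t - R' * t with hk
  set C := k y - k x with hC
  have hC0 : 0 < C := by rw [hC]; simp only [hk]; nlinarith
  have hkc : Continuous k := by simp only [hk]; fun_prop
  obtain ⟨z, hz1, hz2, hz3⟩ : ∃ z, x < z ∧ z < y ∧ k z < k x + C / 2 := by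
    have h1 : ∀ᶠ z in 𝓝[>] x, k z < k x + C / 2 :=
      (hkc.tendsto x).mono_left nhdsWithin_le_nhds |>.eventually (gt_mem_nhds (by linarith))
    have h2 : ∀ᶠ z in 𝓝[>] x, z ∈ Ioo x y := Ioo_mem_nhdsGT hxy
    obtain ⟨z, h3, h4⟩ := (h1.and h2).exists
    exact ⟨z, h4.1, h4.2, h3⟩
  set M := Real.log 2 / (z - x) with hM
  have hM0 : 0 < M := div_pos (Real.log_pos (by norm_num)) (by linarith)
  have hMz : M * (z - x) = Real.log 2 := div_mul_cancel₀ _ (by linarith)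
  set φ : ℝ → ℝ := fun t => R' * t - C * Real.exp (-M * (t - x)) with hφ
  have hφs : ContDiff ℝ 2 φ := by simp only [hφ]; fun_prop
  have hφd : ∀ t, deriv φ t = R' + C * (M * Real.exp (-M * (t - x))) := by
    intro t
    have h1 : HasDerivAt (fun t => -M * (t - x)) (-M * 1) t := ((hasDerivAt_id t).sub_const x).const_mul (-M)
    have h2 := ((hasDerivAt_id t).const_mul R').fun_sub (h1.exp.const_mul C)
    refine h2.deriv.trans ?_
    ring
  set g : ℝ → ℝ := fun t => v t - φ t with hg
  have hgk : ∀ t, g t = k t + C * Real.exp (-M * (t - x)) := by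
    intro t; simp only [hg, hk, hφ]; ring
  have hgc : ContinuousOn g (Icc x y) := (hv.sub hφs.continuous).continuousOn
  have hgx : g x = k x + C := by rw [hgk]; simp
  have hgy : k x + C < g y := by
    rw [hgk, hC]
    have := mul_pos hC0 (Real.exp_pos (-M * (y - x)))
    rw [hC] at this
    linarith
  have hgz : g z < k x + C := by
    rw [hgk, neg_mul, hMz, Real.exp_neg, Real.exp_log (by norm_num)]
    linarith
  obtain ⟨q, hq, hqm⟩ := isCompact_Icc.exists_isMinOn (nonempty_Icc.2 hxy.le) hgc
  have hgq : g q ≤ g z := hqm ⟨hz1.le, hz2.le⟩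
  have hqx : x < q := lt_of_le_of_ne hq.1 (by rintro rfl; linarith)
  have hqy : q < y := lt_of_le_of_ne hq.2 (by rintro rfl; linarith)
  have h1 := h φ hφs q (hqm.isLocalMin (Icc_mem_nhds hqx hqy))
  rw [hφd] at h1
  have h2 := (abs_le.1 h1).2
  have h3 : 0 < C * (M * Real.exp (-M * (q - x))) := by positivity
  linarith

theorem lip_full {v : ℝ → ℝ} (hv : Continuous v) {R : ℝ} (hR : 0 ≤ R)
    (h : ∀ φ : ℝ → ℝ, ContDiff ℝ 2 φ → ∀ x0, IsLocalMin (fun x => v x - φ x) x0 → |deriv φ x0| ≤ R) :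
    LipschitzWith ⟨R, hR⟩ v := by
  have h' : ∀ φ : ℝ → ℝ, ContDiff ℝ 2 φ → ∀ x0, IsLocalMin (fun x => v (-x) - φ x) x0 → |deriv φ x0| ≤ R := by
    intro φ hφ x0 hm
    have h1 := h (fun y => φ (-y)) (hφ.comp contDiff_neg) (-x0) (by
      refine isLocalMin_refl (f := fun y => v y - φ (-y)) ?_
      simpa using hm)
    rw [deriv_refl] at h1
    simpa using h1
  have key : ∀ x y, x < y → |v y - v x| ≤ R * |y - x| := by
    intro x y hxy
    have h1 := lip_half hv h hxy
    have h2 := lip_half (hv.comp continuous_neg) h' (neg_lt_neg hxy)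
    simp only [Function.comp_apply, neg_neg] at h2
    rw [abs_of_pos (by linarith : 0 < y - x), abs_le]
    constructor <;> linarith
  refine LipschitzWith.of_dist_le_mul fun x y => ?_
  rw [Real.dist_eq, Real.dist_eq]
  rcases lt_trichotomy x y with hxy | hxy | hxy
  · rw [abs_sub_comm, abs_sub_comm x]; exact key x y hxy
  · subst hxy; simp
  · exact key y x hxy

theorem visc_lip (D : Dat a H phat κ) {v : ℝ → ℝ} (hv : Continuous v) (hs : ViscSolOn a H lam univ v) :
    ∃ L : NNReal, LipschitzWith L v := by
  obtain ⟨R, hR, c, hc, hco⟩ := D.Hco lam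
  exact ⟨_, lip_full hv (by linarith : 0 ≤ R) fun φ hφ x0 hm => lower_slope D hv hs hR hc hco hφ hm⟩

theorem quad_ctr (x0 p b K : ℝ) :
    ContDiff ℝ 2 (fun x : ℝ => b + p * (x - x0) + K / 2 * (x - x0) ^ 2) ∧
    (∀ x, deriv (fun x : ℝ => b + p * (x - x0) + K / 2 * (x - x0) ^ 2) x = p + K * (x - x0)) ∧
    (∀ x, deriv (deriv (fun x : ℝ => b + p * (x - x0) + K / 2 * (x - x0) ^ 2)) x = K) := by
  have h1 : ∀ x, deriv (fun x : ℝ => b + p * (x - x0) + K / 2 * (x - x0) ^ 2) x = p + K * (x - x0) := by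
    intro x
    have h2 : HasDerivAt (fun x : ℝ => x - x0) 1 x := (hasDerivAt_id x).sub_const x0
    have h3 := ((h2.const_mul p).const_add b).fun_add ((h2.pow 2).const_mul (K / 2))
    refine h3.deriv.trans ?_
    simp; ring
  refine ⟨by fun_prop, h1, ?_⟩
  intro x
  rw [show deriv (fun x : ℝ => b + p * (x - x0) + K / 2 * (x - x0) ^ 2) = fun x => p + K * (x - x0) from funext h1]
  have h2 : HasDerivAt (fun x : ℝ => x - x0) 1 x := (hasDerivAt_id x).sub_const x0
  refine ((h2.const_mul K).const_add p).deriv.trans ?_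
  ring

theorem resc_super {a : ℝ → ℝ} {H : ℝ → ℝ → ℝ} (Hc : Continuous (fun z : ℝ × ℝ => H z.1 z.2))
    {κ : ℝ} (ha0 : ∀ x, 0 ≤ a x) (haq : ∀ x y, a y = 0 → a x ≤ κ ^ 2 * (x - y) ^ 2)
    {u : ℝ → ℝ} (hu : Continuous u) (hs : ViscSuperOn a H lam univ u) {x0 p : ℝ} (hz : a x0 = 0)
    (hd : HasDerivAt u p x0) : H x0 p ≤ lam := by
  by_contra hcon
  push Not at hcon
  set s := (H x0 p - lam) / 2 with hsd
  have hs0 : 0 < s := by rw [hsd]; linarith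
  have h1 : ∀ᶠ z in 𝓝 (x0, p), lam + s < H z.1 z.2 :=
    (Hc.tendsto (x0, p)).eventually (lt_mem_nhds (by simp only; linarith))
  obtain ⟨δ, hδ, hδH⟩ := Metric.eventually_nhds_iff.1 h1
  set θ := δ / 4 with hθ
  have hθ0 : 0 < θ := by rw [hθ]; linarith
  have h2 := (hasDerivAt_iff_isLittleO.1 hd).bound (half_pos hθ0)
  obtain ⟨ε1, hε1, hε1'⟩ := Metric.eventually_nhds_iff.1 h2
  obtain ⟨e, he0, he1, he2, he3⟩ : ∃ e, 0 < e ∧ e < δ ∧ e < ε1 ∧ 2 * θ * κ ^ 2 * e < s := by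
    have hB : 0 < 2 * θ * κ ^ 2 + 1 := by positivity
    refine ⟨min (min (δ / 2) (ε1 / 2)) (s / (2 * θ * κ ^ 2 + 1)), by positivity, ?_, ?_, ?_⟩
    · have := (min_le_left (min (δ / 2) (ε1 / 2)) (s / (2 * θ * κ ^ 2 + 1))).trans (min_le_left _ _)
      linarith
    · have := (min_le_left (min (δ / 2) (ε1 / 2)) (s / (2 * θ * κ ^ 2 + 1))).trans (min_le_right _ _)
      linarith
    · have h3 := min_le_right (min (δ / 2) (ε1 / 2)) (s / (2 * θ * κ ^ 2 + 1))
      rw [le_div_iff₀ hB] at h3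
      have h4 : 0 < min (min (δ / 2) (ε1 / 2)) (s / (2 * θ * κ ^ 2 + 1)) := by positivity
      nlinarith
  set K := - (2 * θ / e) with hK
  have hKe : K * e = - (2 * θ) := by rw [hK]; field_simp
  obtain ⟨q1, q2, q3⟩ := quad_ctr x0 p (u x0) K
  set φ : ℝ → ℝ := fun x : ℝ => u x0 + p * (x - x0) + K / 2 * (x - x0) ^ 2 with hφ
  set g : ℝ → ℝ := fun x => u x - φ x with hg
  have hgc : ContinuousOn g (Icc (x0 - e) (x0 + e)) := (hu.sub q1.continuous).continuousOn
  have hg0 : g x0 = 0 := by simp [hg, hφ]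
  have hend : ∀ y, |y - x0| = e → 0 < g y := by
    intro y hy
    have h3 := hε1' (show dist y x0 < ε1 by rw [Real.dist_eq]; linarith)
    simp only [Real.norm_eq_abs, smul_eq_mul, hy] at h3
    have h4 := (abs_le.1 h3).1
    have h5 : g y = u y - u x0 - (y - x0) * p - K / 2 * (y - x0) ^ 2 := by simp only [hg, hφ]; ring
    have h6 : (y - x0) ^ 2 = e * e := by rw [← sq_abs, hy]; ring
    rw [h5, h6]
    nlinarith
  obtain ⟨q, hq, hqm⟩ := isCompact_Icc.exists_isMinOn (nonempty_Icc.2 (by linarith)) hgc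
  have hgq : g q ≤ g x0 := hqm ⟨by linarith, by linarith⟩
  have hqx : x0 - e < q := lt_of_le_of_ne hq.1 (by
    rintro rfl; have := hend (x0 - e) (by simp [abs_of_pos he0]); linarith)
  have hqy : q < x0 + e := lt_of_le_of_ne hq.2 (by
    rintro rfl; have := hend (x0 + e) (by simp [abs_of_pos he0]); linarith)
  have h7 := hs φ q1 q (mem_univ _) (hqm.isLocalMin (Icc_mem_nhds hqx hqy))
  rw [q3, q2] at h7
  have hqe : |q - x0| < e := by rw [abs_lt]; constructor <;> linarith
  have h8 := hδH (show dist (q, p + K * (q - x0)) (x0, p) < δ by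
    rw [Prod.dist_eq, max_lt_iff, Real.dist_eq, Real.dist_eq]
    refine ⟨by simp only; linarith, ?_⟩
    simp only
    rw [show p + K * (q - x0) - p = K * (q - x0) by ring, abs_mul]
    have : |K| * e = 2 * θ := by
      have : |K| * e = |K * e| := by rw [abs_mul, abs_of_pos he0]
      rw [this, hKe, abs_neg, abs_of_pos (by linarith)]
    have h9 : |K| * |q - x0| ≤ |K| * e := mul_le_mul_of_nonneg_left hqe.le (abs_nonneg _)
    linarith)
  simp only at h8
  have h10 := haq q x0 hz
  have h11 : (q - x0) ^ 2 ≤ e ^ 2 := by rw [← sq_abs]; gcongr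
  have h12 : a q ≤ κ ^ 2 * e ^ 2 := h10.trans (mul_le_mul_of_nonneg_left h11 (sq_nonneg κ))
  have hK0 : K ≤ 0 := by rw [hK]; have : 0 < 2 * θ / e := by positivity
                         linarith
  have h13 : a q * K ≥ κ ^ 2 * e ^ 2 * K := mul_le_mul_of_nonpos_right h12 hK0
  have h14 : κ ^ 2 * e ^ 2 * K = - (2 * θ * κ ^ 2 * e) := by linear_combination κ ^ 2 * e * hKe
  linarith

theorem resc (D : Dat a H phat κ) {u : ℝ → ℝ} (hu : Continuous u) (hs : ViscSolOn a H lam univ u)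
    {x0 p : ℝ} (hz : a x0 = 0) (hd : HasDerivAt u p x0) : H x0 p = lam := by
  refine le_antisymm (resc_super D.Hc D.a0 D.aq hu hs.2 hz hd) ?_
  have h1 : ViscSuperOn a (fun x p => - H x (-p)) (-lam) univ (fun x => - u x) := by
    intro φ hφ x1 _ hm
    have h2 := hs.1 (fun y => - φ y) hφ.neg x1 (mem_univ _) (by
      filter_upwards [hm] with y hy; linarith)
    rw [show deriv (fun y => - φ y) = fun y => - deriv φ y from funext fun y => deriv.fun_neg,
      deriv.fun_neg] at h2
    linarith
  have h3 := resc_super (H := fun x p => - H x (-p)) (κ := κ)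
    (D.Hc.comp (continuous_fst.prodMk continuous_snd.neg)).neg D.a0 D.aq hu.neg h1 hz hd.fun_neg
  simp only [neg_neg] at h3
  linarith

theorem Dat.min_le (D : Dat a H phat κ) (x q : ℝ) : H x (phat x) ≤ H x q := by
  rcases lt_trichotomy q (phat x) with h | h | h
  · exact (D.Hdec x q _ h le_rfl).le
  · rw [h]
  · exact (D.Hinc x _ q le_rfl h).le

theorem phat_le (D : Dat a H phat κ) {w : ℝ → ℝ} {L : NNReal} (hw : LipschitzWith L w)
    (hs : ViscSolOn a H lam univ w) {x0 : ℝ} (hz : a x0 = 0) : H x0 (phat x0) ≤ lam := by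
  by_contra hcon
  push Not at hcon
  set s := (H x0 (phat x0) - lam) / 2 with hsd
  have hs0 : 0 < s := by rw [hsd]; linarith
  have h1 : ∀ᶠ x in 𝓝 x0, ∀ q ∈ Icc (-(L:ℝ)) L, lam + s < H x q := by
    refine isCompact_Icc.eventually_forall_of_forall_eventually (fun q _ => ?_)
    refine (D.Hc.tendsto (x0, q)).eventually (lt_mem_nhds ?_)
    have := D.min_le x0 q
    simp only; linarith
  obtain ⟨δ, hδ, hδH⟩ := Metric.eventually_nhds_iff.1 h1
  set θ := (L : ℝ) + 1 with hθ
  have hL0 : (0:ℝ) ≤ L := L.2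
  have hθ0 : 0 < θ := by rw [hθ]; linarith
  obtain ⟨e, he0, he1, he3⟩ : ∃ e, 0 < e ∧ e < δ ∧ 2 * θ * κ ^ 2 * e < s := by
    have hB : 0 < 2 * θ * κ ^ 2 + 1 := by positivity
    refine ⟨min (δ / 2) (s / (2 * θ * κ ^ 2 + 1)), by positivity, ?_, ?_⟩
    · have := (min_le_left (δ / 2) (s / (2 * θ * κ ^ 2 + 1)))
      linarith
    · have h3 := min_le_right (δ / 2) (s / (2 * θ * κ ^ 2 + 1))
      rw [le_div_iff₀ hB] at h3
      have h4 : 0 < min (δ / 2) (s / (2 * θ * κ ^ 2 + 1)) := by positivity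
      nlinarith
  set K := - (2 * θ / e) with hK
  have hKe : K * e = - (2 * θ) := by rw [hK]; field_simp
  obtain ⟨q1, q2, q3⟩ := quad_ctr x0 0 (w x0) K
  set φ : ℝ → ℝ := fun x : ℝ => w x0 + 0 * (x - x0) + K / 2 * (x - x0) ^ 2 with hφ
  set g : ℝ → ℝ := fun x => w x - φ x with hg
  have hlip : ∀ x y, |w y - w x| ≤ L * |y - x| := fun x y => by
    have := hw.dist_le_mul y x
    rwa [Real.dist_eq, Real.dist_eq] at this
  have hgc : ContinuousOn g (Icc (x0 - e) (x0 + e)) := (hw.continuous.sub q1.continuous).continuousOn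
  have hg0 : g x0 = 0 := by simp [hg, hφ]
  have hend : ∀ y, |y - x0| = e → 0 < g y := by
    intro y hy
    have h3 := hlip x0 y
    rw [hy] at h3
    have h4 := (abs_le.1 h3).1
    have h5 : g y = w y - w x0 - K / 2 * (y - x0) ^ 2 := by simp only [hg, hφ]; ring
    have h6 : (y - x0) ^ 2 = e * e := by rw [← sq_abs, hy]; ring
    rw [h5, h6]
    nlinarith
  obtain ⟨q, hq, hqm⟩ := isCompact_Icc.exists_isMinOn (nonempty_Icc.2 (by linarith)) hgc
  have hgq : g q ≤ g x0 := hqm ⟨by linarith, by linarith⟩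
  have hqx : x0 - e < q := lt_of_le_of_ne hq.1 (by
    rintro rfl; have := hend (x0 - e) (by simp [abs_of_pos he0]); linarith)
  have hqy : q < x0 + e := lt_of_le_of_ne hq.2 (by
    rintro rfl; have := hend (x0 + e) (by simp [abs_of_pos he0]); linarith)
  have hloc := hqm.isLocalMin (Icc_mem_nhds hqx hqy)
  have h7 := hs.2 φ q1 q (mem_univ _) hloc
  have h8 := test_slope' (M := L) (q1.differentiable (by norm_num) q).hasDerivAt
    (Eventually.of_forall fun y => hlip q y) hloc
  rw [q3] at h7
  have hqe : |q - x0| < e := by rw [abs_lt]; constructor <;> linarith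
  have h9 := hδH (show dist q x0 < δ by rw [Real.dist_eq]; linarith) _ (abs_le.1 h8)
  have h10 := D.aq q x0 hz
  have h11 : (q - x0) ^ 2 ≤ e ^ 2 := by rw [← sq_abs]; gcongr
  have h12 : a q ≤ κ ^ 2 * e ^ 2 := h10.trans (mul_le_mul_of_nonneg_left h11 (sq_nonneg κ))
  have hK0 : K ≤ 0 := by rw [hK]; have : 0 < 2 * θ / e := by positivity
                         linarith
  have h13 : a q * K ≥ κ ^ 2 * e ^ 2 * K := mul_le_mul_of_nonpos_right h12 hK0
  have h14 : κ ^ 2 * e ^ 2 * K = - (2 * θ * κ ^ 2 * e) := by linear_combination κ ^ 2 * e * hKe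
  linarith

end reg2
section core
variable {a : ℝ → ℝ} {H : ℝ → ℝ → ℝ} {phat : ℝ → ℝ} {κ lam lam0 l r : ℝ}

theorem Comp.uniq {l' r' x : ℝ} (h : Comp a l r) (h' : Comp a l' r') (h1 : l < x) (h2 : x < r)
    (h1' : l' < x) (h2' : x < r') : l = l' ∧ r = r' := by
  constructor
  · rcases lt_trichotomy l l' with h3 | h3 | h3
    · have := h.pos l' h3 (by linarith); linarith [h'.al]
    · exact h3
    · have := h'.pos l h3 (by linarith); linarith [h.al]
  · rcases lt_trichotomy r r' with h3 | h3 | h3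
    · have := h'.pos r (by linarith) h3; linarith [h.ar]
    · exact h3
    · have := h.pos r' (by linarith) h3; linarith [h'.ar]

theorem exists_g (D : Dat a H phat κ) (hlam : lam0 < lam) {w' P : ℝ → ℝ}
    (hw : ∀ l r, Comp a l r → Sol a H lam0 w' l r) {R : ℝ} (hR : ∀ x, 0 < a x → |w' x| ≤ R) :
    ∃ g : ℝ → ℝ, (∀ x, a x = 0 → g x = P x) ∧ ∀ l r, Comp a l r → Sol a H lam g l r ∧
      (∃ M, ∀ x, l < x → x < r → |g x| ≤ M) ∧ ∀ x, l < x → x < r → w' x ≤ g x := by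
  classical
  have h1 : ∀ z : ℝ × ℝ, ∃ f : ℝ → ℝ, Comp a z.1 z.2 → Sol a H lam f z.1 z.2 ∧
      (∃ M, ∀ x, z.1 < x → x < z.2 → |f x| ≤ M) ∧ ∀ x, z.1 < x → x < z.2 → w' x ≤ f x := by
    intro z
    by_cases hz : Comp a z.1 z.2
    · obtain ⟨f, hf⟩ := Sol.exists_above D hz hlam (hw _ _ hz) (fun x h1 h2 => hR x (hz.pos x h1 h2))
      exact ⟨f, fun _ => hf⟩
    · exact ⟨0, fun h => absurd h hz⟩
  choose F hF using h1
  have h2 : ∀ x, ∃ z : ℝ × ℝ, 0 < a x → z.1 < x ∧ x < z.2 ∧ Comp a z.1 z.2 := by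
    intro x
    by_cases hx : 0 < a x
    · obtain ⟨l, r, h⟩ := D.toComp hx
      exact ⟨(l, r), fun _ => h⟩
    · exact ⟨(0, 0), fun h => absurd h hx⟩
  choose Z hZ using h2
  refine ⟨fun x => if 0 < a x then F (Z x) x else P x, ?_, ?_⟩
  · intro x hx; simp [hx]
  · intro l r hC
    obtain ⟨hS, hM, hle⟩ := hF (l, r) hC
    have heq : ∀ x, l < x → x < r → (if 0 < a x then F (Z x) x else P x) = F (l, r) x := by
      intro x h1 h2
      have hp := hC.pos x h1 h2
      rw [if_pos hp]
      obtain ⟨h3, h4, h5⟩ := hZ x hp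
      obtain ⟨e1, e2⟩ := h5.uniq hC h3 h4 h1 h2
      rw [show Z x = (l, r) from Prod.ext e1 e2]
    refine ⟨?_, ?_, ?_⟩
    · intro x h1 h2
      have := hS x h1 h2
      simp only [heq x h1 h2]
      refine this.congr_of_eventuallyEq ?_
      filter_upwards [Ioo_mem_nhds h1 h2] with y hy
      exact heq y hy.1 hy.2
    · obtain ⟨M, hM⟩ := hM
      exact ⟨M, fun x h1 h2 => by simp only [heq x h1 h2]; exact hM x h1 h2⟩
    · intro x h1 h2
      simp only [heq x h1 h2]; exact hle x h1 h2

theorem g_cont (D : Dat a H phat κ) {g P : ℝ → ℝ} (hgP : ∀ x, a x = 0 → g x = P x)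
    (hP : ∀ x, a x = 0 → phat x < P x ∧ H x (P x) = lam)
    (hS : ∀ l r, Comp a l r → Sol a H lam g l r)
    (hL : ∀ l r, Comp a l r → Tendsto g (𝓝[>] l) (𝓝 (P l)))
    (hRt : ∀ l r, Comp a l r → Tendsto g (𝓝[<] r) (𝓝 (P r))) : Continuous g := by
  rw [continuous_iff_continuousAt]
  intro x0
  rcases (D.a0 x0).eq_or_lt with h0 | h0
  swap
  · obtain ⟨l, r, h1, h2, hC⟩ := D.toComp h0
    exact (hS l r hC x0 h1 h2).continuousAt
  have hz := h0.symm
  obtain ⟨hp1, hp2⟩ := hP x0 hz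
  set p0 := P x0 with hp0
  rw [ContinuousAt, hgP x0 hz, Metric.tendsto_nhds]
  intro ε0 hε0
  obtain ⟨ε, hε, hε1, hε2⟩ : ∃ ε, 0 < ε ∧ ε < ε0 ∧ phat x0 ≤ p0 - ε := by
    refine ⟨min (ε0 / 2) (p0 - phat x0), lt_min (by linarith) (by linarith), ?_, ?_⟩
    · have := min_le_left (ε0 / 2) (p0 - phat x0); linarith
    · have := min_le_right (ε0 / 2) (p0 - phat x0); linarith
  have e1 : ∀ᶠ x in 𝓝 x0, lam < H x (p0 + ε) := by
    have hc : Continuous (fun x => H x (p0 + ε)) := D.Hc.comp (continuous_id.prodMk continuous_const)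
    refine (hc.tendsto x0).eventually (lt_mem_nhds ?_)
    have := D.Hinc x0 p0 (p0 + ε) hp1.le (by linarith)
    linarith
  have e2 : ∀ᶠ x in 𝓝 x0, H x (p0 - ε) < lam := by
    have hc : Continuous (fun x => H x (p0 - ε)) := D.Hc.comp (continuous_id.prodMk continuous_const)
    refine (hc.tendsto x0).eventually (gt_mem_nhds ?_)
    have := D.Hinc x0 (p0 - ε) p0 hε2 (by linarith)
    linarith
  obtain ⟨δ, hδ, hb⟩ := Metric.eventually_nhds_iff.1 (e1.and e2)
  have hb' : ∀ x, x0 - δ < x → x < x0 + δ → lam < H x (p0 + ε) ∧ H x (p0 - ε) < lam := fun x h1 h2 =>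
    hb (by rw [Real.dist_eq, abs_lt]; constructor <;> linarith)
  have hZ : ∀ x, x0 - δ < x → x < x0 + δ → a x = 0 → p0 - ε < P x ∧ P x < p0 + ε := by
    intro x h1 h2 hx
    obtain ⟨b1, b2⟩ := hb' x h1 h2
    obtain ⟨c1, c2⟩ := hP x hx
    constructor
    · by_contra hcon
      push Not at hcon
      rcases hcon.eq_or_lt with h | h
      · rw [h] at c2; linarith
      · have := D.Hinc x _ _ c1.le h; linarith
    · by_contra hcon
      push Not at hcon
      have h3 : phat x < p0 + ε := by
        by_contra h4
        push Not at h4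
        have := D.Hdec x (p0 - ε) (p0 + ε) (by linarith) h4
        linarith
      rcases hcon.eq_or_lt with h | h
      · rw [← h] at c2; linarith
      · have := D.Hinc x _ _ h3.le h; linarith
  have key : ∀ z x, x0 - δ < z → z ≤ x → x < x0 + δ → a z = 0 → p0 - ε ≤ g x ∧ g x ≤ p0 + ε := by
    intro z x h1 h2 h3 hz
    rcases (D.a0 x).eq_or_lt with hx | hx
    · have := hZ x (by linarith) h3 hx.symm
      rw [hgP x hx.symm]
      exact ⟨this.1.le, this.2.le⟩
    · obtain ⟨l, r, h4, h5, hC⟩ := D.toComp hx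
      have hlz : z ≤ l := by
        by_contra hcon
        push Not at hcon
        have := hC.pos z hcon (by linarith)
        linarith
      have hl := hZ l (by linarith) (by linarith) hC.al
      have h6 : ∀ᶠ t in 𝓝[>] l, g t ∈ Ioo (p0 - ε) (p0 + ε) :=
        (hL l r hC).eventually (Ioo_mem_nhds hl.1 hl.2)
      have h7 : ∀ᶠ t in 𝓝[>] l, t ∈ Ioo l x := Ioo_mem_nhdsGT h4
      obtain ⟨t, ht1, ht2⟩ := (h6.and h7).exists
      constructor
      · refine (hS l r hC).ge_of hC.pos ht2.1 ht2.2.le h5 (fun y hy => ?_) ht1.1.le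
        exact (hb' y (by linarith [hy.1, ht2.1]) (by linarith [hy.2])).2
      · refine (hS l r hC).le_of hC.pos ht2.1 ht2.2.le h5 (fun y hy => ?_) ht1.2.le
        exact (hb' y (by linarith [hy.1, ht2.1]) (by linarith [hy.2])).1
  have hfin : ∀ x, p0 - ε ≤ g x ∧ g x ≤ p0 + ε → dist (g x) p0 < ε0 := by
    intro x hx
    rw [Real.dist_eq, abs_lt]
    constructor <;> linarith [hx.1, hx.2]
  rw [← nhdsLT_sup_nhdsGE, eventually_sup]
  constructor
  · by_cases hex : ∃ z, x0 - δ < z ∧ z < x0 ∧ a z = 0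
    · obtain ⟨z, h1, h2, h3⟩ := hex
      filter_upwards [Ioo_mem_nhdsLT h2] with x hx
      exact hfin x (key z x h1 hx.1.le (by linarith [hx.2]) h3)
    · push Not at hex
      have hy : 0 < a (x0 - δ / 2) := lt_of_le_of_ne (D.a0 _) (Ne.symm (hex _ (by linarith) (by linarith)))
      obtain ⟨l, r, h4, h5, hC⟩ := D.toComp hy
      have hr : r = x0 := by
        rcases lt_trichotomy r x0 with h | h | h
        · exact absurd hC.ar (hex r (by linarith) h)
        · exact h
        · have := hC.pos x0 (by linarith) h
          linarith
      have := hRt l r hC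
      rw [hr] at this
      exact (Metric.tendsto_nhds.1 this) ε0 hε0
  · have : ∀ᶠ x in 𝓝[≥] x0, x ∈ Ico x0 (x0 + δ) := Ico_mem_nhdsGE (by linarith)
    filter_upwards [this] with x hx
    exact hfin x (key x0 x (by linarith) hx.1 hx.2 hz)

end core
section core2
variable {a : ℝ → ℝ} {H : ℝ → ℝ → ℝ} {phat : ℝ → ℝ} {κ lam lam0 l r : ℝ}

theorem second_min {f : ℝ → ℝ} {x : ℝ} (hf : ContinuousAt f x) (h : IsLocalMin f x) :
    0 ≤ deriv (deriv f) x := by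
  by_contra hcon
  push Not at hcon
  have h1 := isLocalMax_of_deriv_deriv_neg hcon h.deriv_eq_zero hf
  have h2 : f =ᶠ[𝓝 x] fun _ => f x := by
    filter_upwards [h, h1] with y hy hy'
    exact le_antisymm hy' hy
  have h3 := h2.deriv.deriv_eq
  rw [h3] at hcon
  simp at hcon

theorem second_max {f : ℝ → ℝ} {x : ℝ} (hf : ContinuousAt f x) (h : IsLocalMax f x) :
    deriv (deriv f) x ≤ 0 := by
  have := second_min hf.neg h.neg
  rw [show deriv (-f) = fun y => - deriv f y from funext fun y => deriv.neg, deriv.fun_neg] at this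
  linarith

theorem deriv_le_on (D : Dat a H phat κ) {w v : ℝ → ℝ} (hw : Continuous w) (hws : ViscSolOn a H lam0 univ w)
    (hv : Continuous v) (hvs : ViscSolOn a H lam univ v)
    (hae : ∀ᵐ x ∂(volume : Measure ℝ), deriv w x < deriv v x) {x : ℝ} (hx : 0 < a x) :
    deriv w x ≤ deriv v x := by
  by_contra hcon
  push Not at hcon
  have h1 : ∀ᶠ y in 𝓝 x, deriv v y < deriv w y :=
    (reg D hv hvs hx).2.continuousAt.eventually_lt (reg D hw hws hx).2.continuousAt hcon
  have h2 := (mem_closure_iff_frequently).1 ((Measure.dense_of_ae hae) x)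
  obtain ⟨y, hy1, hy2⟩ := (h2.and_eventually h1).exists
  exact lt_asymm hy1 hy2

theorem core (D : Dat a H phat κ) (hlam : lam0 < lam) {w0 P : ℝ → ℝ} (hw0 : ∃ L : NNReal, LipschitzWith L w0)
    (hws0 : ViscSolOn a H lam0 univ w0)
    (hP0 : ∀ x, H x (phat x) < lam → phat x < P x ∧ H x (P x) = lam) :
    ∃ u : ℝ → ℝ,
      Continuous u ∧ ViscSolOn a H lam Set.univ u ∧ u 0 = 0 ∧
      (∀ᵐ x ∂(volume : Measure ℝ), deriv w0 x < deriv u x) ∧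
      ContDiff ℝ 1 u ∧ ContDiffOn ℝ 2 u {x : ℝ | 0 < a x} ∧
      (∀ x : ℝ, a x = 0 → deriv u x = P x) ∧
      (∀ x : ℝ, a x * deriv (deriv u) x + H x (deriv u x) = lam) ∧
      (∀ w v : ℝ → ℝ,
        (∃ L : NNReal, LipschitzWith L w) → ViscSolOn a H lam0 Set.univ w →
        Continuous v → ViscSolOn a H lam Set.univ v → v 0 = 0 →
        (∀ᵐ x ∂(volume : Measure ℝ), deriv w x < deriv v x) → v = u) := by
  have hP : ∀ x, a x = 0 → phat x < P x ∧ H x (P x) = lam := by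
    intro x hx
    obtain ⟨L, hL⟩ := hw0
    exact hP0 x (lt_of_le_of_lt (phat_le D hL hws0 hx) hlam)
  have hbd : ∀ w : ℝ → ℝ, (∃ L : NNReal, LipschitzWith L w) → ∃ R, ∀ x, |deriv w x| ≤ R := by
    rintro w ⟨L, hL⟩
    exact ⟨L, fun x => norm_deriv_le_of_lipschitz hL⟩
  obtain ⟨R0, hR0⟩ := hbd w0 hw0
  have hw0c : Continuous w0 := by obtain ⟨L, hL⟩ := hw0; exact hL.continuous
  obtain ⟨g, hgP, hg⟩ := exists_g D hlam (w' := deriv w0) (P := P)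
    (fun l r hC => sol_of_visc D hw0c hws0 hC) (fun x _ => hR0 x)
  have hlim : ∀ l r, Comp a l r → Tendsto g (𝓝[>] l) (𝓝 (P l)) ∧ Tendsto g (𝓝[<] r) (𝓝 (P r)) := by
    intro l r hC
    obtain ⟨hS, ⟨M, hM⟩, hle⟩ := hg l r hC
    obtain ⟨⟨m, h1, h2, h3⟩, ⟨m', h1', h2', h3'⟩⟩ :=
      hS.lim_plus D hC hlam (sol_of_visc D hw0c hws0 hC) hM (fun x _ _ => hR0 x) hle
    obtain ⟨hl1, hl2⟩ := hP l hC.al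
    obtain ⟨hr1, hr2⟩ := hP r hC.ar
    rw [plus_unique D h3.le hl1.le (h2.trans hl2.symm)] at h1
    rw [plus_unique D h3'.le hr1.le (h2'.trans hr2.symm)] at h1'
    exact ⟨h1, h1'⟩
  have hgc : Continuous g := g_cont D hgP hP (fun l r hC => (hg l r hC).1)
    (fun l r hC => (hlim l r hC).1) (fun l r hC => (hlim l r hC).2)
  have hgd : ∀ x, 0 < a x → HasDerivAt g ((lam - H x (g x)) / a x) x := by
    intro x hx
    obtain ⟨l, r, h1, h2, hC⟩ := D.toComp hx
    exact (hg l r hC).1 x h1 h2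
  have hgw : ∀ x, 0 < a x → deriv w0 x ≤ g x := by
    intro x hx
    obtain ⟨l, r, h1, h2, hC⟩ := D.toComp hx
    exact (hg l r hC).2.2 x h1 h2
  set u : ℝ → ℝ := fun y => ∫ t in (0:ℝ)..y, g t with hu
  have hud : ∀ x, HasDerivAt u (g x) x := fun x => (hgc.integral_hasStrictDerivAt 0 x).hasDerivAt
  have hdu : deriv u = g := funext fun x => (hud x).deriv
  have huc : Continuous u := continuous_iff_continuousAt.2 fun x => (hud x).continuousAt
  have heq : ∀ x : ℝ, a x * deriv g x + H x (g x) = lam := by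
    intro x
    rcases (D.a0 x).eq_or_lt with hx | hx
    · rw [← hx, hgP x hx.symm, (hP x hx.symm).2]; ring
    · rw [(hgd x hx).deriv, mul_div_cancel₀ _ hx.ne']; ring
  have hdd : ∀ φ : ℝ → ℝ, ContDiff ℝ 2 φ → (deriv (fun x => u x - φ x) = fun x => g x - deriv φ x) ∧
      ∀ x, 0 < a x → deriv (deriv (fun x => u x - φ x)) x = deriv g x - deriv (deriv φ) x := by
    intro φ hφ
    have h1 : deriv (fun x => u x - φ x) = fun x => g x - deriv φ x := funext fun x =>
      ((hud x).fun_sub (hφ.differentiable (by norm_num) x).hasDerivAt).deriv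
    refine ⟨h1, fun x hx => ?_⟩
    rw [h1]
    have h2 : ContDiff ℝ 1 (deriv φ) := by
      rw [show (2 : WithTop ℕ∞) = 1 + 1 from by norm_num, contDiff_succ_iff_deriv] at hφ
      exact hφ.2.2
    exact ((hgd x hx).differentiableAt.hasDerivAt.fun_sub (h2.differentiable (by norm_num) x).hasDerivAt).deriv
  have hsol : ViscSolOn a H lam univ u := by
    constructor
    · intro φ hφ x0 _ hm
      obtain ⟨q1, q2⟩ := hdd φ hφ
      have h1 := hm.deriv_eq_zero
      rw [q1] at h1
      have h2 : deriv φ x0 = g x0 := by simp only at h1; linarith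
      have h3 := heq x0
      rw [h2]
      rcases (D.a0 x0).eq_or_lt with hx | hx
      · rw [← hx] at h3 ⊢; linarith
      · have h4 := second_max (huc.sub hφ.continuous).continuousAt hm
        have h5 := q2 x0 hx
        have h6 : deriv (deriv (fun x => u x - φ x)) x0 ≤ 0 := h4
        rw [h5] at h6
        have := mul_le_mul_of_nonneg_left (sub_nonpos.1 h6) hx.le
        linarith
    · intro φ hφ x0 _ hm
      obtain ⟨q1, q2⟩ := hdd φ hφ
      have h1 := hm.deriv_eq_zero
      rw [q1] at h1
      have h2 : deriv φ x0 = g x0 := by simp only at h1; linarith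
      have h3 := heq x0
      rw [h2]
      rcases (D.a0 x0).eq_or_lt with hx | hx
      · rw [← hx] at h3 ⊢; linarith
      · have h4 := second_min (huc.sub hφ.continuous).continuousAt hm
        have h5 := q2 x0 hx
        have h6 : 0 ≤ deriv (deriv (fun x => u x - φ x)) x0 := h4
        rw [h5] at h6
        have := mul_le_mul_of_nonneg_left (sub_nonneg.1 h6) hx.le
        linarith
  refine ⟨u, huc, hsol, by simp [hu], ?_, ?_, ?_, ?_, ?_, ?_⟩
  · obtain ⟨L, hL⟩ := hw0
    filter_upwards [hL.ae_differentiableAt_real] with x hx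
    rw [hdu]
    rcases (D.a0 x).eq_or_lt with h0 | h0
    · have h1 := resc D hw0c hws0 h0.symm hx.hasDerivAt
      obtain ⟨h2, h3⟩ := hP x h0.symm
      rw [hgP x h0.symm]
      by_contra hcon
      push Not at hcon
      rcases hcon.eq_or_lt with h | h
      · rw [← h] at h1; linarith
      · have := D.Hinc x _ _ h2.le h; linarith
    · refine lt_of_le_of_ne (hgw x h0) fun he => ?_
      have h1 : HasDerivAt (fun y => g y - deriv w0 y) _ x :=
        (hgd x h0).fun_sub (reg D hw0c hws0 h0).2
      have h2 : IsLocalMin (fun y => g y - deriv w0 y) x := by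
        filter_upwards [(D.ac.tendsto x).eventually (lt_mem_nhds h0)] with y hy
        have := hgw y hy
        linarith
      have h3 := h2.hasDerivAt_eq_zero h1
      rw [he, ← sub_div, div_eq_zero_iff] at h3
      rcases h3 with h3 | h3 <;> linarith
  · rw [contDiff_one_iff_deriv]
    exact ⟨fun x => (hud x).differentiableAt, by rw [hdu]; exact hgc⟩
  · have hop : IsOpen {x : ℝ | 0 < a x} := isOpen_lt continuous_const D.ac
    rw [show (2 : WithTop ℕ∞) = 1 + 1 from by norm_num, contDiffOn_succ_iff_deriv_of_isOpen hop]
    refine ⟨fun x _ => (hud x).differentiableAt.differentiableWithinAt, by simp, ?_⟩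
    rw [hdu, show (1 : WithTop ℕ∞) = 0 + 1 from by norm_num, contDiffOn_succ_iff_deriv_of_isOpen hop]
    refine ⟨fun x hx => (hgd x hx).differentiableAt.differentiableWithinAt, by simp, ?_⟩
    rw [contDiffOn_zero]
    refine ContinuousOn.congr (f := fun x => (lam - H x (g x)) / a x) ?_ (fun x hx => (hgd x hx).deriv)
    refine ContinuousOn.div (continuousOn_const.sub ?_) D.ac.continuousOn (fun x hx => (show 0 < a x from hx).ne')
    exact (D.Hc.comp (continuous_id.prodMk hgc)).continuousOn
  · intro x hx
    rw [hdu, hgP x hx]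
  · rw [hdu]; exact heq
  · intro w v hw hws hv hvs hv0 hae
    obtain ⟨R, hR⟩ := hbd w hw
    have hvl := visc_lip D hv hvs
    obtain ⟨R', hR'⟩ := hbd v hvl
    obtain ⟨L, hL⟩ := hvl
    have hwc : Continuous w := by obtain ⟨L, hL⟩ := hw; exact hL.continuous
    obtain ⟨Lw, hLw⟩ := hw
    have hvA : ∀ x, 0 < a x → deriv v x = g x := by
      intro x hx
      obtain ⟨l, r, h1, h2, hC⟩ := D.toComp hx
      obtain ⟨hS, ⟨M, hM⟩, hle⟩ := hg l r hC
      have hSv := sol_of_visc D hv hvs hC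
      obtain ⟨⟨m, k1, k2, k3⟩, -⟩ :=
        hSv.lim_plus D hC hlam (sol_of_visc D hwc hws hC) (fun x _ _ => hR' x) (fun x _ _ => hR x)
        (fun x h1 h2 => deriv_le_on D hwc hws hv hvs hae (hC.pos x h1 h2))
      obtain ⟨hl1, hl2⟩ := hP l hC.al
      exact Sol.unique D hC hSv hS (fun x _ _ => hR' x) hM k3 k1 k2 hl1 (hlim l r hC).1 hl2 h1 h2
    have hvae : ∀ᵐ x ∂(volume : Measure ℝ), deriv v x = g x := by
      filter_upwards [hL.ae_differentiableAt_real, hLw.ae_differentiableAt_real, hae] with x h1 h2 h3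
      rcases (D.a0 x).eq_or_lt with h0 | h0
      · have k1 := resc D hv hvs h0.symm h1.hasDerivAt
        have k2 := resc D hwc hws h0.symm h2.hasDerivAt
        obtain ⟨k3, k4⟩ := hP x h0.symm
        rw [hgP x h0.symm]
        exact plus_unique D (plus_of_gt D hlam h3.le k2 k1).le k3.le (k1.trans k4.symm)
      · exact hvA x h0
    funext y
    have hac : AbsolutelyContinuousOnInterval v 0 y :=
      (hL.lipschitzOnWith (s := uIcc 0 y)).absolutelyContinuousOnInterval
    have h1 := hac.integral_deriv_eq_sub
    rw [hv0, sub_zero] at h1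
    rw [← h1]
    simp only [hu]
    refine intervalIntegral.integral_congr_ae ?_
    filter_upwards [hvae] with x hx _
    exact hx

end core2
section final

theorem comp_of (a : ℝ → ℝ) (hc : Continuous a) (h0 : ∀ x, 0 ≤ a x) (hA : CondA1' a) :
    ∀ x, 0 < a x → ∃ l r, l < x ∧ x < r ∧ a l = 0 ∧ a r = 0 ∧ ∀ y, l < y → y < r → 0 < a y := by
  intro x hx
  have hb := hA.2 x hx
  have hl : ∃ y, y ≤ x ∧ a y = 0 := by
    by_contra hcon
    push Not at hcon
    have h1 : Iic x ⊆ {y | 0 < a y} := fun y hy => lt_of_le_of_ne (h0 y) (Ne.symm (hcon y hy))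
    have h2 := isPreconnected_Iic.subset_connectedComponentIn (x := x) self_mem_Iic h1
    exact not_bddBelow_Iic x (hb.subset h2).bddBelow
  have hr : ∃ y, x ≤ y ∧ a y = 0 := by
    by_contra hcon
    push Not at hcon
    have h1 : Ici x ⊆ {y | 0 < a y} := fun y hy => lt_of_le_of_ne (h0 y) (Ne.symm (hcon y hy))
    have h2 := isPreconnected_Ici.subset_connectedComponentIn (x := x) self_mem_Ici h1
    exact not_bddAbove_Ici x (hb.subset h2).bddAbove
  have cl : IsClosed {y | y ≤ x ∧ a y = 0} := isClosed_Iic.inter (isClosed_eq hc continuous_const)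
  have cr : IsClosed {y | x ≤ y ∧ a y = 0} := isClosed_Ici.inter (isClosed_eq hc continuous_const)
  have bl : BddAbove {y | y ≤ x ∧ a y = 0} := ⟨x, fun y hy => hy.1⟩
  have br : BddBelow {y | x ≤ y ∧ a y = 0} := ⟨x, fun y hy => hy.1⟩
  have ml := cl.csSup_mem hl bl
  have mr := cr.csInf_mem hr br
  refine ⟨_, _, lt_of_le_of_ne ml.1 ?_, lt_of_le_of_ne mr.1 ?_, ml.2, mr.2, ?_⟩
  · intro h; have := ml.2; rw [h] at this; linarith
  · intro h; have := mr.2; rw [← h] at this; linarith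
  · intro y h1 h2
    refine lt_of_le_of_ne (h0 y) fun h => ?_
    rcases le_total y x with h3 | h3
    · exact absurd (le_csSup bl ⟨h3, h.symm⟩) (not_le.2 h1)
    · exact absurd (csInf_le br ⟨h3, h.symm⟩) (not_le.2 h2)

theorem mkDat (a : ℝ → ℝ) (H : ℝ → ℝ → ℝ) (phat : ℝ → ℝ) (κ α0 α1 γ η : ℝ)
    (harange : ∀ x, a x ∈ Set.Icc (0:ℝ) 1)
    (hκ : 0 < κ) (hA2 : ∀ x y : ℝ, |Real.sqrt (a x) - Real.sqrt (a y)| ≤ κ * |x - y|)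
    (hA1' : CondA1' a)
    (hα0 : 0 < α0) (hα1 : 0 < α1) (hγ : 2 < γ) (hη : 0 < η)
    (hH : HamSqc α0 α1 γ η H phat) : Dat a H phat κ := by
  obtain ⟨⟨H1, H1', H2, H3⟩, -, -, Hd, Hi⟩ := hH
  have ha0 : ∀ x, 0 ≤ a x := fun x => (harange x).1
  have hsc : Continuous (fun x => Real.sqrt (a x)) := by
    refine LipschitzWith.continuous (K := ⟨κ, hκ.le⟩) (LipschitzWith.of_dist_le_mul fun x y => ?_)
    rw [Real.dist_eq, Real.dist_eq]
    exact hA2 x y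
  have hac : Continuous a := by
    have : Continuous (fun x => Real.sqrt (a x) ^ 2) := hsc.pow 2
    have h2 : (fun x => Real.sqrt (a x) ^ 2) = a := funext fun x => Real.sq_sqrt (ha0 x)
    rwa [h2] at this
  refine ⟨ha0, hac, hκ, ?_, comp_of a hac ha0 hA1', ?_, ?_, ?_, ?_, ?_, ?_, ?_⟩
  · intro x y hy
    have h1 := hA2 x y
    rw [hy, Real.sqrt_zero, sub_zero, abs_of_nonneg (Real.sqrt_nonneg _)] at h1
    calc a x = Real.sqrt (a x) ^ 2 := (Real.sq_sqrt (ha0 x)).symm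
      _ ≤ (κ * |x - y|) ^ 2 := pow_le_pow_left₀ (Real.sqrt_nonneg _) h1 2
      _ = κ ^ 2 * (x - y) ^ 2 := by rw [mul_pow, sq_abs]
  · rw [continuous_iff_continuousAt]
    rintro ⟨x0, p0⟩
    rw [ContinuousAt, tendsto_iff_dist_tendsto_zero]
    have hcont : Continuous (fun z : ℝ × ℝ => α1 * (|z.2| + |p0| + 1) ^ (γ - 1) * |z.2 - p0|
        + α1 * (|p0| ^ γ + 1) * |z.1 - x0|) := by
      refine Continuous.add (Continuous.mul (continuous_const.mul ?_) (by fun_prop)) (by fun_prop)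
      exact Continuous.rpow_const (by fun_prop) (fun _ => Or.inr (by linarith))
    have ht := hcont.tendsto (x0, p0)
    simp only [sub_self, abs_zero, mul_zero, add_zero] at ht
    refine squeeze_zero (fun _ => dist_nonneg) (fun z => ?_) ht
    rw [Real.dist_eq]
    have e : H z.1 z.2 - H x0 p0 = (H z.1 z.2 - H z.1 p0) + (H z.1 p0 - H x0 p0) := by ring
    simp only
    rw [e]
    exact (abs_add_le _ _).trans (add_le_add (H2 _ _ _) (H3 _ _ _))
  · intro M
    refine ⟨α1 * (|M| + |M| + 1) ^ (γ - 1), by positivity, fun x p q hp hq => (H2 x p q).trans ?_⟩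
    have := le_abs_self M
    refine mul_le_mul_of_nonneg_right (mul_le_mul_of_nonneg_left ?_ hα1.le) (abs_nonneg _)
    exact Real.rpow_le_rpow (by positivity) (by linarith) (by linarith)
  · refine ⟨1 / α0, by positivity, fun x p => ?_⟩
    have h1 := H1 x p
    have : 0 ≤ α0 * |p| ^ γ := by positivity
    linarith
  · intro M
    refine ⟨α1 * (|M| ^ γ + 1), by positivity, fun x p hp => (H1' x p).trans ?_⟩
    have := le_abs_self M
    have := Real.rpow_le_rpow (abs_nonneg p) (by linarith : |p| ≤ |M|) (by linarith : 0 ≤ γ)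
    exact mul_le_mul_of_nonneg_left (by linarith) hα1.le
  · intro lam
    set B := 2 * (1 / α0 + |lam|) / α0 with hB
    have hBa : B * α0 = 2 * (1 / α0 + |lam|) := div_mul_cancel₀ _ hα0.ne'
    refine ⟨max 1 B, le_max_left _ _, α0 / 2, by linarith, fun x p hp => ?_⟩
    have h1 : 1 ≤ |p| := (le_max_left _ _).trans hp
    have h2 : B ≤ |p| := (le_max_right _ _).trans hp
    have h3 : p ^ 2 ≤ |p| ^ γ := by
      rw [← sq_abs, ← Real.rpow_natCast]
      exact Real.rpow_le_rpow_of_exponent_le h1 (by push_cast; linarith)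
    have h4 : |p| ≤ p ^ 2 := by rw [← sq_abs]; nlinarith
    have h5 := H1 x p
    have h6 := mul_le_mul_of_nonneg_left h3 hα0.le
    have h7 : B * α0 ≤ p ^ 2 * α0 := mul_le_mul_of_nonneg_right (h2.trans h4) hα0.le
    have := le_abs_self lam
    linarith
  · intro x p1 p2 h1 h2
    have := Hd x p1 p2 h1 h2
    have h3 : 0 < η * |p1 - p2| := mul_pos hη (abs_pos.2 (by linarith))
    linarith
  · intro x p1 p2 h1 h2
    have := Hi x p1 p2 h1 h2
    have h3 : 0 < η * |p1 - p2| := mul_pos hη (abs_pos.2 (by linarith))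
    linarith

theorem pp_of {f : ℝ → ℝ} (hf : Continuous f) {lam p0 m M : ℝ} (h : {p : ℝ | f p ≤ lam} = Icc m M)
    (hp : f p0 < lam) : (p0 < M ∧ f M = lam) ∧ (m < p0 ∧ f m = lam) := by
  have h0 : p0 ∈ Icc m M := by rw [← h]; exact hp.le
  have hM : M ∈ {p : ℝ | f p ≤ lam} := by rw [h]; exact ⟨h0.1.trans h0.2, le_rfl⟩
  have hm : m ∈ {p : ℝ | f p ≤ lam} := by rw [h]; exact ⟨le_rfl, h0.1.trans h0.2⟩
  have e1 : f M = lam := by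
    refine le_antisymm hM (not_lt.1 fun hlt => ?_)
    have h1 : ∀ᶠ q in 𝓝[>] M, f q < lam :=
      ((hf.tendsto M).mono_left nhdsWithin_le_nhds).eventually (gt_mem_nhds hlt)
    obtain ⟨q, h2, h3⟩ := (h1.and self_mem_nhdsWithin).exists
    have h4 : q ∈ Icc m M := by rw [← h]; exact h2.le
    exact absurd h4.2 (not_le.2 h3)
  have e2 : f m = lam := by
    refine le_antisymm hm (not_lt.1 fun hlt => ?_)
    have h1 : ∀ᶠ q in 𝓝[<] m, f q < lam :=
      ((hf.tendsto m).mono_left nhdsWithin_le_nhds).eventually (gt_mem_nhds hlt)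
    obtain ⟨q, h2, h3⟩ := (h1.and self_mem_nhdsWithin).exists
    have h4 : q ∈ Icc m M := by rw [← h]; exact h2.le
    exact absurd h4.1 (not_le.2 h3)
  refine ⟨⟨lt_of_le_of_ne h0.2 ?_, e1⟩, ⟨lt_of_le_of_ne h0.1 ?_, e2⟩⟩
  · rintro rfl; linarith
  · rintro rfl; linarith

theorem ae_refl {p : ℝ → Prop} (h : ∀ᵐ x ∂(volume : Measure ℝ), p x) :
    ∀ᵐ x ∂(volume : Measure ℝ), p (-x) :=
  (Measure.measurePreserving_neg (volume : Measure ℝ)).quasiMeasurePreserving.ae h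

theorem lip_refl {w : ℝ → ℝ} (h : ∃ L : NNReal, LipschitzWith L w) :
    ∃ L : NNReal, LipschitzWith L (fun x => w (-x)) := by
  obtain ⟨L, hL⟩ := h
  refine ⟨L, LipschitzWith.of_dist_le_mul fun x y => ?_⟩
  have := hL.dist_le_mul (-x) (-y)
  rwa [dist_neg_neg] at this

end final

/-- Theorem `appC teo existence corrector`: for `lam > λ₀` there are
unique viscosity solutions `u⁺_lam` (resp. `u⁻_lam`) of `a u'' + H(x,u') = lam` with value
`0` at the origin and derivative a.e. above (resp. below) `u'_{λ₀}`; they are `C¹` on `ℝ`,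
`C²` on `A := {a > 0}`, satisfy `(u^±_lam)' = p^±_lam` on `{a = 0}`, solve the equation
classically (pointwise), and do not depend on the choice of the critical solution. -/
theorem statement_15
    (a : ℝ → ℝ) (H : ℝ → ℝ → ℝ) (phat : ℝ → ℝ) (pm pp : ℝ → ℝ → ℝ)
    (κ α0 α1 γ η : ℝ)
    (harange : ∀ x, a x ∈ Set.Icc (0:ℝ) 1)
    (hκ : 0 < κ) (hA2 : ∀ x y : ℝ, |Real.sqrt (a x) - Real.sqrt (a y)| ≤ κ * |x - y|)
    (hA1' : CondA1' a)
    (hα0 : 0 < α0) (hα1 : 0 < α1) (hγ : 2 < γ) (hη : 0 < η)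
    (hH : HamSqc α0 α1 γ η H phat)
    (hp : ∀ lam x : ℝ, H x (phat x) ≤ lam →
      {p : ℝ | H x p ≤ lam} = Set.Icc (pm lam x) (pp lam x))
    (lam0 : ℝ) (hlam0 : lam0 = CriticalValue a H)
    (lam : ℝ) (hlam : lam0 < lam)
    (ulam0 : ℝ → ℝ)
    (hulip : ∃ L : NNReal, LipschitzWith L ulam0)
    (husol : ViscSolOn a H lam0 Set.univ ulam0) :
    (∃ u : ℝ → ℝ,
      Continuous u ∧ ViscSolOn a H lam Set.univ u ∧ u 0 = 0 ∧
      (∀ᵐ x ∂(volume : Measure ℝ), deriv ulam0 x < deriv u x) ∧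
      ContDiff ℝ 1 u ∧ ContDiffOn ℝ 2 u {x : ℝ | 0 < a x} ∧
      (∀ x : ℝ, a x = 0 → deriv u x = pp lam x) ∧
      (∀ x : ℝ, a x * deriv (deriv u) x + H x (deriv u x) = lam) ∧
      (∀ w v : ℝ → ℝ,
        (∃ L : NNReal, LipschitzWith L w) → ViscSolOn a H lam0 Set.univ w →
        Continuous v → ViscSolOn a H lam Set.univ v → v 0 = 0 →
        (∀ᵐ x ∂(volume : Measure ℝ), deriv w x < deriv v x) → v = u)) ∧
    (∃ u : ℝ → ℝ,
      Continuous u ∧ ViscSolOn a H lam Set.univ u ∧ u 0 = 0 ∧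
      (∀ᵐ x ∂(volume : Measure ℝ), deriv u x < deriv ulam0 x) ∧
      ContDiff ℝ 1 u ∧ ContDiffOn ℝ 2 u {x : ℝ | 0 < a x} ∧
      (∀ x : ℝ, a x = 0 → deriv u x = pm lam x) ∧
      (∀ x : ℝ, a x * deriv (deriv u) x + H x (deriv u x) = lam) ∧
      (∀ w v : ℝ → ℝ,
        (∃ L : NNReal, LipschitzWith L w) → ViscSolOn a H lam0 Set.univ w →
        Continuous v → ViscSolOn a H lam Set.univ v → v 0 = 0 →
        (∀ᵐ x ∂(volume : Measure ℝ), deriv v x < deriv w x) → v = u)) := by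
  have D := mkDat a H phat κ α0 α1 γ η harange hκ hA2 hA1' hα0 hα1 hγ hη hH
  have hHc : ∀ x, Continuous (H x) := fun x => D.Hc.comp (continuous_const.prodMk continuous_id)
  have hpp : ∀ x, H x (phat x) < lam → _ := fun x hx => pp_of (hHc x) (hp lam x hx.le) hx
  refine ⟨core D hlam hulip husol (P := pp lam) (fun x hx => (hpp x hx).1), ?_⟩
  obtain ⟨u, hu1, hu2, hu3, hu4, hu5, hu6, hu7, hu8, hu9⟩ :=
    core D.refl hlam (lip_refl hulip) husol.refl (P := fun x => - pm lam (-x)) (fun x hx => by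
      simp only [neg_neg] at hx ⊢
      have := (hpp (-x) hx).2
      exact ⟨by linarith [this.1], this.2⟩)
  refine ⟨fun x => u (-x), hu1.comp continuous_neg, ?_, by simpa using hu3, ?_, ?_, ?_, ?_, ?_, ?_⟩
  · have := hu2.refl
    simpa using this
  · filter_upwards [ae_refl hu4] with x hx
    rw [deriv_refl] at hx ⊢
    simp only [neg_neg] at hx
    linarith
  · exact hu5.comp contDiff_neg
  · refine hu6.comp contDiff_neg.contDiffOn ?_
    intro x hx
    simpa using hx
  · intro x hx
    rw [deriv_refl, hu7 (-x) (by simpa using hx)]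
    simp
  · intro x
    rw [deriv2_refl, deriv_refl]
    have := hu8 (-x)
    simpa using this
  · intro w v hw hws hv hvs hv0 hae
    have h1 := hu9 (fun x => w (-x)) (fun x => v (-x)) (lip_refl hw) hws.refl (hv.comp continuous_neg)
      hvs.refl (by simpa using hv0) (by
        filter_upwards [ae_refl hae] with x hx
        rw [deriv_refl, deriv_refl]
        linarith)
    funext x
    have := congrFun h1 (-x)
    simpa using this
end
end

section
/- Let a : ℝ → [0,1] satisfy (A1') and have √a κ-Lipschitz, and H ∈ 𝓗_sqc(α0,α1,γ,η) with γ > 2; let λ0 be the critical value and, for each μ > λ0, let u⁺_μ, u⁻_μ be the unique C¹ solutions of a u'' + H(x,u') = μ with value 0 at the origin and derivative respectively above and below u'_{λ0} a.e. Then: (i) for λ > μ > λ0, (u⁺_λ)' > (u⁺_μ)' > (u⁻_μ)' > (u⁻_λ)' everywhere on ℝ; (ii) for λ > λ0, lim_{μ→λ} (u⁺_μ)'(x) = (u⁺_λ)'(x) and lim_{μ→λ} (u⁻_μ)'(x) = (u⁻_λ)'(x) for every x ∈ ℝ; (iii) for every R > ‖u'_{λ0}‖_{L^∞(A)} there exists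 λ_R > λ0 such that for every λ > λ_R, (u⁻_λ)'(x) < −R < R < (u⁺_λ)'(x) for all x ∈ ℝ. -/
open Real Set Filter Topology MeasureTheory

noncomputable section

/-- crossing lemma -/
lemma aux_cross (g : ℝ → ℝ) (hg : Continuous g) (y x : ℝ) (hyx : y ≤ x) (hy : 0 < g y)
    (hd : ∀ t, y < t → t ≤ x → g t = 0 → ∃ d, 0 < d ∧ HasDerivAt g d t) : 0 < g x := by
  by_contra hx
  push Not at hx
  set S : Set ℝ := Icc y x ∩ {t | g t ≤ 0} with hS
  have hScl : IsCompact S := isCompact_Icc.inter_right (isClosed_le hg continuous_const)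
  have hSne : S.Nonempty := ⟨x, ⟨hyx, le_rfl⟩, hx⟩
  obtain ⟨t, htS, htmin⟩ := hScl.exists_isLeast hSne
  have hyt : y < t := by
    rcases lt_or_eq_of_le htS.1.1 with h | h
    · exact h
    · have := htS.2
      simp only [mem_ofPred_eq] at this
      rw [← h] at this; linarith
  have hpos : ∀ s, y ≤ s → s < t → 0 < g s := by
    intro s h1 h2
    by_contra h3
    push Not at h3
    have : t ≤ s := htmin ⟨⟨h1, h2.le.trans htS.1.2⟩, h3⟩
    linarith
  have hg0 : g t = 0 := by
    apply le_antisymm htS.2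
    have : t ∈ closure (Ioo y t) := by
      rw [closure_Ioo hyt.ne]; exact ⟨hyt.le, le_rfl⟩
    have hsub : closure (Ioo y t) ⊆ {s | 0 ≤ g s} :=
      closure_minimal (fun s hs => (hpos s hs.1.le hs.2).le) (isClosed_le continuous_const hg)
    exact hsub this
  obtain ⟨d, hd0, hdt⟩ := hd t hyt htS.1.2 hg0
  have hsl := hasDerivAt_iff_tendsto_slope.1 hdt
  have h1 : Tendsto (slope g t) (𝓝[<] t) (𝓝 d) :=
    hsl.mono_left (nhdsWithin_mono _ (fun s hs => ne_of_lt hs))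
  have h2 : ∀ᶠ s in 𝓝[<] t, slope g t s ≤ 0 := by
    filter_upwards [Ioo_mem_nhdsLT hyt] with s hs
    rw [slope_def_field, hg0]
    have := hpos s hs.1.le hs.2
    have h3 : s - t < 0 := by linarith [hs.2]
    exact div_nonpos_of_nonneg_of_nonpos (by linarith) h3.le
  have := le_of_tendsto h1 h2
  linarith

lemma aux_sub_zero (a : ℝ → ℝ) (H : ℝ → ℝ → ℝ) (hH : Continuous (fun z : ℝ × ℝ => H z.1 z.2))
    (lam K : ℝ) (hK : 0 ≤ K) (u : ℝ → ℝ) (hu : Continuous u) (x0 q : ℝ)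
    (ha : ∀ x, a x ≤ K * (x - x0) ^ 2)
    (hq : HasDerivAt u q x0) (hs : ViscSubOn a H lam univ u) : lam ≤ H x0 q := by
  by_contra hlt
  push Not at hlt
  have hF : Continuous (fun z : ℝ × ℝ × ℝ => 2 * K * z.1 ^ 2 + H (x0 + z.2.1) (q + z.2.2)) := by
    have : Continuous (fun z : ℝ × ℝ × ℝ => H (x0 + z.2.1) (q + z.2.2)) :=
      hH.comp (by fun_prop : Continuous (fun z : ℝ × ℝ × ℝ => (x0 + z.2.1, q + z.2.2)))
    fun_prop
  have hopen := isOpen_lt hF (continuous_const (y := lam))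
  obtain ⟨r, hr, hball⟩ := Metric.isOpen_iff.1 hopen (0, 0, 0) (by simpa using hlt)
  set ε := r / 4 with hε
  have hε0 : 0 < ε := by positivity
  have h1 := (hasDerivAt_iff_isLittleO.1 hq).def hε0
  obtain ⟨δ', hδ', hb⟩ := Metric.eventually_nhds_iff.1 h1
  set δ := min (δ' / 2) ε with hδ
  have hδ0 : 0 < δ := by positivity
  have hb' : ∀ x, |x - x0| ≤ δ → |u x - u x0 - (x - x0) * q| ≤ ε * |x - x0| := by
    intro x hx
    have : dist x x0 < δ' := by
      rw [Real.dist_eq]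
      have := min_le_left (δ' / 2) ε
      linarith
    simpa using hb this
  set n := ε / δ + 1 with hn
  have hn0 : 0 < n := by positivity
  have hnd : ε < n * δ := by
    rw [hn, add_mul, div_mul_cancel₀ _ hδ0.ne']; linarith
  let φ : ℝ → ℝ := fun x => u x0 + (x - x0) * q + n * (x - x0) ^ 2
  have hφ1 : deriv φ = fun x => q + 2 * n * (x - x0) := by
    funext x
    have : HasDerivAt φ (q + 2 * n * (x - x0)) x := by
      have h0 : HasDerivAt (fun x : ℝ => x - x0) 1 x := (hasDerivAt_id x).sub_const x0
      have := ((h0.mul_const q).const_add (u x0)).add ((h0.pow 2).const_mul n)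
      exact this.congr_deriv (by push_cast; ring)
    exact this.deriv
  have hφ2 : ∀ x, deriv (deriv φ) x = 2 * n := by
    intro x
    rw [hφ1]
    have h0 : HasDerivAt (fun x : ℝ => x - x0) 1 x := (hasDerivAt_id x).sub_const x0
    have := ((h0.const_mul (2 * n)).const_add q).deriv
    simpa using this
  have hφc : ContDiff ℝ 2 φ := by fun_prop
  obtain ⟨x, hx, hmax⟩ := (isCompact_Icc (a := x0 - δ) (b := x0 + δ)).exists_isMaxOn
    ⟨x0, by linarith, by linarith⟩
    (f := fun x => u x - φ x) (hu.sub hφc.continuous).continuousOn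
  have hxd : |x - x0| ≤ δ := abs_le.2 ⟨by linarith [hx.1], by linarith [hx.2]⟩
  have hm := hmax (show x0 ∈ Icc (x0 - δ) (x0 + δ) from ⟨by linarith, by linarith⟩)
  simp only [mem_ofPred_eq, φ, sub_self, zero_mul, ne_eq, OfNat.ofNat_ne_zero, not_false_eq_true,
    zero_pow, mul_zero, add_zero] at hm
  have hu1 := (abs_le.1 (hb' x hxd)).2
  have hsq : (x - x0) ^ 2 = |x - x0| ^ 2 := (sq_abs _).symm
  have hnx : n * |x - x0| ≤ ε := by
    rcases eq_or_lt_of_le (abs_nonneg (x - x0)) with h | h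
    · rw [← h]; simpa using hε0.le
    · have : n * |x - x0| ^ 2 ≤ ε * |x - x0| := by rw [← hsq]; linarith
      have : (n * |x - x0|) * |x - x0| ≤ ε * |x - x0| := by linarith
      exact le_of_mul_le_mul_right this h
  have hxlt : |x - x0| < δ := by
    by_contra h
    push Not at h
    have := mul_le_mul_of_nonneg_left h hn0.le
    linarith
  have hloc : IsLocalMax (fun x => u x - φ x) x := by
    apply hmax.isLocalMax
    have := abs_lt.1 hxlt
    exact Icc_mem_nhds (by linarith) (by linarith)
  have hv := hs φ hφc x (mem_univ _) hloc
  rw [hφ2, hφ1] at hv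
  have hδε : δ ≤ ε := min_le_right _ _
  have hA : a x * (2 * n) ≤ 2 * K * ε ^ 2 := by
    have e1 : a x * (2 * n) ≤ K * (x - x0) ^ 2 * (2 * n) :=
      mul_le_mul_of_nonneg_right (ha x) (by positivity)
    have e2 : |x - x0| * (n * |x - x0|) ≤ ε * ε :=
      mul_le_mul (hxlt.le.trans hδε) hnx (by positivity) hε0.le
    have e3 : K * (x - x0) ^ 2 * (2 * n) = 2 * K * (|x - x0| * (n * |x - x0|)) := by
      rw [hsq]; ring
    have e4 := mul_le_mul_of_nonneg_left e2 (by positivity : 0 ≤ 2 * K)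
    nlinarith
  have hmem : ((ε, x - x0, 2 * n * (x - x0)) : ℝ × ℝ × ℝ) ∈ Metric.ball ((0, 0, 0) : ℝ × ℝ × ℝ) r := by
    rw [Metric.mem_ball, Prod.dist_eq, Prod.dist_eq]
    simp only [Real.dist_eq, sub_zero]
    refine max_lt ?_ (max_lt ?_ ?_)
    · rw [abs_of_pos hε0]; linarith
    · linarith
    · rw [abs_mul, abs_of_pos (by positivity : 0 < 2 * n)]
      linarith
  have := hball hmem
  simp only [mem_ofPred_eq] at this
  rw [show x0 + (x - x0) = x by ring] at this
  linarith

lemma aux_neg (a : ℝ → ℝ) (H : ℝ → ℝ → ℝ) (lam : ℝ) (u : ℝ → ℝ)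
    (hs : ViscSuperOn a H lam univ u) :
    ViscSubOn a (fun x p => - H x (-p)) (-lam) univ (fun x => - u x) := by
  intro φ hφ x0 hx0 hmax
  have hmin : IsLocalMin (fun x => u x - (fun y => - φ y) x) x0 := by
    have := hmax.neg
    refine this.congr (Eventually.of_forall fun x => ?_)
    simp; ring
  have := hs (fun y => - φ y) hφ.neg x0 hx0 hmin
  have e1 : deriv (fun y => - φ y) = fun y => - deriv φ y := by
    funext y; exact deriv.fun_neg
  rw [e1] at this
  have e2 : deriv (fun y => - deriv φ y) x0 = - deriv (deriv φ) x0 := deriv.fun_neg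
  rw [e2] at this
  simp only
  linarith

lemma aux_sol_zero (a : ℝ → ℝ) (H : ℝ → ℝ → ℝ) (hH : Continuous (fun z : ℝ × ℝ => H z.1 z.2))
    (lam K : ℝ) (hK : 0 ≤ K) (u : ℝ → ℝ) (hu : Continuous u) (x0 q : ℝ)
    (ha : ∀ x, a x ≤ K * (x - x0) ^ 2)
    (hq : HasDerivAt u q x0) (hs : ViscSolOn a H lam univ u) : H x0 q = lam := by
  apply le_antisymm
  · have hH' : Continuous (fun z : ℝ × ℝ => (fun x p => - H x (-p)) z.1 z.2) :=
      (hH.comp (by fun_prop : Continuous (fun z : ℝ × ℝ => (z.1, -z.2)))).neg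
    have := aux_sub_zero a _ hH' (-lam) K hK _ hu.neg x0 (-q) ha hq.neg (aux_neg a H lam u hs.2)
    simp only [neg_neg] at this
    linarith
  · exact aux_sub_zero a H hH lam K hK u hu x0 q ha hq hs.1

lemma aux_sub_int (a : ℝ → ℝ) (H : ℝ → ℝ → ℝ) (lam : ℝ) (u g : ℝ → ℝ) (hu : ContDiff ℝ 1 u)
    (hg : Continuous g) (s t : ℝ) (hst : s < t)
    (ha : ∀ x ∈ Ioo s t, 0 < a x ∧ a x * g x + H x (deriv u x) ≤ lam)
    (hs : ViscSubOn a H lam univ u) : ∫ x in s..t, g x ≤ deriv u t - deriv u s := by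
  by_contra hlt
  push Not at hlt
  obtain ⟨hud, huc⟩ := contDiff_one_iff_deriv.1 hu
  set J := ∫ x in s..t, g x with hJ
  set D := J - (deriv u t - deriv u s) with hD
  have hD0 : 0 < D := by linarith
  set ε := D / (2 * (t - s)) with hε
  have hts : 0 < t - s := by linarith
  have hε0 : 0 < ε := by positivity
  have hεts : ε * (t - s) = D / 2 := by rw [hε]; field_simp
  -- G
  let G : ℝ → ℝ := fun x => (∫ y in s..x, (g y - ε)) + (deriv u s - D / 4)
  have hgc : Continuous (fun y => g y - ε) := hg.sub continuous_const
  have hG : ∀ x, HasDerivAt G (g x - ε) x := fun x =>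
    ((hgc.integral_hasStrictDerivAt s x).hasDerivAt).add_const _
  have hGc : Continuous G := continuous_iff_continuousAt.2 fun x => (hG x).continuousAt
  let φ : ℝ → ℝ := fun x => ∫ y in s..x, G y
  have hφ : ∀ x, HasDerivAt φ (G x) x := fun x => (hGc.integral_hasStrictDerivAt s x).hasDerivAt
  have hφ1 : deriv φ = G := funext fun x => (hφ x).deriv
  have hG1 : deriv G = fun x => g x - ε := funext fun x => (hG x).deriv
  have hφc : ContDiff ℝ 2 φ := by
    rw [show (2 : WithTop ℕ∞) = 1 + 1 by norm_num, contDiff_succ_iff_deriv]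
    refine ⟨fun x => (hφ x).differentiableAt, by simp, ?_⟩
    rw [hφ1, contDiff_one_iff_deriv]
    refine ⟨fun x => (hG x).differentiableAt, ?_⟩
    rw [hG1]; exact hgc
  have hGs : G s < deriv u s := by
    simp only [G, intervalIntegral.integral_same]; linarith
  have hGt : deriv u t < G t := by
    have : ∫ y in s..t, (g y - ε) = J - (t - s) * ε := by
      rw [intervalIntegral.integral_sub (hg.intervalIntegrable _ _) (by simp)]
      simp [hJ]
    simp only [G]
    rw [this]
    linarith
  have hder : ∀ x, HasDerivAt (fun x => u x - φ x) (deriv u x - G x) x := fun x =>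
    (hud x).hasDerivAt.sub (hφ x)
  obtain ⟨z, hz, hmax⟩ := (isCompact_Icc (a := s) (b := t)).exists_isMaxOn
    ⟨s, by linarith, by linarith⟩
    (f := fun x => u x - φ x) (hu.continuous.sub hφc.continuous).continuousOn
  have hzs : z ≠ s := by
    rintro rfl
    have h1 : Tendsto (slope (fun x => u x - φ x) z) (𝓝[>] z) (𝓝 (deriv u z - G z)) :=
      (hasDerivAt_iff_tendsto_slope.1 (hder z)).mono_left
        (nhdsWithin_mono _ (fun s hs => ne_of_gt hs))
    have h2 : ∀ᶠ y in 𝓝[>] z, slope (fun x => u x - φ x) z y ≤ 0 := by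
      filter_upwards [Ioo_mem_nhdsGT hst] with y hy
      rw [slope_def_field]
      have := hmax (show y ∈ Icc z t from ⟨hy.1.le, hy.2.le⟩)
      simp only [mem_ofPred_eq] at this
      exact div_nonpos_of_nonpos_of_nonneg (by linarith) (by linarith [hy.1])
    have := le_of_tendsto h1 h2
    linarith
  have hzt : z ≠ t := by
    rintro rfl
    have h1 : Tendsto (slope (fun x => u x - φ x) z) (𝓝[<] z) (𝓝 (deriv u z - G z)) :=
      (hasDerivAt_iff_tendsto_slope.1 (hder z)).mono_left
        (nhdsWithin_mono _ (fun s hs => ne_of_lt hs))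
    have h2 : ∀ᶠ y in 𝓝[<] z, 0 ≤ slope (fun x => u x - φ x) z y := by
      filter_upwards [Ioo_mem_nhdsLT hst] with y hy
      rw [slope_def_field]
      have := hmax (show y ∈ Icc s z from ⟨hy.1.le, hy.2.le⟩)
      simp only [mem_ofPred_eq] at this
      exact div_nonneg_of_nonpos (by linarith) (by linarith [hy.2])
    have := ge_of_tendsto h1 h2
    linarith
  have hz1 : s < z := lt_of_le_of_ne hz.1 hzs.symm
  have hz2 : z < t := lt_of_le_of_ne hz.2 hzt
  have hloc : IsLocalMax (fun x => u x - φ x) z := hmax.isLocalMax (Icc_mem_nhds hz1 hz2)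
  have h0 := hloc.hasDerivAt_eq_zero (hder z)
  have hv := hs φ hφc z (mem_univ _) hloc
  rw [hφ1, hG1] at hv
  simp only at hv
  obtain ⟨ha1, ha2⟩ := ha z ⟨hz1, hz2⟩
  have e : G z = deriv u z := by linarith
  rw [e] at hv
  nlinarith

lemma aux_sol_pos (a : ℝ → ℝ) (hac : Continuous a) (H : ℝ → ℝ → ℝ)
    (hH : Continuous (fun z : ℝ × ℝ => H z.1 z.2))
    (lam : ℝ) (u : ℝ → ℝ) (hu : ContDiff ℝ 1 u) (x0 : ℝ) (ha : 0 < a x0)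
    (hs : ViscSolOn a H lam univ u) :
    HasDerivAt (deriv u) ((lam - H x0 (deriv u x0)) / a x0) x0 := by
  obtain ⟨hud, huc⟩ := contDiff_one_iff_deriv.1 hu
  set c := a x0 / 2 with hc
  have hc0 : 0 < c := by positivity
  let g : ℝ → ℝ := fun x => (lam - H x (deriv u x)) / max (a x) c
  have hg : Continuous g := by
    have h1 : Continuous (fun x => H x (deriv u x)) := hH.comp (continuous_id.prodMk huc)
    refine (continuous_const.sub h1).div (hac.max continuous_const) fun x => ?_
    have := le_max_right (a x) c
    linarith
  have hop : ∀ᶠ x in 𝓝 x0, c < a x :=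
    hac.continuousAt.eventually (lt_mem_nhds (by linarith : c < a x0))
  obtain ⟨δ, hδ, hb⟩ := Metric.eventually_nhds_iff.1 hop
  have hag : ∀ x ∈ Ioo (x0 - δ) (x0 + δ), 0 < a x ∧ a x * g x + H x (deriv u x) = lam := by
    intro x hx
    have h1 : c < a x := hb (by rw [Real.dist_eq, abs_lt]; constructor <;> linarith [hx.1, hx.2])
    refine ⟨by linarith, ?_⟩
    simp only [g]
    rw [max_eq_left h1.le, mul_div_cancel₀ _ (by linarith : a x ≠ 0)]
    ring
  have hint : ∀ s t, x0 - δ < s → t < x0 + δ → s < t →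
      deriv u t - deriv u s = ∫ x in s..t, g x := by
    intro s t h1 h2 h3
    apply le_antisymm
    · have := aux_sub_int a (fun x p => - H x (-p)) (-lam) (fun x => - u x) (fun x => - g x)
        hu.neg hg.neg s t h3 ?_ (aux_neg a H lam u hs.2)
      · have e : deriv (fun x => - u x) = fun x => - deriv u x := funext fun x => deriv.fun_neg
        rw [e, intervalIntegral.integral_neg] at this
        linarith
      · intro x hx
        obtain ⟨h4, h5⟩ := hag x ⟨by linarith [hx.1], by linarith [hx.2]⟩
        refine ⟨h4, ?_⟩
        have e : deriv (fun x => - u x) x = - deriv u x := deriv.fun_neg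
        rw [e, neg_neg]; linarith
    · apply aux_sub_int a H lam u g hu hg s t h3 ?_ hs.1
      intro x hx
      obtain ⟨h4, h5⟩ := hag x ⟨by linarith [hx.1], by linarith [hx.2]⟩
      exact ⟨h4, h5.le⟩
  have hx0g : g x0 = (lam - H x0 (deriv u x0)) / a x0 := by
    simp only [g]; rw [max_eq_left (by linarith)]
  rw [← hx0g]
  have h1 : HasDerivAt (fun x => deriv u (x0 - δ / 2) + ∫ y in (x0 - δ / 2)..x, g y) (g x0) x0 :=
    ((hg.integral_hasStrictDerivAt (x0 - δ / 2) x0).hasDerivAt).const_add _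
  refine h1.congr_of_eventuallyEq ?_
  filter_upwards [Ioo_mem_nhds (by linarith : x0 - δ / 2 < x0) (by linarith : x0 < x0 + δ)] with x hx
  have := hint (x0 - δ / 2) x (by linarith) hx.2 hx.1
  linarith

lemma aux_ae_mono (u v : ℝ → ℝ) (hu : LocallyLipschitz u) (hv : LocallyLipschitz v)
    (h : ∀ᵐ x ∂(volume : Measure ℝ), deriv u x < deriv v x) (x y : ℝ) (hxy : x ≤ y) :
    u y - u x ≤ v y - v x := by
  have key : ∀ w : ℝ → ℝ, LocallyLipschitz w → AbsolutelyContinuousOnInterval w x y := by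
    intro w hw
    obtain ⟨K, hK⟩ := (hw.locallyLipschitzOn (s := uIcc x y)).exists_lipschitzOnWith_of_compact isCompact_uIcc
    exact hK.absolutelyContinuousOnInterval
  rw [← (key u hu).integral_deriv_eq_sub, ← (key v hv).integral_deriv_eq_sub]
  exact intervalIntegral.integral_mono_ae hxy (key u hu).intervalIntegrable_deriv
    (key v hv).intervalIntegrable_deriv (h.mono fun x hx => hx.le)

lemma aux_squeeze (u v w : ℝ → ℝ) (x0 q : ℝ) (hu : HasDerivAt u q x0) (hw : HasDerivAt w q x0)
    (huv : ∀ x y, x ≤ y → u y - u x ≤ v y - v x) (hvw : ∀ x y, x ≤ y → v y - v x ≤ w y - w x) :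
    HasDerivAt v q x0 := by
  have key : ∀ u v : ℝ → ℝ, (∀ x y, x ≤ y → u y - u x ≤ v y - v x) →
      ∀ y, slope u x0 y ≤ slope v x0 y := by
    intro u v huv y
    rw [slope_def_field, slope_def_field]
    rcases le_total x0 y with h | h
    · exact div_le_div_of_nonneg_right (huv _ _ h) (by linarith)
    · exact div_le_div_of_nonpos_of_le (by linarith) (by linarith [huv _ _ h])
  rw [hasDerivAt_iff_tendsto_slope] at *
  exact tendsto_of_tendsto_of_tendsto_of_le_of_le hu hw (key u v huv) (key v w hvw)

/-- first-order data attached to one branch of solutions -/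
def AuxFam (a : ℝ → ℝ) (H : ℝ → ℝ → ℝ) (phat : ℝ → ℝ) (lam0 : ℝ) (F : ℝ → ℝ → ℝ) : Prop :=
  ∀ μ, lam0 < μ → Continuous (F μ) ∧ (∀ x, a x = 0 → H x (F μ x) = μ ∧ phat x < F μ x) ∧
    (∀ x, 0 < a x → HasDerivAt (F μ) ((μ - H x (F μ x)) / a x) x)

lemma aux_mono (a : ℝ → ℝ) (H : ℝ → ℝ → ℝ) (phat : ℝ → ℝ) (lam0 η : ℝ) (F : ℝ → ℝ → ℝ)
    (hF : AuxFam a H phat lam0 F) (ha0 : ∀ x, 0 ≤ a x) (hz : ∀ x, ∃ y, y ≤ x ∧ a y = 0)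
    (hη : 0 < η)
    (hR : ∀ x p1 p2 : ℝ, phat x ≤ p1 → p1 < p2 → η * (p2 - p1) ≤ H x p2 - H x p1)
    (lam μ : ℝ) (hμ : lam0 < μ) (hl : μ < lam) (x : ℝ) : F μ x < F lam x := by
  obtain ⟨hc1, hz1, hp1⟩ := hF μ hμ
  obtain ⟨hc2, hz2, hp2⟩ := hF lam (hμ.trans hl)
  have hzero : ∀ y, a y = 0 → F μ y < F lam y := by
    intro y hy
    by_contra h
    push Not at h
    rcases eq_or_lt_of_le h with h | h
    · have := (hz1 y hy).1
      rw [← h, (hz2 y hy).1] at this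
      linarith
    · have := hR y _ _ (hz2 y hy).2.le h
      rw [(hz1 y hy).1, (hz2 y hy).1] at this
      nlinarith
  obtain ⟨y, hyx, hy⟩ := hz x
  have := aux_cross (fun t => F lam t - F μ t) (hc2.sub hc1) y x hyx (by linarith [hzero y hy]) ?_
  · linarith
  · intro t _ _ ht
    have hat : 0 < a t := by
      rcases eq_or_lt_of_le (ha0 t) with h | h
      · have := hzero t h.symm; linarith
      · exact h
    refine ⟨_, ?_, (hp2 t hat).sub (hp1 t hat)⟩
    have : F lam t = F μ t := by linarith
    rw [this, ← sub_div]
    exact div_pos (by linarith) hat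

lemma aux_large (a : ℝ → ℝ) (H : ℝ → ℝ → ℝ) (phat : ℝ → ℝ) (lam0 η : ℝ) (F : ℝ → ℝ → ℝ)
    (hF : AuxFam a H phat lam0 F) (ha0 : ∀ x, 0 ≤ a x) (hz : ∀ x, ∃ y, y ≤ x ∧ a y = 0)
    (hη : 0 < η)
    (hR : ∀ x p1 p2 : ℝ, phat x ≤ p1 → p1 < p2 → η * (p2 - p1) ≤ H x p2 - H x p1)
    (R lam : ℝ) (hμ : lam0 < lam) (hl : ∀ x, H x R < lam) (x : ℝ) : R < F lam x := by
  obtain ⟨hc2, hz2, hp2⟩ := hF lam hμ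
  have hzero : ∀ y, a y = 0 → R < F lam y := by
    intro y hy
    by_contra h
    push Not at h
    have h0 := hl y
    rcases eq_or_lt_of_le h with h | h
    · have := (hz2 y hy).1
      rw [h] at this
      linarith
    · have := hR y _ _ (hz2 y hy).2.le h
      rw [(hz2 y hy).1] at this
      nlinarith
  obtain ⟨y, hyx, hy⟩ := hz x
  have := aux_cross (fun t => F lam t - R) (hc2.sub continuous_const) y x hyx
    (by linarith [hzero y hy]) ?_
  · linarith
  · intro t _ _ ht
    have hat : 0 < a t := by
      rcases eq_or_lt_of_le (ha0 t) with h | h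
      · have := hzero t h.symm; linarith
      · exact h
    refine ⟨_, ?_, (hp2 t hat).sub_const R⟩
    have : F lam t = R := by linarith
    rw [this]
    exact div_pos (by linarith [hl t]) hat

lemma aux_lip (a : ℝ → ℝ) (hac : Continuous a) (H : ℝ → ℝ → ℝ)
    (hHc : Continuous (fun z : ℝ × ℝ => H z.1 z.2)) (phat : ℝ → ℝ) (lam0 η : ℝ) (F : ℝ → ℝ → ℝ)
    (hF : AuxFam a H phat lam0 F) (ha0 : ∀ x, 0 ≤ a x) (hz : ∀ x, ∃ y, y ≤ x ∧ a y = 0)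
    (hη : 0 < η)
    (hR : ∀ x p1 p2 : ℝ, phat x ≤ p1 → p1 < p2 → η * (p2 - p1) ≤ H x p2 - H x p1)
    (hL : ∀ x p1 p2 : ℝ, p1 < p2 → p2 ≤ phat x → H x p2 ≤ H x p1)
    (hLip : ∀ P, ∃ L, 0 ≤ L ∧ ∀ x p q : ℝ, |p| ≤ P → |q| ≤ P → |H x p - H x q| ≤ L * |p - q|)
    (ν M : ℝ) (hν : lam0 < ν) (hνM : ν < M) (x : ℝ) :
    ∃ C, ∀ ν1 ν2, ν < ν1 → ν1 < ν2 → ν2 < M → F ν2 x - F ν1 x ≤ C * (ν2 - ν1) := by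
  have hmono := aux_mono a H phat lam0 η F hF ha0 hz hη hR
  have hzero : ∀ y, a y = 0 → ∀ ν1 ν2, ν < ν1 → ν1 < ν2 →
      η * (F ν2 y - F ν1 y) ≤ ν2 - ν1 := by
    intro y hy ν1 ν2 h1 h2
    obtain ⟨-, hz1, -⟩ := hF ν1 (hν.trans h1)
    obtain ⟨-, hz2, -⟩ := hF ν2 (hν.trans (h1.trans h2))
    have := hR y _ _ (hz1 y hy).2.le (hmono ν2 ν1 (hν.trans h1) h2 y)
    rwa [(hz1 y hy).1, (hz2 y hy).1] at this
  by_cases hax : a x = 0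
  · refine ⟨1 / η, fun ν1 ν2 h1 h2 h3 => ?_⟩
    have := hzero x hax ν1 ν2 h1 h2
    rw [div_mul_eq_mul_div, one_mul, le_div_iff₀ hη]
    linarith
  have hax' : 0 < a x := lt_of_le_of_ne (ha0 x) (Ne.symm hax)
  -- left zero
  obtain ⟨y, hyx, hy⟩ := hz x
  have hSc : IsCompact (Icc y x ∩ {t | a t = 0}) :=
    isCompact_Icc.inter_right (isClosed_eq hac continuous_const)
  obtain ⟨l, hlS, hlmax⟩ := hSc.exists_isGreatest ⟨y, ⟨le_rfl, hyx⟩, hy⟩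
  have hal : a l = 0 := hlS.2
  have hlx : l < x := by
    rcases eq_or_lt_of_le hlS.1.2 with h | h
    · rw [h] at hal; exact absurd hal hax
    · exact h
  have hpos : ∀ t, l < t → t ≤ x → 0 < a t := by
    intro t h1 h2
    rcases eq_or_lt_of_le (ha0 t) with h | h
    · have : t ≤ l := hlmax ⟨⟨hlS.1.1.trans h1.le, h2⟩, h.symm⟩
      linarith
    · exact h
  -- near l
  obtain ⟨hcν, hzν, -⟩ := hF ν hν
  obtain ⟨hcM, -, -⟩ := hF M (hν.trans hνM)
  have hnear : ∀ᶠ t in 𝓝 l, phat t < F ν t := by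
    have h1 : phat l < F ν l := (hzν l hal).2
    have h2 : H l (phat l) < H l (F ν l) := by
      have := hR l _ _ le_rfl h1
      have : 0 < η * (F ν l - phat l) := mul_pos hη (by linarith)
      linarith
    have c1 : Continuous (fun t => H t (phat l)) := hHc.comp (by fun_prop : Continuous fun t : ℝ => (t, phat l))
    have c2 : Continuous (fun t => H t (F ν t)) := hHc.comp (continuous_id.prodMk hcν)
    have e1 := (isOpen_lt continuous_const hcν).mem_nhds (show l ∈ {t | phat l < F ν t} from h1)
    have e2 := (isOpen_lt c1 c2).mem_nhds
      (show l ∈ {t | H t (phat l) < H t (F ν t)} from h2)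
    filter_upwards [e1, e2] with t ht1 ht2
    by_contra h
    push Not at h
    have := hL t _ _ ht1 h
    exact absurd ht2 (not_lt.2 this)
  obtain ⟨δ, hδ, hb⟩ := Metric.eventually_nhds_iff.1 hnear
  -- lower bound of a
  obtain ⟨c, hc0, hc⟩ : ∃ c, 0 < c ∧ ∀ t ∈ Icc (l + δ / 2) x, c ≤ a t := by
    rcases (Icc (l + δ / 2) x).eq_empty_or_nonempty with h | h
    · exact ⟨1, one_pos, by simp [h]⟩
    · obtain ⟨t, ht, hmin⟩ := isCompact_Icc.exists_isMinOn h hac.continuousOn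
      exact ⟨a t, hpos t (by linarith [ht.1]) ht.2, fun s hs => hmin hs⟩
  obtain ⟨P1, hP1⟩ := (isCompact_Icc (a := l) (b := x)).exists_bound_of_continuousOn hcν.continuousOn
  obtain ⟨P2, hP2⟩ := (isCompact_Icc (a := l) (b := x)).exists_bound_of_continuousOn hcM.continuousOn
  obtain ⟨L, hL0, hLL⟩ := hLip (max P1 P2)
  set B := 1 / η + 1 with hB
  have hB1 : 1 ≤ B := by have : 0 < 1 / η := by positivity
                         linarith
  have hBη : 1 < B * η := by
    rw [hB, add_mul, div_mul_cancel₀ _ hη.ne']; linarith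
  set K := (L + 1) / c + 1 with hK
  have hcK : L + 1 < c * K := by
    rw [hK, mul_add, mul_div_cancel₀ _ hc0.ne']; linarith
  have hK0 : 0 < K := by positivity
  refine ⟨B * Real.exp (K * (x - l)), fun ν1 ν2 h1 h2 h3 => ?_⟩
  have hν1 := hν.trans h1
  obtain ⟨hc1, hz1, hp1⟩ := hF ν1 hν1
  obtain ⟨hc2, hz2, hp2⟩ := hF ν2 (hν1.trans h2)
  set ε := ν2 - ν1 with hε
  have hε0 : 0 < ε := by linarith
  have hE : Continuous (fun t => ε * B * Real.exp (K * (t - l))) := by fun_prop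
  have := aux_cross (fun t => ε * B * Real.exp (K * (t - l)) - (F ν2 t - F ν1 t))
    (hE.sub (hc2.sub hc1)) l x hlx.le ?_ ?_
  · linarith
  · have := hzero l hal ν1 ν2 h1 h2
    simp only [sub_self, mul_zero, Real.exp_zero, mul_one]
    have h4 : η * (F ν2 l - F ν1 l) < η * (ε * B) := by nlinarith
    have := lt_of_mul_lt_mul_left h4 hη.le
    linarith
  · intro t hlt htx ht
    have hat := hpos t hlt htx
    have hEd : HasDerivAt (fun t => ε * B * Real.exp (K * (t - l)))
        (K * (ε * B * Real.exp (K * (t - l)))) t := by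
      have h0 : HasDerivAt (fun t : ℝ => K * (t - l)) K t := by
        simpa using ((hasDerivAt_id t).sub_const l).const_mul K
      exact (h0.exp.const_mul (ε * B)).congr_deriv (by ring)
    refine ⟨_, ?_, hEd.sub ((hp2 t hat).sub (hp1 t hat))⟩
    set w := F ν2 t - F ν1 t with hw
    have hwE : ε * B * Real.exp (K * (t - l)) = w := by linarith
    rw [hwE]
    have hexp : 1 ≤ Real.exp (K * (t - l)) :=
      Real.one_le_exp (mul_nonneg hK0.le (by linarith))
    have hwB : ε * B ≤ w := by
      rw [← hwE]; exact le_mul_of_one_le_right (by positivity) hexp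
    have hwε : ε ≤ w := by nlinarith
    have hw0 : 0 < w := by linarith
    rw [← sub_div]
    have hnum : (ν2 - H t (F ν2 t) - (ν1 - H t (F ν1 t))) / a t < K * w := by
      rw [div_lt_iff₀ hat]
      have hlt' : F ν1 t < F ν2 t := by linarith
      have hFν : F ν t < F ν1 t := hmono ν1 ν hν h1 t
      have hFM : F ν2 t < F M t := hmono M ν2 (hν1.trans h2) h3 t
      rcases le_total (l + δ / 2) t with htd | htd
      · have hca := hc t ⟨htd, htx⟩
        have b1 := hP1 t ⟨hlt.le, htx⟩
        have b2 := hP2 t ⟨hlt.le, htx⟩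
        rw [Real.norm_eq_abs, abs_le] at b1 b2
        have m1 := le_max_left P1 P2
        have m2 := le_max_right P1 P2
        have := hLL t (F ν2 t) (F ν1 t) (abs_le.2 ⟨by linarith, by linarith⟩)
          (abs_le.2 ⟨by linarith, by linarith⟩)
        rw [← hw, abs_of_pos hw0] at this
        have := (abs_le.1 this).1
        have e1 : (L + 1) * w < c * K * w := mul_lt_mul_of_pos_right hcK hw0
        have e2 : c * (K * w) ≤ a t * (K * w) := mul_le_mul_of_nonneg_right hca (by positivity)
        nlinarith
      · have hph : phat t < F ν t := hb (by rw [Real.dist_eq, abs_of_pos (by linarith)]; linarith)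
        have := hR t (F ν1 t) (F ν2 t) (by linarith) hlt'
        have e1 : 0 < K * w * a t := by positivity
        have e2 : η * (ε * B) ≤ η * w := mul_le_mul_of_nonneg_left hwB hη.le
        have e3 : ε * 1 < ε * (B * η) := mul_lt_mul_of_pos_left hBη hε0
        nlinarith
    linarith

lemma aux_tendsto (f : ℝ → ℝ) (lam0 lam : ℝ) (hlam : lam0 < lam)
    (hmono : ∀ μ ν, lam0 < μ → μ < ν → f μ < f ν)
    (h : ∀ ν M, lam0 < ν → ν < M → ∃ C, ∀ ν1 ν2, ν < ν1 → ν1 < ν2 → ν2 < M →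
      f ν2 - f ν1 ≤ C * (ν2 - ν1)) :
    Tendsto f (𝓝[Ioi lam0] lam) (𝓝 (f lam)) := by
  apply Tendsto.mono_left _ nhdsWithin_le_nhds
  obtain ⟨C, hC⟩ := h ((lam0 + lam) / 2) (lam + 1) (by linarith) (by linarith)
  rw [tendsto_iff_dist_tendsto_zero]
  have hlim : Tendsto (fun μ => C * |μ - lam|) (𝓝 lam) (𝓝 0) := by
    have : Continuous (fun μ => C * |μ - lam|) := by fun_prop
    simpa using this.tendsto lam
  refine squeeze_zero' (Eventually.of_forall fun _ => dist_nonneg) ?_ hlim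
  filter_upwards [Ioo_mem_nhds (by linarith : (lam0 + lam) / 2 < lam)
    (by linarith : lam < lam + 1)] with μ hμ
  rw [Real.dist_eq]
  rcases lt_trichotomy μ lam with h1 | h1 | h1
  · have := hmono μ lam (by linarith [hμ.1]) h1
    rw [abs_of_neg (by linarith), abs_of_neg (by linarith)]
    have := hC μ lam hμ.1 h1 (by linarith)
    linarith
  · subst h1; simp
  · have := hmono lam μ hlam h1
    rw [abs_of_pos (by linarith), abs_of_pos (by linarith)]
    exact hC lam μ (by linarith) h1 hμ.2

lemma aux_zero_left (a : ℝ → ℝ) (ha0 : ∀ x, 0 ≤ a x) (hA : CondA1' a) (x : ℝ) :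
    (∃ y, y ≤ x ∧ a y = 0) ∧ (∃ y, x ≤ y ∧ a y = 0) := by
  constructor
  · by_contra h
    push Not at h
    have hp : ∀ y, y ≤ x → 0 < a y := fun y hy => lt_of_le_of_ne (ha0 y) (Ne.symm (h y hy))
    have hsub : Iic x ⊆ connectedComponentIn {y : ℝ | 0 < a y} x :=
      isPreconnected_Iic.subset_connectedComponentIn (mem_Iic.2 le_rfl) (fun y hy => hp y hy)
    exact not_bddBelow_Iic x ((hA.2 x (hp x le_rfl)).subset hsub).bddBelow
  · by_contra h
    push Not at h
    have hp : ∀ y, x ≤ y → 0 < a y := fun y hy => lt_of_le_of_ne (ha0 y) (Ne.symm (h y hy))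
    have hsub : Ici x ⊆ connectedComponentIn {y : ℝ | 0 < a y} x :=
      isPreconnected_Ici.subset_connectedComponentIn (mem_Ici.2 le_rfl) (fun y hy => hp y hy)
    exact not_bddAbove_Ici x ((hA.2 x (hp x le_rfl)).subset hsub).bddAbove

lemma aux_Hcont (α1 γ : ℝ) (hα1 : 0 < α1) (hγ : 2 < γ) (H : ℝ → ℝ → ℝ)
    (h2 : ∀ x p q : ℝ, |H x p - H x q| ≤ α1 * (|p| + |q| + 1) ^ (γ - 1) * |p - q|)
    (h3 : ∀ x y p : ℝ, |H x p - H y p| ≤ α1 * (|p| ^ γ + 1) * |x - y|) :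
    Continuous (fun z : ℝ × ℝ => H z.1 z.2) := by
  rw [continuous_iff_continuousAt]
  rintro ⟨x, p⟩
  rw [ContinuousAt, tendsto_iff_dist_tendsto_zero]
  have hb : Continuous (fun z : ℝ × ℝ => α1 * (|z.2| + |p| + 1) ^ (γ - 1) * |z.2 - p| +
      α1 * (|p| ^ γ + 1) * |z.1 - x|) := by
    have : Continuous (fun z : ℝ × ℝ => (|z.2| + |p| + 1) ^ (γ - 1)) := by
      apply Continuous.rpow_const (by fun_prop)
      intro z; right; linarith
    fun_prop
  have hlim := hb.tendsto (x, p)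
  simp only [sub_self, abs_zero, mul_zero, add_zero] at hlim
  refine squeeze_zero (fun _ => dist_nonneg) (fun z => ?_) hlim
  rw [Real.dist_eq]
  have e1 := h2 z.1 z.2 p
  have e2 := h3 z.1 x p
  calc |H z.1 z.2 - H x p| ≤ |H z.1 z.2 - H z.1 p| + |H z.1 p - H x p| := abs_sub_le _ _ _
    _ ≤ _ := add_le_add e1 e2

/-- Proposition `appC prop monotonicity derivatives`: with `u^±_μ`
(`μ > λ₀`) the distinguished `C¹` solutions at level `μ` (value `0` at the origin,
derivative a.e. above resp. below `u'_{λ₀}`):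
(i) for `λ > μ > λ₀`, `(u⁺_λ)' > (u⁺_μ)' > (u⁻_μ)' > (u⁻_λ)'` on `ℝ`;
(ii) for `λ > λ₀`, `(u^±_μ)'(x) → (u^±_λ)'(x)` as `μ → λ` (within `(λ₀,∞)`), for every `x`;
(iii) for every `R > ‖u'_{λ₀}‖_{L^∞(A)}` there is `λ_R > λ₀` with
`(u⁻_λ)' < -R < R < (u⁺_λ)'` on `ℝ` for every `λ > λ_R`. -/
theorem statement_16
    (a : ℝ → ℝ) (H : ℝ → ℝ → ℝ) (phat : ℝ → ℝ)
    (κ α0 α1 γ η : ℝ)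
    (harange : ∀ x, a x ∈ Set.Icc (0:ℝ) 1)
    (hκ : 0 < κ) (hA2 : ∀ x y : ℝ, |Real.sqrt (a x) - Real.sqrt (a y)| ≤ κ * |x - y|)
    (hA1' : CondA1' a)
    (hα0 : 0 < α0) (hα1 : 0 < α1) (hγ : 2 < γ) (hη : 0 < η)
    (hH : HamSqc α0 α1 γ η H phat)
    (lam0 : ℝ) (hlam0 : lam0 = CriticalValue a H)
    (ulam0 : ℝ → ℝ)
    (hulip : ∃ L : NNReal, LipschitzWith L ulam0)
    (husol : ViscSolOn a H lam0 Set.univ ulam0)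
    (up um : ℝ → ℝ → ℝ)
    (hup : ∀ μ : ℝ, lam0 < μ →
      ContDiff ℝ 1 (up μ) ∧ ViscSolOn a H μ Set.univ (up μ) ∧ up μ 0 = 0 ∧
      (∀ᵐ x ∂(volume : Measure ℝ), deriv ulam0 x < deriv (up μ) x))
    (hum : ∀ μ : ℝ, lam0 < μ →
      ContDiff ℝ 1 (um μ) ∧ ViscSolOn a H μ Set.univ (um μ) ∧ um μ 0 = 0 ∧
      (∀ᵐ x ∂(volume : Measure ℝ), deriv (um μ) x < deriv ulam0 x)) :
    (∀ lam μ : ℝ, lam0 < μ → μ < lam → ∀ x : ℝ,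
      deriv (um lam) x < deriv (um μ) x ∧
      deriv (um μ) x < deriv (up μ) x ∧
      deriv (up μ) x < deriv (up lam) x) ∧
    (∀ lam : ℝ, lam0 < lam → ∀ x : ℝ,
      Tendsto (fun μ : ℝ => deriv (up μ) x) (𝓝[Set.Ioi lam0] lam)
        (𝓝 (deriv (up lam) x)) ∧
      Tendsto (fun μ : ℝ => deriv (um μ) x) (𝓝[Set.Ioi lam0] lam)
        (𝓝 (deriv (um lam) x))) ∧
    (∀ R : ℝ, (∃ M : ℝ, M < R ∧ ∀ x : ℝ, 0 < a x → |deriv ulam0 x| ≤ M) →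
      ∃ lamR : ℝ, lam0 < lamR ∧ ∀ lam : ℝ, lamR < lam → ∀ x : ℝ,
        deriv (um lam) x < -R ∧ R < deriv (up lam) x) := by
  classical
  obtain ⟨⟨hH1, hHup, hH2, hH3⟩, hmin, -, hsL, hsR⟩ := hH
  have ha0 : ∀ x, 0 ≤ a x := fun x => (harange x).1
  have hHc := aux_Hcont α1 γ hα1 hγ H hH2 hH3
  have hsc : Continuous (fun x => Real.sqrt (a x)) := by
    have : LipschitzWith (Real.toNNReal κ) (fun x => Real.sqrt (a x)) :=
      LipschitzWith.of_dist_le_mul fun x y => by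
        rw [Real.dist_eq, Real.dist_eq, Real.coe_toNNReal _ hκ.le]; exact hA2 x y
    exact this.continuous
  have hac : Continuous a := by
    have : a = fun x => Real.sqrt (a x) ^ 2 := funext fun x => (Real.sq_sqrt (ha0 x)).symm
    rw [this]; exact hsc.pow 2
  have haq : ∀ x0, a x0 = 0 → ∀ x, a x ≤ κ ^ 2 * (x - x0) ^ 2 := by
    intro x0 h x
    have h1 := hA2 x x0
    rw [h, Real.sqrt_zero, sub_zero, abs_of_nonneg (Real.sqrt_nonneg _)] at h1
    calc a x = Real.sqrt (a x) ^ 2 := (Real.sq_sqrt (ha0 x)).symm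
      _ ≤ (κ * |x - x0|) ^ 2 := pow_le_pow_left₀ (Real.sqrt_nonneg _) h1 2
      _ = _ := by rw [mul_pow, sq_abs]
  have hK : (0:ℝ) ≤ κ ^ 2 := sq_nonneg κ
  have hzz := aux_zero_left a ha0 hA1'
  have hR : ∀ x p1 p2 : ℝ, phat x ≤ p1 → p1 < p2 → η * (p2 - p1) ≤ H x p2 - H x p1 := by
    intro x p1 p2 h1 h2
    have := hsR x p1 p2 h1 h2
    rwa [abs_sub_comm, abs_of_pos (by linarith)] at this
  have hL : ∀ x p1 p2 : ℝ, p1 < p2 → p2 ≤ phat x → η * (p2 - p1) ≤ H x p1 - H x p2 := by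
    intro x p1 p2 h1 h2
    have := hsL x p1 p2 h1 h2
    rwa [abs_sub_comm, abs_of_pos (by linarith)] at this
  have hLip : ∀ P, ∃ L, 0 ≤ L ∧ ∀ x p q : ℝ, |p| ≤ P → |q| ≤ P →
      |H x p - H x q| ≤ L * |p - q| := by
    intro P
    refine ⟨α1 * (|P| + |P| + 1) ^ (γ - 1), by positivity, fun x p q hp hq => ?_⟩
    refine (hH2 x p q).trans ?_
    have := le_abs_self P
    have : (|p| + |q| + 1) ^ (γ - 1) ≤ (|P| + |P| + 1) ^ (γ - 1) :=
      Real.rpow_le_rpow (by positivity) (by linarith) (by linarith)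
    gcongr
  obtain ⟨L0, hL0⟩ := hulip
  -- ordering of u0 between um and up
  have hordp : ∀ μ, lam0 < μ → ∀ x y, x ≤ y → ulam0 y - ulam0 x ≤ up μ y - up μ x :=
    fun μ hμ => aux_ae_mono _ _ hL0.locallyLipschitz (hup μ hμ).1.locallyLipschitz (hup μ hμ).2.2.2
  have hordm : ∀ μ, lam0 < μ → ∀ x y, x ≤ y → um μ y - um μ x ≤ ulam0 y - ulam0 x :=
    fun μ hμ => aux_ae_mono _ _ (hum μ hμ).1.locallyLipschitz hL0.locallyLipschitz (hum μ hμ).2.2.2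
  have hdp : ∀ μ, lam0 < μ → ∀ x, HasDerivAt (up μ) (deriv (up μ) x) x := fun μ hμ x =>
    ((hup μ hμ).1.differentiable (by norm_num) x).hasDerivAt
  have hdm : ∀ μ, lam0 < μ → ∀ x, HasDerivAt (um μ) (deriv (um μ) x) x := fun μ hμ x =>
    ((hum μ hμ).1.differentiable (by norm_num) x).hasDerivAt
  have hle : ∀ μ, lam0 < μ → ∀ x, deriv (um μ) x ≤ deriv (up μ) x := by
    intro μ hμ x
    have hm : Monotone (fun x => up μ x - um μ x) := by
      intro s t hst
      have := hordp μ hμ s t hst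
      have := hordm μ hμ s t hst
      simp only; linarith
    have h1 := ((hdp μ hμ x).sub (hdm μ hμ x)).nonneg_of_monotone hm
    linarith
  have hzero : ∀ μ, lam0 < μ → ∀ x, a x = 0 →
      H x (deriv (um μ) x) = μ ∧ H x (deriv (up μ) x) = μ ∧
      deriv (um μ) x < phat x ∧ phat x < deriv (up μ) x := by
    intro μ hμ x hx
    have e1 := aux_sol_zero a H hHc μ (κ ^ 2) hK _ (hum μ hμ).1.continuous x _ (haq x hx)
      (hdm μ hμ x) (hum μ hμ).2.1
    have e2 := aux_sol_zero a H hHc μ (κ ^ 2) hK _ (hup μ hμ).1.continuous x _ (haq x hx)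
      (hdp μ hμ x) (hup μ hμ).2.1
    have hlt : deriv (um μ) x < deriv (up μ) x := by
      rcases eq_or_lt_of_le (hle μ hμ x) with h | h
      · have h1 := hdm μ hμ x
        have h2 := hdp μ hμ x
        rw [← h] at h2
        have h3 := aux_squeeze _ ulam0 _ x _ h1 h2 (hordm μ hμ) (hordp μ hμ)
        have e3 := aux_sol_zero a H hHc lam0 (κ ^ 2) hK _ hL0.continuous x _ (haq x hx) h3 husol
        linarith
      · exact h
    refine ⟨e1, e2, ?_, ?_⟩
    · by_contra h
      push Not at h
      have := hR x _ _ h hlt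
      nlinarith
    · by_contra h
      push Not at h
      have := hL x _ _ hlt h
      nlinarith
  -- the two families
  have hFp : AuxFam a H phat lam0 (fun μ => deriv (up μ)) := fun μ hμ =>
    ⟨(contDiff_one_iff_deriv.1 (hup μ hμ).1).2,
     fun x hx => ⟨(hzero μ hμ x hx).2.1, (hzero μ hμ x hx).2.2.2⟩,
     fun x hx => aux_sol_pos a hac H hHc μ _ (hup μ hμ).1 x hx (hup μ hμ).2.1⟩
  have hFm : AuxFam (fun x => a (-x)) (fun x p => H (-x) (-p)) (fun x => - phat (-x)) lam0
      (fun μ x => - deriv (um μ) (-x)) := by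
    intro μ hμ
    refine ⟨((contDiff_one_iff_deriv.1 (hum μ hμ).1).2.comp continuous_neg).neg, ?_, ?_⟩
    · intro x hx
      have := hzero μ hμ (-x) hx
      refine ⟨?_, ?_⟩
      · simp only [neg_neg]; exact this.1
      · simp only; linarith [this.2.2.1]
    · intro x hx
      have h1 := aux_sol_pos a hac H hHc μ _ (hum μ hμ).1 (-x) hx (hum μ hμ).2.1
      have h2 := (h1.comp x (hasDerivAt_neg x)).neg
      refine h2.congr_deriv ?_
      simp only [neg_neg]; ring
  have hacm : Continuous (fun x => a (-x)) := hac.comp continuous_neg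
  have hHcm : Continuous (fun z : ℝ × ℝ => (fun x p => H (-x) (-p)) z.1 z.2) :=
    hHc.comp (by fun_prop : Continuous (fun z : ℝ × ℝ => (-z.1, -z.2)))
  have ha0m : ∀ x, 0 ≤ (fun x => a (-x)) x := fun x => ha0 _
  have hzp : ∀ x, ∃ y, y ≤ x ∧ a y = 0 := fun x => (hzz x).1
  have hzm : ∀ x, ∃ y, y ≤ x ∧ (fun x => a (-x)) y = 0 := fun x => by
    obtain ⟨y, h1, h2⟩ := (hzz (-x)).2
    exact ⟨-y, by linarith, by simpa using h2⟩
  have hRm : ∀ x p1 p2 : ℝ, (fun x => - phat (-x)) x ≤ p1 → p1 < p2 →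
      η * (p2 - p1) ≤ (fun x p => H (-x) (-p)) x p2 - (fun x p => H (-x) (-p)) x p1 := by
    intro x p1 p2 h1 h2
    simp only at h1 ⊢
    have := hL (-x) (-p2) (-p1) (by linarith) (by linarith)
    linarith
  have hLm : ∀ x p1 p2 : ℝ, p1 < p2 → p2 ≤ (fun x => - phat (-x)) x →
      (fun x p => H (-x) (-p)) x p2 ≤ (fun x p => H (-x) (-p)) x p1 := by
    intro x p1 p2 h1 h2
    simp only at h2 ⊢
    have := hR (-x) (-p2) (-p1) (by linarith) (by linarith)
    nlinarith
  have hLp : ∀ x p1 p2 : ℝ, p1 < p2 → p2 ≤ phat x → H x p2 ≤ H x p1 := by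
    intro x p1 p2 h1 h2
    have := hL x p1 p2 h1 h2
    nlinarith
  have hLipm : ∀ P, ∃ L, 0 ≤ L ∧ ∀ x p q : ℝ, |p| ≤ P → |q| ≤ P →
      |(fun x p => H (-x) (-p)) x p - (fun x p => H (-x) (-p)) x q| ≤ L * |p - q| := by
    intro P
    obtain ⟨L, h1, h2⟩ := hLip P
    refine ⟨L, h1, fun x p q hp hq => ?_⟩
    have := h2 (-x) (-p) (-q) (by rwa [abs_neg]) (by rwa [abs_neg])
    rwa [show -p - -q = -(p - q) by ring, abs_neg] at this
  have hmp := aux_mono a H phat lam0 η _ hFp ha0 hzp hη hR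
  have hmm := aux_mono _ _ _ lam0 η _ hFm ha0m hzm hη hRm
  have hmm' : ∀ lam μ : ℝ, lam0 < μ → μ < lam → ∀ x, deriv (um lam) x < deriv (um μ) x := by
    intro lam μ h1 h2 x
    have := hmm lam μ h1 h2 (-x)
    simp only [neg_neg] at this
    linarith
  refine ⟨?_, ?_, ?_⟩
  · intro lam μ h1 h2 x
    refine ⟨hmm' lam μ h1 h2 x, ?_, hmp lam μ h1 h2 x⟩
    have hν : lam0 < (lam0 + μ) / 2 := by linarith
    have hν' : (lam0 + μ) / 2 < μ := by linarith
    have e1 := hmm' μ _ hν hν' x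
    have e2 := hmp μ _ hν hν' x
    have e3 := hle _ hν x
    linarith
  · intro lam hlam x
    refine ⟨?_, ?_⟩
    · exact aux_tendsto (fun μ => deriv (up μ) x) lam0 lam hlam
        (fun μ ν h1 h2 => hmp ν μ h1 h2 x)
        (fun ν M h1 h2 => aux_lip a hac H hHc phat lam0 η _ hFp ha0 hzp hη hR hLp hLip ν M h1 h2 x)
    · have := aux_tendsto (fun μ => - deriv (um μ) (-(-x))) lam0 lam hlam
        (fun μ ν h1 h2 => hmm ν μ h1 h2 (-x))
        (fun ν M h1 h2 => aux_lip _ hacm _ hHcm _ lam0 η _ hFm ha0m hzm hη hRm hLm hLipm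
          ν M h1 h2 (-x))
      have := this.neg
      simpa only [neg_neg] using this
  · intro R _
    refine ⟨max (lam0 + 1) (α1 * (|R| ^ γ + 1)), ?_, ?_⟩
    · exact lt_of_lt_of_le (by linarith) (le_max_left _ _)
    · intro lam hlam x
      have h1 : lam0 < lam := by linarith [le_max_left (lam0 + 1) (α1 * (|R| ^ γ + 1))]
      have h2 : α1 * (|R| ^ γ + 1) < lam := lt_of_le_of_lt (le_max_right _ _) hlam
      refine ⟨?_, aux_large a H phat lam0 η _ hFp ha0 hzp hη hR R lam h1
        (fun x => (hHup x R).trans_lt h2) x⟩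
      have := aux_large _ _ _ lam0 η _ hFm ha0m hzm hη hRm R lam h1
        (fun x => by
          have := hHup (-x) (-R)
          rw [abs_neg] at this
          exact this.trans_lt h2) (-x)
      simp only [neg_neg] at this
      linarith
end
end
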